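/- The Riemann hypothesis fails if and only if there exist positive integers k, l, m, n satisfying all of: (i) n ≥ 600; (ii) for every y < n, (y + 1) divides m; (iii) m > 0 and for every y < m, either y = 0 or there exists x < n with (x + 1) not dividing y (so that m = lcm(1, …, n)); (iv) explog(m − 1, l); (v) explog(n − 1, k); (vi) (l − n)² > 4·n·k⁴. -/

import Mathlib

/-- The Riemann hypothesis: every nontrivial zero of ζ (a zero with real part strictly
between 0 and 1) has real part 1/2. -/
def RH : Prop := ∀ s : ℂ, riemannZeta s = 0 → 0 < s.re → s.re < 1 → s.re = 1 / 2

/-- explog(a, b) holds iff there is a positive integer x with x > b + 1 and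
(1 + 1/x)^(x·b) ≤ a + 1 < 4·(1 + 1/x)^(x·b), the powers taken in ℝ. -/
def explog (a b : ℕ) : Prop :=
  ∃ x : ℕ, b + 1 < x ∧ (1 + 1 / (x : ℝ)) ^ (x * b) ≤ (a : ℝ) + 1 ∧
    (a : ℝ) + 1 < 4 * (1 + 1 / (x : ℝ)) ^ (x * b)


open Complex Filter Topology in
/-- summability of `log (1 + 1/(n+1)) - 1/(n+1)` and bounds -/
lemma eps_bound (n : ℕ) :
    -(1 / ((n : ℝ) + 1) - 1 / ((n : ℝ) + 2)) ≤ Real.log (1 + 1 / ((n : ℝ) + 1)) - 1 / ((n : ℝ) + 1) ∧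
      Real.log (1 + 1 / ((n : ℝ) + 1)) - 1 / ((n : ℝ) + 1) ≤ 0 := by
  have hn : (0 : ℝ) < (n : ℝ) + 1 := by positivity
  have h1 : (0 : ℝ) < 1 + 1 / ((n : ℝ) + 1) := by positivity
  constructor
  · have := Real.one_sub_inv_le_log_of_pos h1
    have e : 1 - (1 + 1 / ((n : ℝ) + 1))⁻¹ = 1 / ((n : ℝ) + 2) := by
      field_simp; ring
    rw [e] at this
    linarith
  · have := Real.log_le_sub_one_of_pos h1
    linarith

lemma tele_hasSum : HasSum (fun n : ℕ => 1 / ((n : ℝ) + 1) - 1 / ((n : ℝ) + 2)) 1 := by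
  rw [hasSum_iff_tendsto_nat_of_nonneg]
  · have : ∀ N : ℕ, ∑ i ∈ Finset.range N, (1 / ((i : ℝ) + 1) - 1 / ((i : ℝ) + 2)) =
        1 - 1 / ((N : ℝ) + 1) := by
      intro N
      induction N with
      | zero => simp
      | succ k ih => rw [Finset.sum_range_succ, ih]; push_cast; ring
    simp_rw [this]
    have := tendsto_one_div_add_atTop_nhds_zero_nat (𝕜 := ℝ)
    simpa using this.const_sub 1
  · intro n
    have : (0 : ℝ) < (n : ℝ) + 1 := by positivity
    rw [sub_nonneg]
    gcongr
    norm_num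

noncomputable def epsSeq (n : ℕ) : ℝ := Real.log (1 + 1 / ((n : ℝ) + 1)) - 1 / ((n : ℝ) + 1)

lemma epsSeq_abs_le (n : ℕ) : |epsSeq n| ≤ 1 / ((n : ℝ) + 1) - 1 / ((n : ℝ) + 2) := by
  have := eps_bound n
  rw [epsSeq, abs_le]
  constructor
  · linarith
  · linarith

lemma epsSeq_summable : Summable epsSeq :=
  Summable.of_norm_bounded tele_hasSum.summable (fun n => by simpa using epsSeq_abs_le n)

lemma epsSeq_tsum_bounds : -1 ≤ ∑' n, epsSeq n ∧ ∑' n, epsSeq n ≤ 0 := by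
  constructor
  · have := Summable.tsum_le_tsum (fun n => (eps_bound n).1) tele_hasSum.summable.neg epsSeq_summable
    rw [tsum_neg, tele_hasSum.tsum_eq] at this
    exact this
  · exact tsum_nonpos (fun n => (eps_bound n).2)

lemma summable_inv_sq : Summable (fun n : ℕ => 1 / ((n : ℝ) + 1) ^ 2) := by
  have := (summable_nat_add_iff (f := fun n : ℕ => 1 / ((n : ℝ)) ^ 2) 1).2
    (Real.summable_one_div_nat_pow.2 one_lt_two)
  simpa using this

open Complex Filter Topology

lemma re_pos_add_ne {s : ℂ} (hs : 0 < s.re) (n : ℕ) : s + n ≠ 0 := by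
  intro h
  have := congrArg Complex.re h
  simp at this
  have : (0 : ℝ) ≤ n := Nat.cast_nonneg n
  linarith

/-- the term of the logarithm of the Weierstrass-type product. -/
noncomputable def gTerm (n : ℕ) (s : ℂ) : ℂ :=
  s * (Real.log (1 + 1 / ((n : ℝ) + 1)) : ℂ) - Complex.log (1 + s / ((n : ℂ) + 1))

noncomputable def gTerm' (n : ℕ) (s : ℂ) : ℂ :=
  (Real.log (1 + 1 / ((n : ℝ) + 1)) : ℂ) - 1 / ((n : ℂ) + 1 + s)

lemma gTerm_hasDerivAt (n : ℕ) {s : ℂ} (hs : 0 < s.re) : HasDerivAt (gTerm n) (gTerm' n s) s := by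
  unfold gTerm gTerm'
  have h1 : ((n : ℂ) + 1) ≠ 0 := by exact_mod_cast Nat.succ_ne_zero n
  have h2 : (n : ℂ) + 1 + s ≠ 0 := by
    have := re_pos_add_ne hs (n + 1)
    push_cast at this
    intro h; apply this; rw [← h]; ring
  have hsl : 1 + s / ((n : ℂ) + 1) ∈ slitPlane := by
    left
    have : (s / ((n : ℂ) + 1)).re = s.re / ((n : ℝ) + 1) := by
      have : ((n : ℂ) + 1) = (((n : ℝ) + 1 : ℝ) : ℂ) := by push_cast; rfl
      rw [this, Complex.div_ofReal_re]
    simp only [add_re, one_re, this]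
    positivity
  have hd : HasDerivAt (fun s : ℂ => 1 + s / ((n : ℂ) + 1)) (1 / ((n : ℂ) + 1)) s :=
    ((hasDerivAt_id s).div_const _).const_add 1
  have := ((hasDerivAt_id s).mul_const (Real.log (1 + 1 / ((n : ℝ) + 1)) : ℂ)).sub (hd.clog hsl)
  convert! this using 1
  rw [one_mul]
  congr 1
  have : 1 + s / ((n : ℂ) + 1) ≠ 0 := slitPlane_ne_zero hsl
  field_simp

lemma gTerm'_eq (n : ℕ) {s : ℂ} (hs : 0 < s.re) :
    gTerm' n s = (epsSeq n : ℂ) + s / (((n : ℂ) + 1) * ((n : ℂ) + 1 + s)) := by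
  unfold gTerm' epsSeq
  have h1 : ((n : ℂ) + 1) ≠ 0 := by exact_mod_cast Nat.succ_ne_zero n
  have h2 : (n : ℂ) + 1 + s ≠ 0 := by
    have := re_pos_add_ne hs (n + 1)
    push_cast at this
    intro h; apply this; rw [← h]; ring
  push_cast
  field_simp
  ring

lemma norm_add_ge {s : ℂ} (hs : 0 ≤ s.re) (r : ℝ) : r ≤ ‖(r : ℂ) + s‖ := by
  have := Complex.re_le_norm ((r : ℂ) + s)
  simp at this
  linarith

lemma gTerm'_bound (n : ℕ) {s : ℂ} (hs : 0 < s.re) {R : ℝ} (hR : ‖s‖ ≤ R) :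
    ‖gTerm' n s‖ ≤ (1 / ((n : ℝ) + 1) - 1 / ((n : ℝ) + 2)) + R * (1 / ((n : ℝ) + 1) ^ 2) := by
  rw [gTerm'_eq n hs]
  refine (norm_add_le _ _).trans (add_le_add ?_ ?_)
  · rw [Complex.norm_real]; exact epsSeq_abs_le n
  · have h1 : ‖((n : ℂ) + 1)‖ = (n : ℝ) + 1 := by
      have : ((n : ℂ) + 1) = ((n + 1 : ℕ) : ℂ) := by push_cast; rfl
      rw [this, Complex.norm_natCast]; push_cast; rfl
    have h2 : (n : ℝ) + 1 ≤ ‖(n : ℂ) + 1 + s‖ := by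
      have := norm_add_ge hs.le ((n : ℝ) + 1)
      push_cast at this
      exact this
    rw [norm_div, norm_mul, h1, mul_one_div, sq]
    have : (0 : ℝ) < (n : ℝ) + 1 := by positivity
    have : 0 ≤ R := (norm_nonneg s).trans hR
    gcongr

lemma gTerm_one (n : ℕ) : gTerm n 1 = 0 := by
  unfold gTerm
  have : (1 : ℂ) + 1 / ((n : ℂ) + 1) = ((1 + 1 / ((n : ℝ) + 1) : ℝ) : ℂ) := by push_cast; rfl
  rw [this, ← Complex.ofReal_log (by positivity)]
  simp

lemma gSet_props (R : ℝ) : IsOpen ({s : ℂ | 0 < s.re} ∩ Metric.ball 0 R) ∧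
    IsPreconnected ({s : ℂ | 0 < s.re} ∩ Metric.ball 0 R) := by
  constructor
  · exact (isOpen_lt continuous_const Complex.continuous_re).inter Metric.isOpen_ball
  · exact ((convex_halfSpace_re_gt 0).inter (convex_ball 0 R)).isPreconnected

lemma gSum_hasDerivAt {s : ℂ} (hs : 0 < s.re) :
    HasDerivAt (fun z => ∑' n, gTerm n z) (∑' n, gTerm' n s) s := by
  set R := ‖s‖ + 2 with hR
  obtain ⟨ho, hc⟩ := gSet_props R
  refine hasDerivAt_tsum_of_isPreconnected
    (u := fun n : ℕ => (1 / ((n : ℝ) + 1) - 1 / ((n : ℝ) + 2)) + R * (1 / ((n : ℝ) + 1) ^ 2))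
    (tele_hasSum.summable.add (summable_inv_sq.mul_left R)) ho hc
    (fun n y hy => gTerm_hasDerivAt n hy.1) (fun n y hy => gTerm'_bound n hy.1 ?_)
    (y₀ := 1) ⟨by simp, ?_⟩ ?_ ⟨hs, ?_⟩
  · have := hy.2; simp at this; exact this.le
  · simp; linarith [norm_nonneg s]
  · simp_rw [gTerm_one]; exact summable_zero
  · simp; linarith [norm_nonneg s]

lemma gSum_summable {s : ℂ} (hs : 0 < s.re) : Summable (fun n => gTerm n s) := by
  set R := ‖s‖ + 2 with hR
  obtain ⟨ho, hc⟩ := gSet_props R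
  refine summable_of_summable_hasDerivAt_of_isPreconnected
    (u := fun n : ℕ => (1 / ((n : ℝ) + 1) - 1 / ((n : ℝ) + 2)) + R * (1 / ((n : ℝ) + 1) ^ 2))
    (tele_hasSum.summable.add (summable_inv_sq.mul_left R)) ho hc
    (fun n y hy => gTerm_hasDerivAt n hy.1) (fun n y hy => gTerm'_bound n hy.1 ?_)
    (y₀ := 1) ⟨by simp, ?_⟩ ?_ ⟨hs, ?_⟩
  · have := hy.2; simp at this; exact this.le
  · simp; linarith [norm_nonneg s]
  · simp_rw [gTerm_one]; exact summable_zero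
  · simp; linarith [norm_nonneg s]

lemma exp_partial {s : ℂ} (hs : 0 < s.re) (N : ℕ) :
    Complex.exp (∑ n ∈ Finset.range N, gTerm n s) * (∏ j ∈ Finset.range (N + 1), (s + j)) =
      s * ((N + 1 : ℕ) : ℂ) ^ s * (N.factorial : ℂ) := by
  induction N with
  | zero => simp
  | succ k ih =>
    rw [Finset.sum_range_succ, Complex.exp_add, Finset.prod_range_succ]
    have h1 : ((k : ℂ) + 1) ≠ 0 := by exact_mod_cast Nat.succ_ne_zero k
    have hne : 1 + s / ((k : ℂ) + 1) ≠ 0 := by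
      intro h
      apply re_pos_add_ne hs (k + 1)
      have h' : (1 + s / ((k : ℂ) + 1)) * ((k : ℂ) + 1) = 0 := by rw [h, zero_mul]
      rw [add_mul, div_mul_cancel₀ _ h1] at h'
      push_cast
      rw [← h']; ring
    have e : Complex.exp (gTerm k s) * (s + ((k + 1 : ℕ) : ℂ)) =
        ((k + 1 : ℕ) : ℂ) * (((k + 2 : ℕ) : ℂ) ^ s / ((k + 1 : ℕ) : ℂ) ^ s) := by
      unfold gTerm
      rw [Complex.exp_sub, Complex.exp_log hne]
      have h3 : ((k + 1 : ℕ) : ℂ) ≠ 0 := by exact_mod_cast Nat.succ_ne_zero k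
      have h4 : ((k + 2 : ℕ) : ℂ) ≠ 0 := by exact_mod_cast Nat.succ_ne_zero (k+1)
      rw [Complex.cpow_def_of_ne_zero h3, Complex.cpow_def_of_ne_zero h4, ← Complex.exp_sub]
      have : s * (Real.log (1 + 1 / ((k : ℝ) + 1)) : ℂ) =
          Complex.log ((k + 2 : ℕ) : ℂ) * s - Complex.log ((k + 1 : ℕ) : ℂ) * s := by
        have e1 : (1 + 1 / ((k : ℝ) + 1)) = ((k + 2 : ℕ) : ℝ) / ((k + 1 : ℕ) : ℝ) := by
          push_cast; field_simp; ring
        rw [e1, Real.log_div (by positivity) (by positivity)]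
        rw [← Complex.ofReal_natCast, ← Complex.ofReal_natCast, ← Complex.ofReal_log (by positivity),
          ← Complex.ofReal_log (by positivity)]
        push_cast; ring
      rw [this]
      have h5 : (s + ((k + 1 : ℕ) : ℂ)) = (1 + s / ((k : ℂ) + 1)) * ((k : ℂ) + 1) := by
        push_cast; field_simp; ring
      rw [h5]
      clear h5 this
      generalize 1 + s / ((k : ℂ) + 1) = D at hne ⊢
      push_cast
      field_simp
    have h3 : ((k + 1 : ℕ) : ℂ) ^ s ≠ 0 := by
      rw [Complex.cpow_def_of_ne_zero (by exact_mod_cast Nat.succ_ne_zero k)]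
      exact Complex.exp_ne_zero _
    calc _ = (Complex.exp (∑ n ∈ Finset.range k, gTerm n s) * (∏ j ∈ Finset.range (k + 1), (s + j))) *
          (Complex.exp (gTerm k s) * (s + ((k + 1 : ℕ) : ℂ))) := by ring
      _ = _ := by
        rw [ih, e, Nat.factorial_succ]
        push_cast at h3 ⊢
        field_simp
        norm_num [add_assoc]

lemma exp_gSum {s : ℂ} (hs : 0 < s.re) : Complex.exp (∑' n, gTerm n s) = s * Complex.Gamma s := by
  have h1 := ((gSum_summable hs).hasSum.tendsto_sum_nat).cexp
  have h2 : Tendsto (fun N : ℕ => s * (Complex.GammaSeq s N * (((N + 1 : ℕ) : ℂ) / (N : ℂ)) ^ s))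
      atTop (𝓝 (s * (Complex.Gamma s * 1))) := by
    refine (((Complex.GammaSeq_tendsto_Gamma s).mul ?_)).const_mul s
    have h3 : Tendsto (fun N : ℕ => ((N + 1 : ℕ) : ℂ) / (N : ℂ)) atTop (𝓝 1) := by
      have h := (tendsto_one_div_atTop_nhds_zero_nat (𝕜 := ℂ)).const_add 1
      rw [add_zero] at h
      refine h.congr' ?_
      filter_upwards [eventually_ne_atTop 0] with N hN
      have : (N : ℂ) ≠ 0 := by exact_mod_cast hN
      push_cast; field_simp
    have := (continuousAt_cpow_const (a := 1) (b := s) (by simp)).tendsto.comp h3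
    simpa [Function.comp_def] using this
  rw [mul_one] at h2
  refine tendsto_nhds_unique h1 (h2.congr' ?_)
  filter_upwards [eventually_ne_atTop 0] with N hN
  have hP := exp_partial hs N
  have hne : (∏ j ∈ Finset.range (N + 1), (s + j)) ≠ 0 :=
    Finset.prod_ne_zero_iff.2 fun j _ => re_pos_add_ne hs j
  have hN' : (N : ℂ) ≠ 0 := by exact_mod_cast hN
  have h3 : (N : ℂ) ^ s ≠ 0 := by
    rw [Complex.cpow_def_of_ne_zero hN']
    exact Complex.exp_ne_zero _
  have : (((N + 1 : ℕ) : ℂ) / (N : ℂ)) ^ s = ((N + 1 : ℕ) : ℂ) ^ s / (N : ℂ) ^ s := by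
    have := Complex.div_cpow_ofReal_nonneg (a := ((N + 1 : ℕ) : ℝ)) (b := (N : ℝ)) (by positivity)
      (by positivity) s
    simpa using this
  rw [this, Complex.GammaSeq]
  field_simp
  linear_combination -hP

/-- logarithmic derivative of Gamma on the right half plane -/
lemma digamma_series {s : ℂ} (hs : 0 < s.re) :
    logDeriv Complex.Gamma s = -1 / s + ∑' n, gTerm' n s := by
  have hs0 : s ≠ 0 := by rintro rfl; simp at hs
  have h1 := (gSum_hasDerivAt hs).cexp
  have h2 : HasDerivAt (fun z => z * Complex.Gamma z)
      (Complex.exp (∑' n, gTerm n s) * ∑' n, gTerm' n s) s := by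
    refine h1.congr_of_eventuallyEq ?_
    filter_upwards [(isOpen_lt continuous_const Complex.continuous_re).mem_nhds hs] with z hz
    exact (exp_gSum hz).symm
  have hG : DifferentiableAt ℂ Complex.Gamma s := Complex.differentiableAt_Gamma s (by
    intro m h
    exact re_pos_add_ne hs m (by rw [h]; simp))
  have h3 := (hasDerivAt_id s).mul hG.hasDerivAt
  have h4 := h2.unique h3
  have hGne : Complex.Gamma s ≠ 0 := Complex.Gamma_ne_zero_of_re_pos hs
  rw [exp_gSum hs] at h4
  rw [logDeriv_apply]
  simp only [id] at h4
  field_simp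
  linear_combination -h4

/-- the constant in the partial fraction expansion -/
noncomputable def ccst : ℝ := (∑' n, epsSeq n) / 2 - Real.log Real.pi / 2

lemma ccst_bounds : -2 ≤ ccst ∧ ccst ≤ -1/2 := by
  have h := epsSeq_tsum_bounds
  have h1 : 1 ≤ Real.log Real.pi := by
    rw [Real.le_log_iff_exp_le Real.pi_pos]
    linarith [Real.exp_one_lt_d9, Real.pi_gt_three]
  have h2 : Real.log Real.pi ≤ 3 := by
    have := Real.log_le_sub_one_of_pos Real.pi_pos
    linarith [Real.pi_le_four]
  unfold ccst
  constructor <;> linarith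

noncomputable def STerm (n : ℕ) (s : ℂ) : ℂ := s / (2 * ((n : ℂ) + 1) * (s + 2 * ((n : ℂ) + 1)))

noncomputable def Sser (s : ℂ) : ℂ := ∑' n, STerm n s

lemma STerm_eq (n : ℕ) {s : ℂ} (hs : 0 < s.re) :
    STerm n s = (gTerm' n (s / 2) - epsSeq n) / 2 := by
  have hs2 : 0 < (s / 2).re := by simp; exact hs
  rw [gTerm'_eq n hs2, STerm]
  have h1 : ((n : ℂ) + 1) ≠ 0 := by exact_mod_cast Nat.succ_ne_zero n
  have h2 : s + 2 * ((n : ℂ) + 1) ≠ 0 := by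
    have := re_pos_add_ne hs (2 * (n + 1))
    push_cast at this
    exact this
  have h3 : (n : ℂ) + 1 + s / 2 ≠ 0 := by
    intro h; apply h2; linear_combination 2 * h
  have h4 : (n : ℂ) + 1 + s / 2 = (s + 2 * ((n : ℂ) + 1)) / 2 := by ring
  rw [h4, add_sub_cancel_left]
  generalize s + 2 * ((n : ℂ) + 1) = D at h2 ⊢
  field_simp

lemma gTerm'_summable {s : ℂ} (hs : 0 < s.re) : Summable (fun n => gTerm' n s) :=
  Summable.of_norm_bounded
    (tele_hasSum.summable.add (summable_inv_sq.mul_left ‖s‖)) (fun n => gTerm'_bound n hs le_rfl)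

lemma epsSeq_summableC : Summable (fun n => (epsSeq n : ℂ)) :=
  Complex.ofRealCLM.summable epsSeq_summable

lemma STerm_summable {s : ℂ} (hs : 0 < s.re) : Summable (fun n => STerm n s) := by
  have hs2 : 0 < (s / 2).re := by simp; exact hs
  simp_rw [STerm_eq _ hs]
  exact ((gTerm'_summable hs2).sub epsSeq_summableC).div_const 2

lemma Sser_eq {s : ℂ} (hs : 0 < s.re) :
    logDeriv Complex.Gamma (s / 2) / 2 + 1 / s - (Real.log Real.pi : ℂ) / 2 = ccst + Sser s := by
  have hs2 : 0 < (s / 2).re := by simp; exact hs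
  have hs0 : s ≠ 0 := by rintro rfl; simp at hs
  rw [digamma_series hs2, Sser]
  simp_rw [STerm_eq _ hs]
  rw [tsum_div_const, (gTerm'_summable hs2).tsum_sub epsSeq_summableC, ccst]
  push_cast
  field_simp
  ring

lemma Sser_differentiableAt {s : ℂ} (hs : 0 < s.re) : DifferentiableAt ℂ Sser s := by
  have hs2 : 0 < (s / 2).re := by simp; exact hs
  have hs0 : s ≠ 0 := by rintro rfl; simp at hs
  have hd : DifferentiableAt ℂ (fun s : ℂ => logDeriv Complex.Gamma (s / 2) / 2 + 1 / s -
      (Real.log Real.pi : ℂ) / 2 - ccst) s := by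
    have hA : DifferentiableOn ℂ Complex.Gamma {z | 0 < z.re} := fun z hz =>
      (Complex.differentiableAt_Gamma z (by
        intro m h
        exact re_pos_add_ne hz m (by rw [h]; simp))).differentiableWithinAt
    have hO : IsOpen {z : ℂ | 0 < z.re} := isOpen_lt continuous_const Complex.continuous_re
    have h1 : DifferentiableAt ℂ (logDeriv Complex.Gamma) (s / 2) :=
      ((hA.deriv hO).differentiableAt (hO.mem_nhds hs2)).div
        (hA.differentiableAt (hO.mem_nhds hs2)) (Complex.Gamma_ne_zero_of_re_pos hs2)
    have h2 : DifferentiableAt ℂ (fun s : ℂ => logDeriv Complex.Gamma (s / 2)) s :=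
      DifferentiableAt.comp s h1 (by fun_prop)
    have h3 : DifferentiableAt ℂ (fun s : ℂ => 1 / s) s := by fun_prop (disch := assumption)
    exact (((h2.div_const 2).add h3).sub_const _).sub_const _
  refine hd.congr_of_eventuallyEq ?_
  filter_upwards [(isOpen_lt continuous_const Complex.continuous_re).mem_nhds hs] with z hz
  rw [Sser_eq hz]; ring

/-- square-root growth of the trivial-zero sum. -/
lemma STerm_norm_le (n : ℕ) {s : ℂ} (hs : 0 < s.re) :
    ‖STerm n s‖ ≤ Real.sqrt ‖s‖ * (1 / ((n : ℝ) + 1) ^ (3 / 2 : ℝ)) := by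
  have hs0 : s ≠ 0 := by rintro rfl; simp at hs
  have hpos : 0 < ‖s‖ := norm_pos_iff.2 hs0
  set m : ℝ := (n : ℝ) + 1 with hm
  have hm0 : 0 < m := by positivity
  have hmc : ((n : ℂ) + 1) = (m : ℂ) := by rw [hm]; push_cast; rfl
  have h1 : Real.sqrt ‖s‖ * Real.sqrt m ≤ ‖s + 2 * (m : ℂ)‖ := by
    rw [← Real.sqrt_mul hpos.le]
    apply Real.sqrt_le_iff.2 ⟨norm_nonneg _, ?_⟩
    have e1 : ‖s + 2 * (m : ℂ)‖ ^ 2 = ‖s‖ ^ 2 + 4 * m * s.re + 4 * m ^ 2 := by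
      rw [← Complex.normSq_eq_norm_sq, ← Complex.normSq_eq_norm_sq, Complex.normSq_apply,
        Complex.normSq_apply]
      simp; ring
    rw [e1]
    nlinarith [sq_nonneg (‖s‖ - m), mul_pos hm0 hs]
  have h2 : m ^ (3 / 2 : ℝ) = m * Real.sqrt m := by
    rw [Real.sqrt_eq_rpow, ← Real.rpow_one_add' hm0.le (by norm_num)]; norm_num
  rw [STerm, hmc, norm_div, norm_mul, norm_mul, Complex.norm_real, Real.norm_of_nonneg hm0.le, h2]
  have hsq : 0 < Real.sqrt m := Real.sqrt_pos.2 hm0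
  have hss : 0 < Real.sqrt ‖s‖ := Real.sqrt_pos.2 hpos
  have h3 : ‖s‖ = Real.sqrt ‖s‖ * Real.sqrt ‖s‖ := (Real.mul_self_sqrt hpos.le).symm
  have hn2 : ‖(2 : ℂ)‖ = 2 := by simp
  have hn3 : 0 < ‖s + 2 * (m : ℂ)‖ := lt_of_lt_of_le (by positivity) h1
  rw [hn2, mul_one_div, div_le_div_iff₀ (by positivity) (by positivity)]
  calc ‖s‖ * (m * Real.sqrt m) = (Real.sqrt ‖s‖ * m) * (Real.sqrt ‖s‖ * Real.sqrt m) := by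
        nth_rewrite 1 [h3]; ring
    _ ≤ (Real.sqrt ‖s‖ * m) * ‖s + 2 * (m : ℂ)‖ := by gcongr
    _ ≤ (Real.sqrt ‖s‖ * (2 * m)) * ‖s + 2 * (m : ℂ)‖ := by gcongr; linarith
    _ = _ := by ring

lemma Sser_growth : ∃ C : ℝ, 0 ≤ C ∧ ∀ s : ℂ, 0 < s.re → ‖Sser s‖ ≤ C * Real.sqrt ‖s‖ := by
  have hsum : Summable (fun n : ℕ => 1 / ((n : ℝ) + 1) ^ (3 / 2 : ℝ)) := by
    have := (summable_nat_add_iff (f := fun n : ℕ => 1 / ((n : ℝ)) ^ (3 / 2 : ℝ)) 1).2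
      (Real.summable_one_div_nat_rpow.2 (by norm_num))
    simpa using this
  refine ⟨∑' n : ℕ, 1 / ((n : ℝ) + 1) ^ (3 / 2 : ℝ), tsum_nonneg (fun n => by positivity), ?_⟩
  intro s hs
  rw [mul_comm, ← tsum_mul_left]
  exact tsum_of_norm_bounded (hsum.mul_left _).hasSum (fun n => STerm_norm_le n hs)

/-- values at even integers: `S(2m) = H_m / 2`, here only an upper bound -/
lemma Sser_even_le (m : ℕ) (hm : 1 ≤ m) :
    (Sser (((2 * m : ℕ) : ℝ) : ℂ)).re ≤ (1 + Real.log m) / 2 := by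
  have hpos : 0 < ((((2 * m : ℕ) : ℝ) : ℂ)).re := by
    rw [Complex.ofReal_re]
    have : 0 < 2 * m := by omega
    exact_mod_cast this
  have hval : ∀ n : ℕ, STerm n (((2 * m : ℕ) : ℝ) : ℂ) =
      ((1 / (2 * ((n : ℝ) + 1)) - 1 / (2 * ((n : ℝ) + m + 1)) : ℝ) : ℂ) := by
    intro n
    rw [STerm]
    have : ((2 * m : ℕ) : ℝ) / (2 * ((n : ℝ) + 1) * (((2 * m : ℕ) : ℝ) + 2 * ((n : ℝ) + 1))) =
        (1 / (2 * ((n : ℝ) + 1)) - 1 / (2 * ((n : ℝ) + m + 1))) := by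
      push_cast; field_simp; ring
    rw [← this]; push_cast; rfl
  have hpart : ∀ N : ℕ, ∑ n ∈ Finset.range N, (1 / (2 * ((n : ℝ) + 1)) - 1 / (2 * ((n : ℝ) + m + 1)))
      ≤ (1 + Real.log m) / 2 := by
    intro N
    have hh : ∀ k : ℕ, ∑ n ∈ Finset.range k, 1 / (2 * ((n : ℝ) + 1)) = (harmonic k : ℝ) / 2 := by
      intro k
      rw [harmonic]
      push_cast
      rw [Finset.sum_div]
      refine Finset.sum_congr rfl fun i _ => ?_
      field_simp
    have h2 : ∑ n ∈ Finset.range N, 1 / (2 * ((n : ℝ) + m + 1)) =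
        (harmonic (m + N) : ℝ) / 2 - (harmonic m : ℝ) / 2 := by
      rw [← hh, ← hh, Finset.sum_range_add, add_sub_cancel_left]
      refine Finset.sum_congr rfl fun i _ => ?_
      push_cast; ring_nf
    rw [Finset.sum_sub_distrib, hh, h2]
    have h3 : (harmonic N : ℝ) ≤ harmonic (m + N) := by
      have := hh N
      have h4 := hh (m + N)
      have : ∑ n ∈ Finset.range N, 1 / (2 * ((n : ℝ) + 1)) ≤
          ∑ n ∈ Finset.range (m + N), 1 / (2 * ((n : ℝ) + 1)) :=
        Finset.sum_le_sum_of_subset_of_nonneg (Finset.range_mono (by omega))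
          (fun i _ _ => by positivity)
      linarith
    have h5 := harmonic_le_one_add_log m
    linarith
  have h := ((STerm_summable hpos).hasSum.tendsto_sum_nat)
  have h' := (Complex.continuous_re.tendsto _).comp h
  refine le_of_tendsto' h' (fun N => ?_)
  simp only [Function.comp]
  rw [Finset.sum_congr rfl (fun n _ => hval n), ← Complex.ofReal_sum, Complex.ofReal_re]
  exact hpart N


open Complex Filter Topology

/-- The entire completed zeta function `s (s-1) Λ(s)`. -/
noncomputable def xiF (s : ℂ) : ℂ := s * (s - 1) * completedRiemannZeta₀ s + 1

lemma xiF_differentiable : Differentiable ℂ xiF := by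
  unfold xiF
  have := differentiable_completedZeta₀
  fun_prop

lemma xiF_one_sub (s : ℂ) : xiF (1 - s) = xiF s := by
  unfold xiF
  rw [completedRiemannZeta₀_one_sub]; ring

lemma xiF_eq {s : ℂ} (h0 : s ≠ 0) (h1 : s ≠ 1) : xiF s = s * (s - 1) * completedRiemannZeta s := by
  unfold xiF
  rw [completedRiemannZeta_eq]
  have : 1 - s ≠ 0 := sub_ne_zero.2 (Ne.symm h1)
  field_simp
  ring

lemma xiF_eq_zeta {s : ℂ} (hs : 0 < s.re) (h1 : s ≠ 1) :
    xiF s = s * (s - 1) * (Gammaℝ s * riemannZeta s) := by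
  have h0 : s ≠ 0 := by rintro rfl; simp at hs
  rw [xiF_eq h0 h1, riemannZeta_def_of_ne_zero h0, mul_div_cancel₀ _ (Gammaℝ_ne_zero_of_re_pos hs)]

lemma xiF_one : xiF 1 = 1 := by simp [xiF]
lemma xiF_zero : xiF 0 = 1 := by simp [xiF]

lemma xiF_ne_zero_of_RH (h : RH) {s : ℂ} (hs : 1 / 2 < s.re) : xiF s ≠ 0 := by
  by_cases h1 : s = 1
  · rw [h1, xiF_one]; exact one_ne_zero
  have h0 : s ≠ 0 := by rintro rfl; simp at hs; linarith
  have hpos : 0 < s.re := by linarith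
  rw [xiF_eq_zeta hpos h1]
  have hz : riemannZeta s ≠ 0 := by
    intro hz
    by_cases h2 : 1 ≤ s.re
    · exact riemannZeta_ne_zero_of_one_le_re h2 hz
    · have := h s hz hpos (by linarith)
      linarith
  exact mul_ne_zero (mul_ne_zero h0 (sub_ne_zero.2 h1)) (mul_ne_zero (Gammaℝ_ne_zero_of_re_pos hpos) hz)

lemma zeta_conj_of_one_lt {s : ℂ} (hs : 1 < s.re) :
    riemannZeta ((starRingEnd ℂ) s) = (starRingEnd ℂ) (riemannZeta s) := by
  rw [zeta_eq_tsum_one_div_nat_add_one_cpow hs,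
    zeta_eq_tsum_one_div_nat_add_one_cpow (by simpa using hs), Complex.conj_tsum]
  refine tsum_congr fun n => ?_
  have hn : ((n : ℂ) + 1) = (((n : ℝ) + 1 : ℝ) : ℂ) := by push_cast; rfl
  rw [map_div₀, map_one, hn, Complex.cpow_conj, Complex.conj_ofReal]
  rw [Complex.arg_ofReal_of_nonneg (by positivity)]
  exact Real.pi_pos.ne

lemma Gammaℝ_conj (s : ℂ) : Gammaℝ ((starRingEnd ℂ) s) = (starRingEnd ℂ) (Gammaℝ s) := by
  have h : -(starRingEnd ℂ) s / 2 = (starRingEnd ℂ) (-s / 2) := by simp [map_ofNat]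
  have h2 : (starRingEnd ℂ) s / 2 = (starRingEnd ℂ) (s / 2) := by simp [map_ofNat]
  rw [Gammaℝ_def, Gammaℝ_def, map_mul, h, h2, Complex.Gamma_conj, Complex.cpow_conj,
    Complex.conj_ofReal]
  rw [Complex.arg_ofReal_of_nonneg Real.pi_pos.le]
  exact Real.pi_pos.ne

lemma xiF_conj (s : ℂ) : xiF ((starRingEnd ℂ) s) = (starRingEnd ℂ) (xiF s) := by
  have hd : Differentiable ℂ (fun s => (starRingEnd ℂ) (xiF ((starRingEnd ℂ) s))) := fun s =>
    differentiableAt_conj_conj_iff.2 (xiF_differentiable _)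
  have : (fun s => (starRingEnd ℂ) (xiF ((starRingEnd ℂ) s))) = xiF := by
    refine AnalyticOnNhd.eq_of_eventuallyEq (𝕜 := ℂ) (z₀ := 2)
      (fun z _ => hd.analyticAt z) (fun z _ => xiF_differentiable.analyticAt z) ?_
    filter_upwards [(isOpen_lt continuous_const Complex.continuous_re).mem_nhds
      (show (1 : ℝ) < (2 : ℂ).re by simp)] with z hz
    have hz' : 1 < z.re := hz
    have h1 : z ≠ 1 := by rintro rfl; simp at hz'
    have hc : 1 < ((starRingEnd ℂ) z).re := by simpa using hz'
    have h1c : (starRingEnd ℂ) z ≠ 1 := by intro h; rw [h] at hc; simp at hc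
    rw [xiF_eq_zeta (by linarith) h1c, xiF_eq_zeta (by linarith) h1, zeta_conj_of_one_lt hz',
      Gammaℝ_conj]
    simp
  have h := congrFun this s
  rw [← h, Complex.conj_conj]

/-- the logarithmic derivative of xi -/
noncomputable def GG (s : ℂ) : ℂ := logDeriv xiF s

lemma GG_eq {s : ℂ} (hs : 1 < s.re) :
    GG s = 1 / (s - 1) + ccst + Sser s + deriv riemannZeta s / riemannZeta s := by
  have hpos : 0 < s.re := by linarith
  have hs2 : 0 < (s / 2).re := by simp; exact hpos
  have h0 : s ≠ 0 := by rintro rfl; simp at hpos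
  have h1 : s ≠ 1 := by rintro rfl; simp at hs
  have h1' : s - 1 ≠ 0 := sub_ne_zero.2 h1
  have hpi : (Real.pi : ℂ) ≠ 0 := by exact_mod_cast Real.pi_ne_zero
  have hev : xiF =ᶠ[𝓝 s] fun z => (z * (z - 1)) * (((Real.pi : ℂ) ^ (-z / 2) * Gamma (z / 2)) * riemannZeta z) := by
    filter_upwards [(isOpen_lt continuous_const Complex.continuous_re).mem_nhds hs] with z hz
    have hz' : 1 < z.re := hz
    rw [xiF_eq_zeta (by linarith) (by rintro rfl; simp at hz'), Gammaℝ_def]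
  have hGd : DifferentiableAt ℂ Gamma (s / 2) := Complex.differentiableAt_Gamma _ (by
    intro m h
    exact re_pos_add_ne hs2 m (by rw [h]; simp))
  have hG2 : DifferentiableAt ℂ (fun z : ℂ => Gamma (z / 2)) s :=
    DifferentiableAt.comp s hGd (by fun_prop)
  have hzd := differentiableAt_riemannZeta h1
  have hGne := Complex.Gamma_ne_zero_of_re_pos hs2
  have hpd : HasDerivAt (fun z : ℂ => (Real.pi : ℂ) ^ (-z / 2))
      ((Real.pi : ℂ) ^ (-s / 2) * Complex.log Real.pi * (-1 / 2)) s := by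
    have : HasDerivAt (fun z : ℂ => -z / 2) (-1 / 2) s := ((hasDerivAt_id s).neg).div_const 2
    exact this.const_cpow (Or.inl hpi)
  have hpne : (Real.pi : ℂ) ^ (-s / 2) ≠ 0 := by
    rw [Complex.cpow_def_of_ne_zero hpi]; exact Complex.exp_ne_zero _
  have hzne := riemannZeta_ne_zero_of_one_le_re hs.le
  have e1 : GG s = logDeriv (fun z => (z * (z - 1)) * (((Real.pi : ℂ) ^ (-z / 2) * Gamma (z / 2)) * riemannZeta z)) s := by
    rw [GG, logDeriv_apply, logDeriv_apply, hev.deriv_eq, hev.eq_of_nhds]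
  rw [e1, logDeriv_mul (f := fun z : ℂ => z * (z - 1))
    (g := fun z : ℂ => ((Real.pi : ℂ) ^ (-z / 2) * Gamma (z / 2)) * riemannZeta z) s
    (mul_ne_zero h0 h1') (mul_ne_zero (mul_ne_zero hpne hGne) hzne)
    (by fun_prop) ((hpd.differentiableAt.mul hG2).mul hzd),
    logDeriv_mul (f := fun z : ℂ => z) (g := fun z : ℂ => z - 1) s h0 h1' (by fun_prop) (by fun_prop),
    logDeriv_mul (f := fun z : ℂ => (Real.pi : ℂ) ^ (-z / 2) * Gamma (z / 2)) s
      (mul_ne_zero hpne hGne) hzne (hpd.differentiableAt.mul hG2) hzd,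
    logDeriv_mul (f := fun z : ℂ => (Real.pi : ℂ) ^ (-z / 2)) (g := fun z : ℂ => Gamma (z / 2)) s
      hpne hGne hpd.differentiableAt hG2]
  have e2 : logDeriv (fun z : ℂ => Gamma (z / 2)) s = logDeriv Gamma (s / 2) / 2 := by
    have := logDeriv_comp (f := Gamma) (g := fun z : ℂ => z / 2) (x := s) hGd (by fun_prop)
    rw [Function.comp_def] at this
    rw [this]
    simp
    ring
  have e3 : logDeriv (fun z : ℂ => (Real.pi : ℂ) ^ (-z / 2)) s = - (Real.log Real.pi : ℂ) / 2 := by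
    rw [logDeriv_apply, hpd.deriv, Complex.ofReal_log Real.pi_pos.le]
    field_simp
  have e4 : logDeriv (fun z : ℂ => z) s = 1 / s := by simp [logDeriv_apply]
  have e5 : logDeriv (fun z : ℂ => z - 1) s = 1 / (s - 1) := by simp [logDeriv_apply]
  rw [e2, e3, e4, e5, logDeriv_apply riemannZeta]
  have := Sser_eq hpos
  linear_combination this


open Complex Filter Topology

lemma zetaLog_bound : ∃ K : ℝ, 0 ≤ K ∧ ∀ s : ℂ, 2 ≤ s.re → ‖deriv riemannZeta s / riemannZeta s‖ ≤ K := by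
  have h2 : (1 : ℝ) < (2 : ℂ).re := by simp
  have hs := (ArithmeticFunction.LSeriesSummable_vonMangoldt h2).norm
  refine ⟨∑' n, ‖LSeries.term (fun n => (ArithmeticFunction.vonMangoldt n : ℂ)) 2 n‖,
    tsum_nonneg (fun n => norm_nonneg _), fun s hs2 => ?_⟩
  have := ArithmeticFunction.LSeries_vonMangoldt_eq_deriv_riemannZeta_div (s := s) (by linarith)
  have e : deriv riemannZeta s / riemannZeta s =
      -LSeries (fun n => (ArithmeticFunction.vonMangoldt n : ℂ)) s := by
    rw [this]; ring
  rw [e, norm_neg, LSeries]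
  exact tsum_of_norm_bounded hs.hasSum
    (fun n => LSeries.norm_term_le_of_re_le_re _ (by simpa using hs2) n)

lemma GG_bound_two : ∃ C : ℝ, 0 ≤ C ∧ ∀ s : ℂ, 2 ≤ s.re → ‖GG s‖ ≤ C * Real.sqrt (1 + ‖s‖) := by
  obtain ⟨K, hK0, hK⟩ := zetaLog_bound
  obtain ⟨C, hC0, hC⟩ := Sser_growth
  refine ⟨1 + |ccst| + K + C, by positivity, fun s hs => ?_⟩
  rw [GG_eq (by linarith)]
  have h1 : 1 ≤ Real.sqrt (1 + ‖s‖) := by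
    rw [Real.one_le_sqrt]; linarith [norm_nonneg s]
  have h2 : Real.sqrt ‖s‖ ≤ Real.sqrt (1 + ‖s‖) := Real.sqrt_le_sqrt (by linarith)
  have h3 : ‖1 / (s - 1)‖ ≤ 1 := by
    rw [norm_div, norm_one]
    have : 1 ≤ ‖s - 1‖ := by
      have := Complex.re_le_norm (s - 1)
      simp at this; linarith
    rw [div_le_one (by linarith)]; exact this
  calc _ ≤ ‖1 / (s - 1)‖ + ‖(ccst : ℂ)‖ + ‖Sser s‖ + ‖deriv riemannZeta s / riemannZeta s‖ := norm_add₄_le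
    _ ≤ 1 + |ccst| + C * Real.sqrt ‖s‖ + K := by
        gcongr
        · simp
        · exact hC s (by linarith)
        · exact hK s hs
    _ ≤ (1 + |ccst| + K) * Real.sqrt (1 + ‖s‖) + C * Real.sqrt (1 + ‖s‖) := by
        have : (1 + |ccst| + K) * 1 ≤ (1 + |ccst| + K) * Real.sqrt (1 + ‖s‖) := by gcongr
        have : C * Real.sqrt ‖s‖ ≤ C * Real.sqrt (1 + ‖s‖) := by gcongr
        linarith
    _ = _ := by ring

lemma xiF_ne_zero_of_one_lt {s : ℂ} (hs : 1 < s.re) : xiF s ≠ 0 := by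
  have h1 : s ≠ 1 := by rintro rfl; simp at hs
  have h0 : s ≠ 0 := by rintro rfl; simp at hs; linarith
  rw [xiF_eq_zeta (by linarith) h1]
  exact mul_ne_zero (mul_ne_zero h0 (sub_ne_zero.2 h1))
    (mul_ne_zero (Gammaℝ_ne_zero_of_re_pos (by linarith)) (riemannZeta_ne_zero_of_one_le_re hs.le))

lemma xiF_hasDerivAt {s : ℂ} (hs : xiF s ≠ 0) : HasDerivAt xiF (GG s * xiF s) s := by
  rw [GG, logDeriv_apply, div_mul_cancel₀ _ hs]
  exact (xiF_differentiable s).hasDerivAt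

lemma xiF_seg {p q : ℂ} (hp : 2 ≤ p.re) (hq : 2 ≤ q.re) {K : ℝ}
    (hK : ∀ t : ℝ, 0 ≤ t → t ≤ 1 → ‖GG (p + t * (q - p))‖ ≤ K) :
    ‖xiF q‖ ≤ ‖xiF p‖ * Real.exp (K * ‖q - p‖) := by
  have hre : ∀ t : ℝ, 0 ≤ t → t ≤ 1 → 2 ≤ (p + t * (q - p)).re := by
    intro t h0 h1
    simp
    nlinarith
  have hd : ∀ t : ℝ, 0 ≤ t → t ≤ 1 → HasDerivAt (fun t : ℝ => xiF (p + t * (q - p)))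
      (GG (p + t * (q - p)) * xiF (p + t * (q - p)) * (q - p)) t := by
    intro t h0 h1
    have h2 : HasDerivAt (fun t : ℝ => p + (t : ℂ) * (q - p)) (q - p) t := by
      have := ((Complex.ofRealCLM.hasDerivAt (x := t)).mul_const (q - p)).const_add p
      simpa using this
    have h3 := xiF_hasDerivAt (xiF_ne_zero_of_one_lt (s := p + t * (q - p)) (by linarith [hre t h0 h1]))
    exact h3.comp t h2
  have := norm_le_gronwallBound_of_norm_deriv_right_le (f := fun t : ℝ => xiF (p + t * (q - p)))
    (f' := fun t : ℝ => GG (p + t * (q - p)) * xiF (p + t * (q - p)) * (q - p))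
    (δ := ‖xiF p‖) (K := K * ‖q - p‖) (ε := 0) (a := 0) (b := 1)
    (fun t ht => (hd t ht.1 ht.2).continuousAt.continuousWithinAt)
    (fun t ht => (hd t ht.1 ht.2.le).hasDerivWithinAt) (by simp)
    (fun t ht => by
      rw [norm_mul, norm_mul, add_zero]
      have := hK t ht.1 ht.2.le
      calc _ ≤ K * ‖xiF (p + t * (q - p))‖ * ‖q - p‖ := by gcongr
        _ = _ := by ring) 1 (by simp)
  rw [gronwallBound_ε0] at this
  simpa using this

/-- growth weight -/
noncomputable def wgt (s : ℂ) : ℝ := (1 + ‖s‖) * Real.sqrt (1 + ‖s‖)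

lemma wgt_ge_one (s : ℂ) : 1 ≤ wgt s := by
  have h1 : 1 ≤ Real.sqrt (1 + ‖s‖) := by
    rw [Real.one_le_sqrt]; linarith [norm_nonneg s]
  have : 1 ≤ 1 + ‖s‖ := by linarith [norm_nonneg s]
  unfold wgt
  nlinarith

lemma wgt_ge (s : ℂ) : 1 + ‖s‖ ≤ wgt s := by
  have h1 : 1 ≤ Real.sqrt (1 + ‖s‖) := by
    rw [Real.one_le_sqrt]; linarith [norm_nonneg s]
  have : 1 ≤ 1 + ‖s‖ := by linarith [norm_nonneg s]
  unfold wgt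
  nlinarith

lemma xiF_two_sided : ∃ C : ℝ, 0 ≤ C ∧ ∀ s : ℂ, 2 ≤ s.re →
    ‖xiF s‖ ≤ Real.exp (C * wgt s) ∧ Real.exp (-(C * wgt s)) ≤ ‖xiF s‖ := by
  obtain ⟨C, hC0, hC⟩ := GG_bound_two
  have hx2 : 0 < ‖xiF 2‖ := norm_pos_iff.2 (xiF_ne_zero_of_one_lt (by simp))
  set L := |Real.log ‖xiF 2‖| with hL
  have hL0 : 0 ≤ L := abs_nonneg _
  refine ⟨L + 4 * C, by positivity, fun s hs => ?_⟩
  have hns : 2 ≤ ‖s‖ := by linarith [Complex.re_le_norm s]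
  have hK : ∀ p q : ℂ, 2 ≤ p.re → 2 ≤ q.re → ‖p‖ ≤ ‖s‖ → ‖q‖ ≤ ‖s‖ →
      ∀ t : ℝ, 0 ≤ t → t ≤ 1 → ‖GG (p + t * (q - p))‖ ≤ C * Real.sqrt (1 + ‖s‖) := by
    intro p q hp hq hps hqs t h0 h1
    refine (hC _ ?_).trans ?_
    · simp; nlinarith
    · gcongr
      have : p + t * (q - p) = ((1 - t : ℝ) : ℂ) * p + (t : ℂ) * q := by push_cast; ring
      rw [this]
      refine (norm_add_le _ _).trans ?_
      rw [norm_mul, norm_mul, Complex.norm_real, Complex.norm_real, Real.norm_of_nonneg h0,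
        Real.norm_of_nonneg (by linarith)]
      nlinarith
  have hdist : ‖s - 2‖ ≤ 2 * (1 + ‖s‖) := by
    refine (norm_sub_le _ _).trans ?_
    simp; linarith
  have hw1 := wgt_ge_one s
  have hexp : C * Real.sqrt (1 + ‖s‖) * ‖s - 2‖ ≤ 2 * C * wgt s := by
    unfold wgt
    calc _ ≤ C * Real.sqrt (1 + ‖s‖) * (2 * (1 + ‖s‖)) := by gcongr
      _ = _ := by ring
  have hlog := Real.exp_log hx2
  have hLw : L ≤ L * wgt s := by nlinarith
  have hCw : 0 ≤ C * wgt s := by positivity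
  constructor
  · have := xiF_seg (p := 2) (q := s) (by simp) hs (hK 2 s (by simp) hs (by simpa using hns) le_rfl)
    refine this.trans ?_
    rw [← hlog, ← Real.exp_add]
    gcongr
    have := le_abs_self (Real.log ‖xiF 2‖)
    nlinarith
  · have := xiF_seg (p := s) (q := 2) hs (by simp) (hK s 2 hs (by simp) le_rfl (by simpa using hns))
    rw [norm_sub_rev] at this
    have h2 : ‖xiF 2‖ ≤ ‖xiF s‖ * Real.exp (2 * C * wgt s) :=
      this.trans (by gcongr)
    have h3 : Real.exp (-L) ≤ ‖xiF 2‖ := by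
      rw [← hlog]; gcongr; exact neg_abs_le _
    have h4 : Real.exp (-L) * Real.exp (-(2 * C * wgt s)) ≤ ‖xiF s‖ := by
      calc _ ≤ (‖xiF s‖ * Real.exp (2 * C * wgt s)) * Real.exp (-(2 * C * wgt s)) := by
            gcongr; exact h3.trans h2
        _ = ‖xiF s‖ := by rw [mul_assoc, ← Real.exp_add]; simp
    refine le_trans ?_ h4
    rw [← Real.exp_add]
    gcongr
    nlinarith

open HurwitzZeta MeasureTheory Set in
lemma Lam0_strip : ∃ B : ℝ, 0 ≤ B ∧ ∀ s : ℂ, -2 ≤ s.re → s.re ≤ 4 → ‖completedRiemannZeta₀ s‖ ≤ B := by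
  set P := hurwitzEvenFEPair 0
  have hconv : ∀ s, MellinConvergent P.f_modif s := fun s =>
    (P.isStrongFEPair_toStrongFEPair.hasMellin s).1
  have ha := (hconv (-1)).norm
  have hb := (hconv 2).norm
  set B := (∫ t in Ioi (0:ℝ), ‖(t : ℂ) ^ ((-1 : ℂ) - 1) • P.f_modif t‖) +
    ∫ t in Ioi (0:ℝ), ‖(t : ℂ) ^ ((2 : ℂ) - 1) • P.f_modif t‖ with hB
  have hB0 : 0 ≤ B := add_nonneg (integral_nonneg fun _ => norm_nonneg _)
    (integral_nonneg fun _ => norm_nonneg _)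
  refine ⟨B, hB0, fun s h1 h2 => ?_⟩
  have e : completedRiemannZeta₀ s = mellin P.f_modif (s / 2) / 2 := rfl
  have h3 : ‖mellin P.f_modif (s / 2)‖ ≤ B := by
    rw [mellin, hB, ← integral_add ha hb]
    refine norm_integral_le_of_norm_le (ha.add hb) ?_
    refine (ae_restrict_mem measurableSet_Ioi).mono fun t ht => ?_
    have ht0 : (0 : ℝ) < t := ht
    simp only [norm_smul]
    rw [← add_mul]
    gcongr
    rw [Complex.norm_cpow_eq_rpow_re_of_pos ht0, Complex.norm_cpow_eq_rpow_re_of_pos ht0,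
      Complex.norm_cpow_eq_rpow_re_of_pos ht0]
    have hr : (s / 2 - 1).re = s.re / 2 - 1 := by simp
    rw [hr]
    have hr1 : ((-1 : ℂ) - 1).re = -2 := by norm_num
    have hr2 : ((2 : ℂ) - 1).re = 1 := by norm_num
    rw [hr1, hr2]
    rcases le_total t 1 with h | h
    · have := Real.rpow_le_rpow_of_exponent_ge ht0 h (show (-2 : ℝ) ≤ s.re / 2 - 1 by linarith)
      have h5 : 0 ≤ t ^ (1 : ℝ) := by positivity
      exact this.trans (le_add_of_nonneg_right h5)
    · have := Real.rpow_le_rpow_of_exponent_le h (show s.re / 2 - 1 ≤ (1 : ℝ) by linarith)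
      have h5 : 0 ≤ t ^ (-2 : ℝ) := by positivity
      exact this.trans (le_add_of_nonneg_left h5)
  rw [e, norm_div]
  simp
  linarith

lemma xiF_upper : ∃ C : ℝ, 0 ≤ C ∧ ∀ s : ℂ, -2 ≤ s.re → ‖xiF s‖ ≤ Real.exp (C * wgt s) := by
  obtain ⟨C, hC0, hC⟩ := xiF_two_sided
  obtain ⟨B, hB0, hB⟩ := Lam0_strip
  refine ⟨C + B + 2, by positivity, fun s hs => ?_⟩
  have hw1 := wgt_ge_one s
  have hw := wgt_ge s
  rcases le_total s.re 4 with h | h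
  · have h1 : ‖xiF s‖ ≤ (1 + ‖s‖) ^ 2 * (B + 1) := by
      unfold xiF
      refine (norm_add_le _ _).trans ?_
      rw [norm_mul, norm_mul, norm_one]
      have h2 : ‖s - 1‖ ≤ 1 + ‖s‖ := (norm_sub_le _ _).trans (by simp [add_comm])
      have h3 := hB s hs h
      have hn := norm_nonneg s
      calc _ ≤ (1 + ‖s‖) * (1 + ‖s‖) * B + 1 := by gcongr; linarith
        _ ≤ _ := by nlinarith
    have h4 : 1 + ‖s‖ ≤ Real.exp ‖s‖ := by linarith [Real.add_one_le_exp ‖s‖]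
    have h5 : B + 1 ≤ Real.exp B := Real.add_one_le_exp B
    have hn := norm_nonneg s
    calc _ ≤ (1 + ‖s‖) ^ 2 * (B + 1) := h1
      _ ≤ (Real.exp ‖s‖) ^ 2 * Real.exp B := by gcongr
      _ = Real.exp (2 * ‖s‖ + B) := by rw [← Real.exp_nat_mul, ← Real.exp_add]; norm_num
      _ ≤ _ := by gcongr; nlinarith
  · refine (hC s (by linarith)).1.trans ?_
    gcongr
    linarith


open Complex Filter Topology

lemma exp_primitive {c : ℂ} {r : ℝ} (hr : 0 < r) {f K : ℂ → ℂ}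
    (hf : ∀ x ∈ Metric.ball c r, HasDerivAt f (K x * f x) x)
    (hK : DifferentiableOn ℂ K (Metric.ball c r)) :
    ∃ L : ℂ → ℂ, L c = 0 ∧ (∀ x ∈ Metric.ball c r, HasDerivAt L (K x) x) ∧
      ∀ x ∈ Metric.ball c r, f x = f c * Complex.exp (L x) := by
  obtain ⟨L, hL0, hL⟩ := hK.isExactOn_ball.with_val_at c 0
  refine ⟨L, hL0, hL, fun x hx => ?_⟩
  have hd : ∀ x ∈ Metric.ball c r, HasDerivAt (fun x => f x * Complex.exp (-L x)) 0 x := by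
    intro x hx
    have := (hf x hx).mul (hL x hx).neg.cexp
    convert! this using 1
    ring
  have hc : c ∈ Metric.ball c r := Metric.mem_ball_self hr
  have := Metric.isOpen_ball.is_const_of_deriv_eq_zero (convex_ball c r).isPreconnected
    (fun x hx => (hd x hx).differentiableAt.differentiableWithinAt) (fun x hx => (hd x hx).deriv) hx hc
  simp only [hL0, neg_zero, Complex.exp_zero, mul_one] at this
  rw [← this, mul_assoc, ← Complex.exp_add]
  simp

lemma wgt_le {s w : ℂ} (h : ‖w‖ ≤ ‖s‖ + 4) : wgt w ≤ 25 * wgt s := by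
  unfold wgt
  have hs := norm_nonneg s
  have hw := norm_nonneg w
  have h1 : 1 + ‖w‖ ≤ 5 * (1 + ‖s‖) := by linarith
  have h2 : Real.sqrt (1 + ‖w‖) ≤ 5 * Real.sqrt (1 + ‖s‖) := by
    have : Real.sqrt (1 + ‖w‖) ≤ Real.sqrt (5 ^ 2 * (1 + ‖s‖)) := Real.sqrt_le_sqrt (by linarith)
    rwa [Real.sqrt_mul (by positivity), Real.sqrt_sq (by norm_num)] at this
  calc _ ≤ (5 * (1 + ‖s‖)) * (5 * Real.sqrt (1 + ‖s‖)) := by gcongr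
    _ = _ := by ring

lemma GG_differentiableAt {s : ℂ} (hs : xiF s ≠ 0) : DifferentiableAt ℂ GG s := by
  have h1 : DifferentiableAt ℂ (deriv xiF) s := by
    have := (xiF_differentiable.analyticAt s).deriv
    exact this.differentiableAt
  exact h1.div (xiF_differentiable s) hs

lemma xiF_lower (hRH : RH) {a : ℝ} (ha : 0 < a) (ha1 : a ≤ 1) : ∃ C : ℝ, 0 ≤ C ∧ ∀ s : ℂ,
    1 / 2 + a ≤ s.re → Real.exp (-(C * wgt s)) ≤ ‖xiF s‖ := by
  obtain ⟨C1, hC10, hC1⟩ := xiF_two_sided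
  obtain ⟨C2, hC20, hC2⟩ := xiF_upper
  refine ⟨25 * C1 + 100 * (C1 + C2 + 1) / a, by positivity, fun s hs => ?_⟩
  have hw := wgt_ge_one s
  rcases le_total (5 / 2) s.re with h | h
  · refine le_trans ?_ (hC1 s (by linarith)).2
    gcongr
    have : 0 ≤ 100 * (C1 + C2 + 1) / a := by positivity
    linarith
  set s0 : ℂ := ⟨5 / 2, s.im⟩ with hs0
  have hball : ∀ w ∈ Metric.ball s0 2, 1 / 2 < w.re := by
    intro w hw
    rw [Metric.mem_ball, dist_eq_norm] at hw
    have := (abs_lt.1 ((Complex.abs_re_le_norm (w - s0)).trans_lt hw)).1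
    simp [hs0] at this
    linarith
  have hne : ∀ w ∈ Metric.ball s0 2, xiF w ≠ 0 := fun w hw => xiF_ne_zero_of_RH hRH (hball w hw)
  obtain ⟨L, hL0, hL, hxi⟩ := exp_primitive (c := s0) (r := 2) (by norm_num)
    (f := xiF) (K := GG) (fun w hw => xiF_hasDerivAt (hne w hw))
    (fun w hw => (GG_differentiableAt (hne w hw)).differentiableWithinAt)
  have hz : s - s0 = ((s.re - 5 / 2 : ℝ) : ℂ) := by
    apply Complex.ext <;> simp [hs0]
  have hzn : ‖s - s0‖ = 5 / 2 - s.re := by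
    rw [hz, Complex.norm_real, Real.norm_eq_abs, abs_of_nonpos (by linarith)]; ring
  have hs0n : ‖s0‖ ≤ ‖s‖ + 2 := by
    have : s0 = s - (s - s0) := by ring
    rw [this]
    refine (norm_sub_le _ _).trans ?_
    rw [hzn]; linarith
  have hs0pos : 0 < ‖xiF s0‖ := norm_pos_iff.2 (hne s0 (Metric.mem_ball_self (by norm_num)))
  have hlow := (hC1 s0 (by simp [hs0]; norm_num)).2
  have hw0 : wgt s0 ≤ 25 * wgt s := wgt_le (by linarith)
  set M := 25 * (C1 + C2 + 1) * wgt s with hM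
  have hMpos : 0 < M := by positivity
  have hbc := Complex.borelCaratheodory_zero (f := fun z => L (s0 + z)) (M := M) (R := 2) (z := s - s0)
    hMpos ?_ ?_ (by norm_num) ?_ (by simpa using hL0)
  · have e1 : s0 + (s - s0) = s := by ring
    rw [e1, hzn] at hbc
    have hd : a ≤ 2 - (5 / 2 - s.re) := by linarith
    have h2 : ‖L s‖ ≤ 4 * M / a := by
      refine hbc.trans ?_
      have : 5 / 2 - s.re ≤ 2 := by linarith
      have hn : 2 * M * (5 / 2 - s.re) ≤ 4 * M := by nlinarith
      exact div_le_div₀ (by positivity) hn ha hd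
    have hsb : s ∈ Metric.ball s0 2 := by
      rw [Metric.mem_ball, dist_eq_norm, hzn]; linarith
    rw [hxi s hsb, norm_mul, Complex.norm_exp]
    have h3 : -(4 * M / a) ≤ (L s).re := by
      have := (abs_le.1 ((Complex.abs_re_le_norm (L s)).trans h2)).1
      exact this
    calc _ = Real.exp (-(C1 * (25 * wgt s))) * Real.exp (-(4 * M / a)) := by
          rw [← Real.exp_add, hM]; congr 1; field_simp; ring
      _ ≤ Real.exp (-(C1 * wgt s0)) * Real.exp ((L s).re) := by gcongr
      _ ≤ _ := by gcongr
  · intro z hz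
    have hm : s0 + z ∈ Metric.ball s0 2 := by simpa [Metric.mem_ball, dist_eq_norm] using hz
    have h1 : DifferentiableAt ℂ L (s0 + z) := (hL _ hm).differentiableAt
    exact (DifferentiableAt.comp z h1 (by fun_prop)).differentiableWithinAt
  · intro z hz
    have hm : s0 + z ∈ Metric.ball s0 2 := by simpa [Metric.mem_ball, dist_eq_norm] using hz
    have hzn2 : ‖z‖ < 2 := by simpa using hz
    have h1 := hxi _ hm
    have h2 := hC2 (s0 + z) (by linarith [hball _ hm])
    have h3 : wgt (s0 + z) ≤ 25 * wgt s := wgt_le (by linarith [norm_add_le s0 z])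
    rw [h1, norm_mul, Complex.norm_exp] at h2
    show (L (s0 + z)).re ≤ M
    rw [← Real.exp_le_exp]
    have h4 : Real.exp (-(C1 * wgt s0)) * Real.exp (L (s0 + z)).re ≤ Real.exp (C2 * wgt (s0 + z)) :=
      le_trans (by gcongr) h2
    rw [← Real.exp_add, Real.exp_le_exp] at h4
    rw [Real.exp_le_exp, hM]
    nlinarith
  · rw [mem_ball_zero_iff, hzn]; linarith

lemma xiF_normSq_deriv {s : ℂ} (hs : xiF s ≠ 0) :
    HasDerivAt (fun σ : ℝ => ‖xiF (s + σ)‖ ^ 2) (2 * ((GG s).re * ‖xiF s‖ ^ 2)) 0 := by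
  have h2 : HasDerivAt (fun t : ℝ => s + (t : ℂ)) 1 0 := by
    have := (Complex.ofRealCLM.hasDerivAt (x := (0 : ℝ))).const_add s
    simpa using this
  have h3 : HasDerivAt xiF (GG s * xiF s) (s + ((0 : ℝ) : ℂ)) := by simpa using xiF_hasDerivAt hs
  have h4 := (h3.comp (0 : ℝ) h2).norm_sq
  convert! h4 using 1
  simp only [Function.comp, Complex.ofReal_zero, add_zero, mul_one]
  rw [Complex.inner]
  rw [← Complex.normSq_eq_norm_sq, Complex.normSq_apply]
  simp
  ring

lemma STerm_re_nonneg (n : ℕ) {s : ℂ} (hs : 0 < s.re) : 0 ≤ (STerm n s).re := by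
  have hm : ((n : ℂ) + 1) = (((n : ℝ) + 1 : ℝ) : ℂ) := by push_cast; rfl
  rw [STerm, hm]
  set m : ℝ := (n : ℝ) + 1
  have hm0 : 0 < m := by positivity
  have : s / (2 * (m : ℂ) * (s + 2 * (m : ℂ))) = ((1 / (2 * m) : ℝ) : ℂ) * (s / (s + 2 * (m : ℂ))) := by
    push_cast
    rw [div_mul_div_comm, one_mul]
  rw [this, Complex.re_ofReal_mul, Complex.div_re]
  simp
  have := Complex.normSq_nonneg (s + 2 * (m : ℂ))
  have h1 := mul_self_nonneg s.im
  positivity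

lemma Sser_re_nonneg {s : ℂ} (hs : 0 < s.re) : 0 ≤ (Sser s).re := by
  rw [Sser, Complex.re_tsum (STerm_summable hs)]
  exact tsum_nonneg fun n => STerm_re_nonneg n hs

lemma GG_re_lower : ∃ K : ℝ, 0 ≤ K ∧ ∀ s : ℂ, 2 ≤ s.re → -K ≤ (GG s).re := by
  obtain ⟨K, hK0, hK⟩ := zetaLog_bound
  refine ⟨2 + K, by positivity, fun s hs => ?_⟩
  rw [GG_eq (by linarith)]
  have h1 := (abs_le.1 ((Complex.abs_re_le_norm _).trans (hK s hs))).1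
  have h2 := Sser_re_nonneg (s := s) (by linarith)
  have h3 : 0 ≤ (1 / (s - 1)).re := by
    rw [Complex.div_re]
    simp
    have := Complex.normSq_nonneg (s - 1)
    apply div_nonneg _ this
    linarith
  have := ccst_bounds.1
  simp only [Complex.add_re, Complex.ofReal_re]
  linarith

lemma xiF_real_ratio : ∃ K : ℝ, 0 ≤ K ∧ ∀ x y : ℝ, 2 ≤ x → x ≤ y → y ≤ x + 2 →
    ‖xiF x‖ ^ 2 ≤ K * ‖xiF y‖ ^ 2 := by
  obtain ⟨K, hK0, hK⟩ := GG_re_lower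
  refine ⟨Real.exp (4 * K), by positivity, fun x y hx hxy hy => ?_⟩
  have hd : ∀ u : ℝ, 2 ≤ u → HasDerivAt (fun u : ℝ => ‖xiF u‖ ^ 2 * Real.exp (2 * K * u))
      (2 * ((GG u).re * ‖xiF u‖ ^ 2) * Real.exp (2 * K * u) +
        ‖xiF u‖ ^ 2 * (Real.exp (2 * K * u) * (2 * K))) u := by
    intro u hu
    have h1 := xiF_normSq_deriv (s := (u : ℂ)) (xiF_ne_zero_of_one_lt (by simp; linarith))
    have h2 : HasDerivAt (fun u : ℝ => ‖xiF u‖ ^ 2) (2 * ((GG u).re * ‖xiF u‖ ^ 2)) u := by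
      have h3 : HasDerivAt (fun v : ℝ => v - u) 1 u := (hasDerivAt_id u).sub_const u
      have h4 : HasDerivAt (fun σ : ℝ => ‖xiF ((u : ℂ) + σ)‖ ^ 2) (2 * ((GG u).re * ‖xiF u‖ ^ 2)) ((fun v : ℝ => v - u) u) := by
        simpa using h1
      have := HasDerivAt.comp (h := fun v : ℝ => v - u) u h4 h3
      simpa [Function.comp_def] using this
    have h5 : HasDerivAt (fun u : ℝ => Real.exp (2 * K * u)) (Real.exp (2 * K * u) * (2 * K)) u := by
      have := ((hasDerivAt_id u).const_mul (2 * K)).exp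
      simpa using this
    exact h2.mul h5
  have hmono : MonotoneOn (fun u : ℝ => ‖xiF u‖ ^ 2 * Real.exp (2 * K * u)) (Set.Ici 2) := by
    refine monotoneOn_of_deriv_nonneg (convex_Ici 2)
      (fun u hu => (hd u hu).continuousAt.continuousWithinAt)
      (fun u hu => (hd u (interior_subset hu)).differentiableAt.differentiableWithinAt) (fun u hu => ?_)
    have hu2 : 2 ≤ u := interior_subset hu
    rw [(hd u hu2).deriv]
    have := hK u (by simpa using hu2)
    have hE := Real.exp_pos (2 * K * u)
    have hN : 0 ≤ ‖xiF u‖ ^ 2 := by positivity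
    have : 0 ≤ 2 * ((GG u).re + K) * (‖xiF u‖ ^ 2 * Real.exp (2 * K * u)) := by
      have : 0 ≤ (GG u).re + K := by linarith
      positivity
    linarith
  have h := hmono (show x ∈ Set.Ici 2 from hx) (show y ∈ Set.Ici 2 from hx.trans hxy) hxy
  simp only at h
  calc ‖xiF x‖ ^ 2 = (‖xiF x‖ ^ 2 * Real.exp (2 * K * x)) * Real.exp (-(2 * K * x)) := by
        rw [mul_assoc, ← Real.exp_add]; simp
    _ ≤ (‖xiF y‖ ^ 2 * Real.exp (2 * K * y)) * Real.exp (-(2 * K * x)) := by gcongr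
    _ = Real.exp (2 * K * (y - x)) * ‖xiF y‖ ^ 2 := by
        rw [mul_assoc, ← Real.exp_add, mul_comm]; congr 2; ring
    _ ≤ _ := by
        have h9 : 2 * K * (y - x) ≤ 4 * K := by nlinarith
        exact mul_le_mul_of_nonneg_right (Real.exp_le_exp.2 h9) (by positivity)

lemma xiF_mono_aux (hRH : RH) {a : ℝ} (ha : 0 < a) (ha1 : a ≤ 1) {z : ℂ} (hz : 0 ≤ z.re) :
    ‖xiF (1 / 2 + z - a)‖ ≤ ‖xiF (1 / 2 + z + a)‖ := by
  have hne : ∀ z : ℂ, 0 ≤ z.re → xiF (1 / 2 + z + a) ≠ 0 := fun z hz =>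
    xiF_ne_zero_of_RH hRH (by simp; linarith)
  set Q : ℂ → ℂ := fun z => xiF (1 / 2 + z - a) / xiF (1 / 2 + z + a) with hQ
  suffices h : ‖Q z‖ ≤ 1 by
    rw [hQ] at h
    simp only [norm_div] at h
    rwa [div_le_one (norm_pos_iff.2 (hne z hz))] at h
  have hxd := xiF_differentiable
  have hclos : closure {z : ℂ | 0 < z.re} = {z : ℂ | 0 ≤ z.re} := Complex.closure_setOfPred_lt_re 0
  refine PhragmenLindelof.right_half_plane_of_bounded_on_real ?_ ?_ ?_ ?_ hz
  · apply DifferentiableOn.diffContOnCl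
    rw [hclos]
    intro w hw
    refine DifferentiableAt.differentiableWithinAt ?_
    have h1 : DifferentiableAt ℂ (fun z : ℂ => xiF (1 / 2 + z - a)) w :=
      DifferentiableAt.comp w (hxd _) (by fun_prop)
    have h2 : DifferentiableAt ℂ (fun z : ℂ => xiF (1 / 2 + z + a)) w :=
      DifferentiableAt.comp w (hxd _) (by fun_prop)
    exact h1.div h2 (hne w hw)
  · obtain ⟨C1, hC10, hC1⟩ := xiF_lower hRH ha ha1
    obtain ⟨C2, hC20, hC2⟩ := xiF_upper
    refine ⟨3 / 2, by norm_num, 100 * (C1 + C2), ?_⟩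
    refine Asymptotics.IsBigO.of_bound 1 ?_
    have hev : ∀ᶠ z in Bornology.cobounded ℂ ⊓ 𝓟 {z : ℂ | 0 < z.re}, 1 ≤ ‖z‖ ∧ 0 < z.re := by
      refine Filter.Eventually.and ?_ ?_
      · exact (tendsto_norm_cobounded_atTop.eventually (eventually_ge_atTop 1)).filter_mono inf_le_left
      · exact (eventually_principal.2 fun _ h => h).filter_mono inf_le_right
    filter_upwards [hev] with w hw
    obtain ⟨hw1, hw2⟩ := hw
    have h1 := hC1 (1 / 2 + w + a) (by simp; linarith)
    have h2 := hC2 (1 / 2 + w - a) (by simp; linarith)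
    have hn1 : ‖(1 / 2 + w + a : ℂ)‖ ≤ ‖w‖ + 4 := by
      refine (norm_add₃_le).trans ?_
      simp
      rw [abs_of_pos ha]
      linarith
    have hn2 : ‖(1 / 2 + w - a : ℂ)‖ ≤ ‖w‖ + 4 := by
      refine (norm_sub_le _ _).trans ?_
      have := norm_add_le (1 / 2 : ℂ) w
      simp at this ⊢
      rw [abs_of_pos ha]
      linarith
    have hw25 : wgt w ≤ 4 * ‖w‖ ^ (3 / 2 : ℝ) := by
      have e : ‖w‖ ^ (3 / 2 : ℝ) = ‖w‖ * Real.sqrt ‖w‖ := by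
        rw [Real.sqrt_eq_rpow, ← Real.rpow_one_add' (norm_nonneg w) (by norm_num)]; norm_num
      rw [e, wgt]
      have h5 : Real.sqrt (1 + ‖w‖) ≤ 2 * Real.sqrt ‖w‖ := by
        have : Real.sqrt (1 + ‖w‖) ≤ Real.sqrt (2 ^ 2 * ‖w‖) := Real.sqrt_le_sqrt (by linarith)
        rwa [Real.sqrt_mul (by positivity), Real.sqrt_sq (by norm_num)] at this
      have h6 := Real.sqrt_nonneg ‖w‖
      calc _ ≤ (2 * ‖w‖) * (2 * Real.sqrt ‖w‖) := by gcongr; linarith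
        _ = _ := by ring
    have hq1 := wgt_le hn1
    have hq2 := wgt_le hn2
    rw [one_mul, Real.norm_of_nonneg (Real.exp_pos _).le, hQ]
    simp only [norm_div]
    have hpos := norm_pos_iff.2 (hne w hw2.le)
    rw [div_le_iff₀ hpos]
    refine h2.trans ?_
    refine le_trans ?_ (mul_le_mul_of_nonneg_left h1 (Real.exp_pos _).le)
    rw [← Real.exp_add]
    gcongr
    have h7 : C2 * wgt (1 / 2 + w - a) ≤ C2 * (100 * ‖w‖ ^ (3 / 2 : ℝ)) := by gcongr; linarith
    have h8 : C1 * wgt (1 / 2 + w + a) ≤ C1 * (100 * ‖w‖ ^ (3 / 2 : ℝ)) := by gcongr; linarith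
    linarith
  · obtain ⟨K, hK0, hK⟩ := xiF_real_ratio
    refine ⟨Real.sqrt K, ?_⟩
    rw [eventually_map]
    filter_upwards [eventually_ge_atTop 3] with x hx
    have e1 : (1 / 2 + (x : ℂ) - a) = ((1 / 2 + x - a : ℝ) : ℂ) := by push_cast; ring
    have e2 : (1 / 2 + (x : ℂ) + a) = ((1 / 2 + x + a : ℝ) : ℂ) := by push_cast; ring
    have := hK (1 / 2 + x - a) (1 / 2 + x + a) (by linarith) (by linarith) (by linarith)
    have hpos := norm_pos_iff.2 (hne x (by simp; linarith))
    rw [hQ]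
    simp only [norm_div]
    rw [div_le_iff₀ hpos]
    apply le_of_sq_le_sq _ (by positivity)
    rw [mul_pow, Real.sq_sqrt hK0, e1, e2]
    exact this
  · intro x
    have hpos := norm_pos_iff.2 (hne (x * I) (by simp))
    rw [hQ]
    simp only [norm_div]
    rw [div_le_one hpos]
    have e : (1 / 2 + (x : ℂ) * I - a) = 1 - (starRingEnd ℂ) (1 / 2 + (x : ℂ) * I + a) := by
      simp [map_ofNat]
      ring
    rw [e, xiF_one_sub, xiF_conj, Complex.norm_conj]

lemma GG_re_nonneg (hRH : RH) {s : ℂ} (hs : 1 / 2 < s.re) : 0 ≤ (GG s).re := by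
  have hne := xiF_ne_zero_of_RH hRH hs
  have hd := xiF_normSq_deriv hne
  have ht := hd.tendsto_slope_zero_right
  have hN : 0 < ‖xiF s‖ ^ 2 := by have := norm_pos_iff.2 hne; positivity
  have : 0 ≤ 2 * ((GG s).re * ‖xiF s‖ ^ 2) := by
    refine ge_of_tendsto ht ?_
    filter_upwards [Ioo_mem_nhdsGT (show (0:ℝ) < 1 by norm_num)] with t ht
    have ht0 := ht.1
    have h := xiF_mono_aux hRH (a := t / 2) (by linarith) (by linarith [ht.2])
      (z := s - 1 / 2 + ((t / 2 : ℝ) : ℂ)) (by simp; linarith)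
    have e1 : (1 / 2 + (s - 1 / 2 + ((t / 2 : ℝ) : ℂ)) - ((t / 2 : ℝ) : ℂ)) = s := by ring
    have e2 : (1 / 2 + (s - 1 / 2 + ((t / 2 : ℝ) : ℂ)) + ((t / 2 : ℝ) : ℂ)) = s + t := by
      push_cast; ring
    rw [e1, e2] at h
    simp only [zero_add, Complex.ofReal_zero, add_zero, smul_eq_mul]
    have h2 : ‖xiF s‖ ^ 2 ≤ ‖xiF (s + t)‖ ^ 2 := by gcongr
    have : 0 ≤ t⁻¹ := by positivity
    have : 0 ≤ ‖xiF (s + t)‖ ^ 2 - ‖xiF s‖ ^ 2 := by linarith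
    positivity
  by_contra hcon
  push Not at hcon
  nlinarith


open Complex Filter Topology

lemma GG_strip (hRH : RH) {δ : ℝ} (hδ : 0 < δ) : ∃ C : ℝ, 0 ≤ C ∧ ∀ s : ℂ,
    1 / 2 + δ ≤ s.re → ‖GG s‖ ≤ C * Real.sqrt (1 + ‖s‖) := by
  obtain ⟨C, hC0, hC⟩ := GG_bound_two
  refine ⟨C + (4 + 4 * (C * 2)) / δ, by positivity, fun s hs => ?_⟩
  have hsq : 1 ≤ Real.sqrt (1 + ‖s‖) := by
    rw [Real.one_le_sqrt]; linarith [norm_nonneg s]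
  rcases le_total (5 / 2) s.re with h | h
  · refine (hC s (by linarith)).trans ?_
    gcongr
    have : 0 ≤ (4 + 4 * (C * 2)) / δ := by positivity
    linarith
  set s0 : ℂ := ⟨5 / 2, s.im⟩ with hs0
  have hball : ∀ w ∈ Metric.ball s0 2, 1 / 2 < w.re := by
    intro w hw
    rw [Metric.mem_ball, dist_eq_norm] at hw
    have := (abs_lt.1 ((Complex.abs_re_le_norm (w - s0)).trans_lt hw)).1
    simp [hs0] at this
    linarith
  have hz : s - s0 = ((s.re - 5 / 2 : ℝ) : ℂ) := by
    apply Complex.ext <;> simp [hs0]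
  have hzn : ‖s - s0‖ = 5 / 2 - s.re := by
    rw [hz, Complex.norm_real, Real.norm_eq_abs, abs_of_nonpos (by linarith)]; ring
  have hs0n : ‖s0‖ ≤ ‖s‖ + 2 := by
    have : s0 = s - (s - s0) := by ring
    rw [this]
    refine (norm_sub_le _ _).trans ?_
    rw [hzn]; linarith
  have hbc := Complex.borelCaratheodory (f := fun z => -GG (s0 + z)) (M := 1) (R := 2) (z := s - s0)
    (by norm_num) ?_ ?_ (by norm_num) ?_
  · have e1 : s0 + (s - s0) = s := by ring
    simp only [e1, hzn, norm_neg, add_zero] at hbc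
    have hd : δ ≤ 2 - (5 / 2 - s.re) := by linarith
    have h2 : ‖GG s0‖ ≤ C * 2 * Real.sqrt (1 + ‖s‖) := by
      refine (hC s0 (by simp [hs0]; norm_num)).trans ?_
      rw [mul_assoc]
      gcongr
      have : Real.sqrt (1 + ‖s0‖) ≤ Real.sqrt (2 ^ 2 * (1 + ‖s‖)) :=
        Real.sqrt_le_sqrt (by linarith [norm_nonneg s])
      rwa [Real.sqrt_mul (by positivity), Real.sqrt_sq (by norm_num)] at this
    refine hbc.trans ?_
    rw [← add_div]
    have hn : 2 * 1 * (5 / 2 - s.re) + ‖GG s0‖ * (2 + (5 / 2 - s.re)) ≤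
        (4 + 4 * (C * 2)) * Real.sqrt (1 + ‖s‖) := by
      have h3 : ‖GG s0‖ * (2 + (5 / 2 - s.re)) ≤ ‖GG s0‖ * 4 := by
        gcongr; linarith
      nlinarith
    refine (div_le_div₀ (by positivity) hn hδ hd).trans ?_
    rw [add_mul C, div_mul_eq_mul_div]
    have : 0 ≤ C * Real.sqrt (1 + ‖s‖) := by positivity
    linarith
  · intro z hz
    have hm : s0 + z ∈ Metric.ball s0 2 := by simpa [Metric.mem_ball, dist_eq_norm] using hz
    have h1 : DifferentiableAt ℂ GG (s0 + z) := GG_differentiableAt (xiF_ne_zero_of_RH hRH (hball _ hm))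
    exact (DifferentiableAt.comp z h1 (by fun_prop)).neg.differentiableWithinAt
  · intro z hz
    have hm : s0 + z ∈ Metric.ball s0 2 := by simpa [Metric.mem_ball, dist_eq_norm] using hz
    have := GG_re_nonneg hRH (hball _ hm)
    show (-GG (s0 + z)).re ≤ 1
    simp
    linarith
  · rw [mem_ball_zero_iff, hzn]; linarith

lemma GG_conj {s : ℂ} (hs : xiF s ≠ 0) : GG ((starRingEnd ℂ) s) = (starRingEnd ℂ) (GG s) := by
  have h1 := (xiF_hasDerivAt hs).conj_conj
  have e : ((starRingEnd ℂ) ∘ xiF ∘ (starRingEnd ℂ)) = xiF := by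
    funext w
    simp [xiF_conj]
  rw [e] at h1
  have hs' : xiF ((starRingEnd ℂ) s) ≠ 0 := by rw [xiF_conj]; simpa using hs
  have h2 := h1.unique (xiF_hasDerivAt hs')
  rw [map_mul, ← xiF_conj] at h2
  exact (mul_right_cancel₀ hs' h2).symm

lemma norm_add_I_lower {z : ℂ} (hz : 0 < z.re) (t : ℝ) :
    z.re / (1 + ‖z‖ + z.re) * (1 + |t|) ≤ ‖z + t * I‖ := by
  have h1 : z.re ≤ ‖z + t * I‖ := by
    have := Complex.re_le_norm (z + t * I)
    simpa using this
  have h2 : |t| - ‖z‖ ≤ ‖z + t * I‖ := by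
    have := norm_sub_norm_le (t * I) (-z)
    simp at this
    rw [add_comm]; linarith
  have := norm_nonneg z
  rw [div_mul_eq_mul_div, div_le_iff₀ (by positivity)]
  nlinarith

lemma norm_sq_add_lower {z : ℂ} (hz : 0 < z.re) (t : ℝ) :
    (z.re / (1 + ‖z‖ + z.re)) ^ 2 * (1 + |t|) ^ 2 ≤ ‖z ^ 2 + (t : ℂ) ^ 2‖ := by
  have e : z ^ 2 + (t : ℂ) ^ 2 = (z + t * I) * (z + (-t : ℝ) * I) := by
    push_cast
    ring_nf
    simp
  rw [e, norm_mul]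
  have h1 := norm_add_I_lower hz t
  have h2 := norm_add_I_lower hz (-t)
  rw [abs_neg] at h2
  have h0 : 0 ≤ z.re / (1 + ‖z‖ + z.re) * (1 + |t|) := by have := norm_nonneg z; positivity
  calc _ = (z.re / (1 + ‖z‖ + z.re) * (1 + |t|)) * (z.re / (1 + ‖z‖ + z.re) * (1 + |t|)) := by ring
    _ ≤ _ := by gcongr

lemma sq_add_ne {z : ℂ} (hz : 0 < z.re) (t : ℝ) : z ^ 2 + (t : ℂ) ^ 2 ≠ 0 := by
  rw [← norm_pos_iff]
  refine lt_of_lt_of_le ?_ (norm_sq_add_lower hz t)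
  have := norm_nonneg z
  positivity

lemma int_sqrt : MeasureTheory.Integrable (fun t : ℝ => Real.sqrt (1 + |t|) / (1 + |t|) ^ 2) := by
  have := integrable_one_add_norm (E := ℝ) (μ := MeasureTheory.volume) (r := 3 / 2) (by simp; norm_num)
  refine this.congr (Eventually.of_forall fun t => ?_)
  have h : 0 < 1 + |t| := by positivity
  simp only [Real.norm_eq_abs]
  rw [Real.sqrt_eq_rpow, ← Real.rpow_natCast, ← Real.rpow_sub h]
  norm_num

lemma kernel_integrable {H : ℝ → ℂ} (hc : Continuous H) {C : ℝ} (hC : 0 ≤ C)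
    (hb : ∀ t, ‖H t‖ ≤ C * Real.sqrt (1 + |t|)) {z : ℂ} (hz : 0 < z.re) :
    MeasureTheory.Integrable (fun t : ℝ => H t * (z / (z ^ 2 + (t : ℂ) ^ 2))) := by
  set c := (z.re / (1 + ‖z‖ + z.re)) ^ 2 with hcdef
  have hcpos : 0 < c := by have := norm_nonneg z; positivity
  refine MeasureTheory.Integrable.mono' (int_sqrt.const_mul (C * (‖z‖ / c))) ?_
    (Eventually.of_forall fun t => ?_)
  · refine Continuous.aestronglyMeasurable ?_
    refine hc.mul (continuous_const.div (by fun_prop) fun t => sq_add_ne hz t)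
  · rw [norm_mul, norm_div]
    have h1 := norm_sq_add_lower hz t
    have h2 : ‖z‖ / ‖z ^ 2 + (t : ℂ) ^ 2‖ ≤ ‖z‖ / (c * (1 + |t|) ^ 2) := by
      gcongr
    calc _ ≤ (C * Real.sqrt (1 + |t|)) * (‖z‖ / (c * (1 + |t|) ^ 2)) := by
          gcongr
          exact hb t
      _ = _ := by field_simp

lemma int_kernel {z : ℂ} (hz : 0 < z.re) : ∫ t : ℝ, z / (z ^ 2 + (t : ℂ) ^ 2) = Real.pi := by
  have hinteg : MeasureTheory.Integrable (fun t : ℝ => z / (z ^ 2 + (t : ℂ) ^ 2)) := by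
    have := kernel_integrable (H := fun _ => 1) continuous_const (C := 1) (by norm_num) (fun t => by
      simp) hz
    simpa using this
  have ht := MeasureTheory.intervalIntegral_tendsto_integral hinteg tendsto_neg_atTop_atBot tendsto_id
  refine tendsto_nhds_unique ht ?_
  have hp : ∀ t : ℝ, z + t * I ∈ Complex.slitPlane := fun t => Or.inl (by simpa using hz)
  have hm : ∀ t : ℝ, z - t * I ∈ Complex.slitPlane := fun t => Or.inl (by simpa using hz)
  have hder : ∀ t : ℝ, HasDerivAt (fun t : ℝ => (Complex.log (z + t * I) - Complex.log (z - t * I)) / (2 * I))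
      (z / (z ^ 2 + (t : ℂ) ^ 2)) t := by
    intro t
    have h0 : HasDerivAt (fun t : ℝ => (t : ℂ) * I) I t := by
      simpa using (Complex.ofRealCLM.hasDerivAt (x := t)).mul_const I
    have h1 := (h0.const_add z).clog_real (hp t)
    have h2 := (h0.const_sub z).clog_real (hm t)
    have h3 := (h1.sub h2).div_const (2 * I)
    convert! h3 using 1
    have n1 := Complex.slitPlane_ne_zero (hp t)
    have n2 := Complex.slitPlane_ne_zero (hm t)
    have n3 : z ^ 2 + (t : ℂ) ^ 2 = (z + t * I) * (z - t * I) := by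
      ring_nf; simp
    rw [n3]
    field_simp
    ring
  have hI : ∀ R : ℝ, ∫ t in (-R)..R, z / (z ^ 2 + (t : ℂ) ^ 2) =
      (Complex.log (z + R * I) - Complex.log (z - R * I)) / I := by
    intro R
    rw [intervalIntegral.integral_eq_sub_of_hasDerivAt (fun t _ => hder t) hinteg.intervalIntegrable]
    push_cast
    have : z + -(R : ℂ) * I = z - R * I := by ring
    rw [this]
    have : z - -(R : ℂ) * I = z + R * I := by ring
    rw [this]
    field_simp
    ring
  simp only [id]
  have hlim : Tendsto (fun R : ℝ => (Complex.log (z / R + I) - Complex.log (z / R - I)) / I) atTop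
      (𝓝 ((Complex.log I - Complex.log (-I)) / I)) := by
    have h0 : Tendsto (fun R : ℝ => z / (R : ℂ)) atTop (𝓝 0) := by
      have h9 : Tendsto (fun R : ℝ => ((R⁻¹ : ℝ) : ℂ)) atTop (𝓝 ((0 : ℝ) : ℂ)) :=
        (Complex.continuous_ofReal.tendsto 0).comp tendsto_inv_atTop_zero
      have := h9.const_mul z
      simpa [div_eq_mul_inv] using this
    have h1 : Tendsto (fun R : ℝ => Complex.log (z / R + I)) atTop (𝓝 (Complex.log I)) := by
      have : Tendsto (fun R : ℝ => z / (R : ℂ) + I) atTop (𝓝 I) := by simpa using h0.add_const I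
      exact this.clog (by simp [Complex.slitPlane])
    have h2 : Tendsto (fun R : ℝ => Complex.log (z / R - I)) atTop (𝓝 (Complex.log (-I))) := by
      have : Tendsto (fun R : ℝ => z / (R : ℂ) - I) atTop (𝓝 (-I)) := by simpa using h0.sub_const I
      exact this.clog (by simp [Complex.slitPlane])
    exact (h1.sub h2).div_const I
  have hval : (Complex.log I - Complex.log (-I)) / I = Real.pi := by
    rw [Complex.log_I, Complex.log_neg_I]; field_simp; ring
  rw [hval] at hlim
  refine hlim.congr' ?_
  filter_upwards [eventually_gt_atTop 0] with R hR
  rw [hI R]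
  have hRc : (R : ℂ) ≠ 0 := by exact_mod_cast hR.ne'
  have a1 : z + R * I = (R : ℂ) * (z / R + I) := by field_simp
  have a2 : z - R * I = (R : ℂ) * (z / R - I) := by field_simp
  have b1 : z / R + I ≠ 0 := fun h => by
    have := Complex.slitPlane_ne_zero (hp R); rw [a1, h] at this; simp at this
  have b2 : z / R - I ≠ 0 := fun h => by
    have := Complex.slitPlane_ne_zero (hm R); rw [a2, h] at this; simp at this
  rw [a1, a2, Complex.log_ofReal_mul hR b1, Complex.log_ofReal_mul hR b2]
  ring


open Complex Filter Topology

lemma poisson_half {H : ℂ → ℂ} (hd : ∀ ζ : ℂ, 0 ≤ ζ.re → DifferentiableAt ℂ H ζ) {C : ℝ} (hC : 0 ≤ C)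
    (hb : ∀ ζ : ℂ, 0 ≤ ζ.re → ‖H ζ‖ ≤ C * Real.sqrt (1 + ‖ζ‖)) {z : ℂ} (hz : 0 < z.re) :
    ∫ t : ℝ, H (t * I) * (z / (z ^ 2 + (t : ℂ) ^ 2)) = Real.pi * H z := by
  have hHc : Continuous (fun t : ℝ => H (t * I)) := by
    rw [continuous_iff_continuousAt]
    intro t
    have h1 : ContinuousAt H ((t : ℂ) * I) := (hd _ (by simp)).continuousAt
    exact ContinuousAt.comp (f := fun t : ℝ => (t : ℂ) * I) h1 (by fun_prop)
  have hi1 := kernel_integrable hHc hC (fun t => by simpa using hb (t * I) (by simp)) hz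
  have hi2 : MeasureTheory.Integrable (fun t : ℝ => H z * (z / (z ^ 2 + (t : ℂ) ^ 2))) := by
    have := kernel_integrable (H := fun _ => 1) continuous_const (C := 1) (by norm_num) (fun t => by
      simp) hz
    simpa using this.const_mul (H z)
  suffices hs : ∫ t : ℝ, (H (t * I) * (z / (z ^ 2 + (t : ℂ) ^ 2)) - H z * (z / (z ^ 2 + (t : ℂ) ^ 2))) = 0 by
    rw [MeasureTheory.integral_sub hi1 hi2, MeasureTheory.integral_const_mul, int_kernel hz, sub_eq_zero] at hs
    rw [hs, mul_comm]
  set f : ℂ → ℂ := fun ζ => dslope H z ζ * (z / (ζ + z)) with hf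
  have hfe : ∀ t : ℝ, H (t * I) * (z / (z ^ 2 + (t : ℂ) ^ 2)) - H z * (z / (z ^ 2 + (t : ℂ) ^ 2)) =
      - f (t * I) := by
    intro t
    have hne : (t : ℂ) * I ≠ z := fun h => by rw [← h] at hz; simp at hz
    have hne2 : (t : ℂ) * I + z ≠ 0 := fun h => by
      have := congrArg Complex.re h; simp at this; linarith
    rw [hf]
    simp only
    rw [dslope_of_ne _ hne, slope_def_field]
    have e : z ^ 2 + (t : ℂ) ^ 2 = -((t * I - z) * (t * I + z)) := by ring_nf; simp
    rw [e]
    have h3 := sub_ne_zero.2 hne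
    field_simp
    ring
  have hfd : DifferentiableOn ℂ f {ζ | 0 ≤ ζ.re} := by
    have hn : {ζ : ℂ | 0 ≤ ζ.re} ∈ 𝓝 z := by
      filter_upwards [(isOpen_lt continuous_const Complex.continuous_re).mem_nhds hz] with w hw
      exact le_of_lt hw
    have h1 : DifferentiableOn ℂ (dslope H z) {ζ | 0 ≤ ζ.re} :=
      (Complex.differentiableOn_dslope hn).2 fun ζ h => (hd ζ h).differentiableWithinAt
    refine h1.mul ?_
    refine DifferentiableOn.div (by fun_prop) (by fun_prop) fun ζ h hc => ?_
    have := congrArg Complex.re hc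
    simp at this
    have h' : 0 ≤ ζ.re := h
    linarith
  -- bound
  set K : ℝ := (C * 2 + ‖H z‖) * (‖z‖ * 4) with hK
  have hK0 : 0 ≤ K := by positivity
  have hfb : ∀ R : ℝ, 1 + 2 * ‖z‖ ≤ R → ∀ ζ : ℂ, 0 ≤ ζ.re → R ≤ ‖ζ‖ → ‖ζ‖ ≤ 2 * R →
      ‖f ζ‖ ≤ K * (Real.sqrt R / R ^ 2) := by
    intro R hR ζ h0 h1 h2
    have hzn := norm_nonneg z
    have hR1 : 1 ≤ R := by linarith
    have hzp : 0 < ‖z‖ := norm_pos_iff.2 (fun h => by rw [h] at hz; simp at hz)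
    have hne : ζ ≠ z := fun h => by rw [h] at h1; linarith
    have a1 : R / 2 ≤ ‖ζ - z‖ := by have := norm_sub_norm_le ζ z; linarith
    have a2 : R / 2 ≤ ‖ζ + z‖ := by
      have := norm_sub_norm_le ζ (-z); rw [norm_neg, sub_neg_eq_add] at this; linarith
    have hsq : Real.sqrt (1 + ‖ζ‖) ≤ 2 * Real.sqrt R := by
      have : Real.sqrt (1 + ‖ζ‖) ≤ Real.sqrt (2 ^ 2 * R) := Real.sqrt_le_sqrt (by linarith)
      rwa [Real.sqrt_mul (by positivity), Real.sqrt_sq (by norm_num)] at this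
    have hs1 : 1 ≤ Real.sqrt R := by rwa [Real.one_le_sqrt]
    have a3 : ‖H ζ - H z‖ ≤ (C * 2 + ‖H z‖) * Real.sqrt R := by
      refine (norm_sub_le _ _).trans ?_
      have := hb ζ h0
      have : C * Real.sqrt (1 + ‖ζ‖) ≤ C * (2 * Real.sqrt R) := by gcongr
      have : ‖H z‖ ≤ ‖H z‖ * Real.sqrt R := le_mul_of_one_le_right (norm_nonneg _) hs1
      linarith
    rw [hf]
    simp only
    rw [dslope_of_ne _ hne, slope_def_field, norm_mul, norm_div, norm_div]
    calc _ ≤ ((C * 2 + ‖H z‖) * Real.sqrt R) / (R / 2) * (‖z‖ / (R / 2)) := by gcongr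
      _ = _ := by rw [hK]; field_simp; ring
  have hbnd : ∀ R : ℝ, 1 + 2 * ‖z‖ ≤ R → ‖∫ y in (-R)..R, f (y * I)‖ ≤ 4 * K * (Real.sqrt R / R) := by
    intro R hR
    have hzn := norm_nonneg z
    have hR0 : 0 < R := by linarith
    have hc := Complex.integral_boundary_rect_eq_zero_of_differentiableOn f (⟨0, -R⟩) (⟨R, R⟩)
      (hfd.mono ?_)
    · simp only [Complex.ofReal_zero, zero_add] at hc
      have b1 : ‖∫ x in (0:ℝ)..R, f (x + ((-R : ℝ) : ℂ) * I)‖ ≤ (K * (Real.sqrt R / R ^ 2)) * |R - 0| := by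
        refine intervalIntegral.norm_integral_le_of_norm_le_const fun x hx => ?_
        rw [Set.uIoc_of_le hR0.le] at hx
        refine hfb R hR _ (by simpa using hx.1.le) ?_ ?_
        · have := Complex.abs_im_le_norm (x + ((-R : ℝ) : ℂ) * I)
          simp at this
          rw [abs_of_pos hR0] at this
          simpa using this
        · refine (norm_add_le _ _).trans ?_
          simp
          rw [abs_of_pos hR0, abs_of_pos hx.1]
          linarith [hx.2]
      have b2 : ‖∫ x in (0:ℝ)..R, f (x + (R : ℂ) * I)‖ ≤ (K * (Real.sqrt R / R ^ 2)) * |R - 0| := by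
        refine intervalIntegral.norm_integral_le_of_norm_le_const fun x hx => ?_
        rw [Set.uIoc_of_le hR0.le] at hx
        refine hfb R hR _ (by simpa using hx.1.le) ?_ ?_
        · have := Complex.abs_im_le_norm (x + (R : ℂ) * I)
          simp at this
          rw [abs_of_pos hR0] at this
          simpa using this
        · refine (norm_add_le _ _).trans ?_
          simp
          rw [abs_of_pos hR0, abs_of_pos hx.1]
          linarith [hx.2]
      have b3 : ‖∫ y in (-R)..R, f (R + (y : ℂ) * I)‖ ≤ (K * (Real.sqrt R / R ^ 2)) * |R - -R| := by
        refine intervalIntegral.norm_integral_le_of_norm_le_const fun y hy => ?_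
        rw [Set.uIoc_of_le (by linarith)] at hy
        refine hfb R hR _ (by simpa using hR0.le) ?_ ?_
        · have := Complex.re_le_norm (R + (y : ℂ) * I)
          simpa using this
        · refine (norm_add_le _ _).trans ?_
          simp
          rw [abs_of_pos hR0]
          have : |y| ≤ R := abs_le.2 ⟨hy.1.le, hy.2⟩
          linarith
      set A1 := ∫ x in (0:ℝ)..R, f (x + ((-R : ℝ) : ℂ) * I)
      set A2 := ∫ x in (0:ℝ)..R, f (x + (R : ℂ) * I)
      set A3 := ∫ y in (-R)..R, f (R + (y : ℂ) * I)
      set A4 := ∫ y in (-R)..R, f ((y : ℂ) * I)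
      have e : I • A4 = A1 - A2 + I • A3 := (sub_eq_zero.1 hc).symm
      have e2 : ‖A4‖ = ‖I • A4‖ := by simp
      rw [e2, e]
      refine (norm_add_le _ _).trans ?_
      have := norm_sub_le A1 A2
      have e3 : ‖I • A3‖ = ‖A3‖ := by simp
      rw [e3]
      rw [sub_zero, abs_of_pos hR0] at b1 b2
      rw [abs_of_pos (by linarith)] at b3
      have e4 : 4 * K * (Real.sqrt R / R) = (K * (Real.sqrt R / R ^ 2)) * R + (K * (Real.sqrt R / R ^ 2)) * R +
          (K * (Real.sqrt R / R ^ 2)) * (R - -R) := by field_simp; ring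
      linarith
    · intro ζ hζ
      have := hζ.1
      simp only [Set.mem_preimage] at this
      rw [Set.uIcc_of_le hR0.le] at this
      exact this.1
  have hinteg : MeasureTheory.Integrable (fun t : ℝ => f (t * I)) := by
    have := (hi1.sub hi2).neg
    refine this.congr (Eventually.of_forall fun t => ?_)
    simp [hfe t]
  simp only [hfe]
  rw [MeasureTheory.integral_neg, neg_eq_zero]
  have ht := MeasureTheory.intervalIntegral_tendsto_integral hinteg tendsto_neg_atTop_atBot tendsto_id
  refine tendsto_nhds_unique ht ?_
  rw [tendsto_zero_iff_norm_tendsto_zero]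
  have hlim : Tendsto (fun R : ℝ => 4 * K * (Real.sqrt R / R)) atTop (𝓝 0) := by
    have : Tendsto (fun R : ℝ => 4 * K * (R ^ (-(1/2) : ℝ))) atTop (𝓝 (4 * K * 0)) :=
      (tendsto_rpow_neg_atTop (by norm_num)).const_mul _
    rw [mul_zero] at this
    refine this.congr' ?_
    filter_upwards [eventually_gt_atTop 0] with R hR
    rw [Real.sqrt_eq_rpow, ← Real.rpow_sub_one hR.ne']
    norm_num
  refine squeeze_zero' (Eventually.of_forall fun _ => norm_nonneg _) ?_ hlim
  filter_upwards [eventually_ge_atTop (1 + 2 * ‖z‖)] with R hR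
  exact hbnd R hR

/-- Only the real part on the boundary matters, by symmetry. -/
lemma poisson_re {H : ℂ → ℂ} (hd : ∀ ζ : ℂ, 0 ≤ ζ.re → DifferentiableAt ℂ H ζ) {C : ℝ} (hC : 0 ≤ C)
    (hb : ∀ ζ : ℂ, 0 ≤ ζ.re → ‖H ζ‖ ≤ C * Real.sqrt (1 + ‖ζ‖))
    (hconj : ∀ t : ℝ, H (-(t * I)) = (starRingEnd ℂ) (H (t * I))) {z : ℂ} (hz : 0 < z.re) :
    ∫ t : ℝ, ((H (t * I)).re : ℂ) * (z / (z ^ 2 + (t : ℂ) ^ 2)) = Real.pi * H z := by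
  have hHc : Continuous (fun t : ℝ => H (t * I)) := by
    rw [continuous_iff_continuousAt]
    intro t
    have h1 : ContinuousAt H ((t : ℂ) * I) := (hd _ (by simp)).continuousAt
    exact ContinuousAt.comp (f := fun t : ℝ => (t : ℂ) * I) h1 (by fun_prop)
  have hi1 := kernel_integrable hHc hC (fun t => by simpa using hb (t * I) (by simp)) hz
  have h := poisson_half hd hC hb hz
  have h2 : ∫ t : ℝ, H (-(t * I)) * (z / (z ^ 2 + (t : ℂ) ^ 2)) = Real.pi * H z := by
    rw [← h, ← MeasureTheory.integral_neg_eq_self]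
    congr 1
    funext t
    simp
  have hi2 : MeasureTheory.Integrable (fun t : ℝ => H (-(t * I)) * (z / (z ^ 2 + (t : ℂ) ^ 2))) := by
    have := hi1.comp_neg
    refine this.congr (Eventually.of_forall fun t => ?_)
    simp
  have h3 : ∫ t : ℝ, (H (t * I) * (z / (z ^ 2 + (t : ℂ) ^ 2)) + H (-(t * I)) * (z / (z ^ 2 + (t : ℂ) ^ 2))) / 2 =
      Real.pi * H z := by
    rw [MeasureTheory.integral_div, MeasureTheory.integral_add hi1 hi2, h, h2]; ring
  rw [← h3]
  congr 1
  funext t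
  rw [hconj, ← add_mul, Complex.add_conj]
  push_cast
  ring


open Complex Filter Topology

/-- `HL f s v`: the Laplace transform of `f` at `s` converges absolutely and equals `v`. -/
def HL (f : ℝ → ℂ) (s v : ℂ) : Prop :=
  MeasureTheory.IntegrableOn (fun u : ℝ => f u * Complex.exp (-(s * u))) (Set.Ioi 0) ∧
    ∫ u in Set.Ioi (0 : ℝ), f u * Complex.exp (-(s * u)) = v

lemma HL.add {f g : ℝ → ℂ} {s v w : ℂ} (hf : HL f s v) (hg : HL g s w) :
    HL (fun u => f u + g u) s (v + w) := by
  refine ⟨?_, ?_⟩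
  · simp only [add_mul]; exact hf.1.add hg.1
  · simp only [add_mul]; rw [MeasureTheory.integral_add hf.1 hg.1, hf.2, hg.2]

lemma HL.const_mul {f : ℝ → ℂ} {s v : ℂ} (c : ℂ) (hf : HL f s v) :
    HL (fun u => c * f u) s (c * v) := by
  refine ⟨?_, ?_⟩
  · simp only [mul_assoc]; exact hf.1.const_mul c
  · simp only [mul_assoc]; rw [MeasureTheory.integral_const_mul, hf.2]

lemma HL.congr {f g : ℝ → ℂ} {s v : ℂ} (hf : HL f s v) (h : ∀ u, 0 < u → f u = g u) : HL g s v := by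
  have he : Set.EqOn (fun u : ℝ => f u * Complex.exp (-(s * u))) (fun u : ℝ => g u * Complex.exp (-(s * u)))
    (Set.Ioi 0) := fun u hu => by simp only [h u hu]
  refine ⟨hf.1.congr_fun he measurableSet_Ioi, ?_⟩
  rw [← MeasureTheory.setIntegral_congr_fun measurableSet_Ioi he, hf.2]

lemma HL.sub {f g : ℝ → ℂ} {s v w : ℂ} (hf : HL f s v) (hg : HL g s w) :
    HL (fun u => f u - g u) s (v - w) := by
  have := hf.add (hg.const_mul (-1))
  convert! this using 1
  · funext u; ring
  · ring

lemma HL_exp {a s : ℂ} (h : a.re < s.re) : HL (fun u => Complex.exp (a * u)) s (1 / (s - a)) := by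
  have hre : (a - s).re < 0 := by simp; exact h
  have e : ∀ u : ℝ, Complex.exp (a * u) * Complex.exp (-(s * u)) = Complex.exp ((a - s) * u) := by
    intro u; rw [← Complex.exp_add]; congr 1; ring
  refine ⟨?_, ?_⟩
  · simp only [e]; exact integrableOn_exp_mul_complex_Ioi hre 0
  · simp only [e]
    rw [integral_exp_mul_complex_Ioi hre 0]
    have h1 : a - s ≠ 0 := fun h0 => by rw [h0] at hre; simp at hre
    have h2 : s - a ≠ 0 := fun h0 => by apply h1; rw [← neg_sub, h0, neg_zero]
    simp
    rw [← neg_sub s a, neg_div_neg_eq, one_div]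

lemma HL_one {s : ℂ} (h : 0 < s.re) : HL (fun _ => 1) s (1 / s) := by
  have := HL_exp (a := 0) (s := s) (by simpa using h)
  simpa using this

lemma HL_id {s : ℂ} (h : 0 < s.re) : HL (fun u => (u : ℂ)) s (1 / s ^ 2) := by
  have hs : s ≠ 0 := fun h0 => by rw [h0] at h; simp at h
  have hle : ∀ u : ℝ, 0 ≤ u → u ≤ 2 / s.re * Real.exp (s.re / 2 * u) := by
    intro u hu
    have := Real.add_one_le_exp (s.re / 2 * u)
    rw [div_mul_eq_mul_div, le_div_iff₀ h]
    nlinarith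
  have hre : ∀ u : ℝ, ‖Complex.exp (-(s * u))‖ = Real.exp (-(s.re * u)) := by
    intro u; rw [Complex.norm_exp]; simp
  have hbd : ∀ u : ℝ, 0 ≤ u → ‖(u : ℂ) * Complex.exp (-(s * u))‖ ≤
      2 / s.re * Real.exp (-(s.re / 2) * u) := by
    intro u hu
    rw [norm_mul, hre, Complex.norm_real, Real.norm_of_nonneg hu]
    calc _ ≤ (2 / s.re * Real.exp (s.re / 2 * u)) * Real.exp (-(s.re * u)) := by
          gcongr; exact hle u hu
      _ = _ := by rw [mul_assoc, ← Real.exp_add]; congr 2; ring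
  have hinteg : MeasureTheory.IntegrableOn (fun u : ℝ => (u : ℂ) * Complex.exp (-(s * u))) (Set.Ioi 0) := by
    refine MeasureTheory.Integrable.mono'
      ((integrableOn_exp_mul_Ioi (a := -(s.re / 2)) (by linarith) 0).const_mul (2 / s.re)) ?_ ?_
    · exact Continuous.aestronglyMeasurable (by fun_prop)
    · rw [MeasureTheory.ae_restrict_iff' measurableSet_Ioi]
      exact Eventually.of_forall fun u hu => hbd u (le_of_lt hu)
  refine ⟨hinteg, ?_⟩
  have hder : ∀ u : ℝ, HasDerivAt (fun u : ℝ => -((u : ℂ) * Complex.exp (-(s * u)) / s +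
      Complex.exp (-(s * u)) / s ^ 2)) ((u : ℂ) * Complex.exp (-(s * u))) u := by
    intro u
    have h0 : HasDerivAt (fun u : ℝ => (u : ℂ)) 1 u := by
      exact (hasDerivAt_id u).ofReal_comp
    have h1 : HasDerivAt (fun u : ℝ => Complex.exp (-(s * u))) (Complex.exp (-(s * u)) * (-(s * 1))) u :=
      ((h0.const_mul s).neg).cexp
    have h2 := (((h0.mul h1).div_const s).add (h1.div_const (s ^ 2))).neg
    convert! h2 using 1
    field_simp
    ring
  have hlim0 : Tendsto (fun u : ℝ => Real.exp (-(s.re / 2) * u)) atTop (𝓝 0) := by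
    refine Real.tendsto_exp_atBot.comp ?_
    exact tendsto_id.const_mul_atTop_of_neg (by linarith)
  have l1 : Tendsto (fun u : ℝ => (u : ℂ) * Complex.exp (-(s * u))) atTop (𝓝 0) := by
    rw [tendsto_zero_iff_norm_tendsto_zero]
    have := hlim0.const_mul (2 / s.re)
    rw [mul_zero] at this
    refine squeeze_zero' (Eventually.of_forall fun _ => norm_nonneg _) ?_ this
    filter_upwards [eventually_ge_atTop 0] with u hu
    exact hbd u hu
  have l2 : Tendsto (fun u : ℝ => Complex.exp (-(s * u))) atTop (𝓝 0) := by
    rw [tendsto_zero_iff_norm_tendsto_zero]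
    refine squeeze_zero' (Eventually.of_forall fun _ => norm_nonneg _) ?_ hlim0
    filter_upwards [eventually_ge_atTop 0] with u hu
    rw [hre]
    gcongr
    nlinarith
  have hl := ((l1.div_const s).add (l2.div_const (s ^ 2))).neg
  rw [MeasureTheory.integral_Ioi_of_hasDerivAt_of_tendsto' (fun u _ => hder u) hinteg hl]
  simp

lemma HL_shift {s : ℂ} (h : 0 < s.re) {L : ℝ} (hL : 0 ≤ L) :
    HL (fun u => ((max (u - L) 0 : ℝ) : ℂ)) s (Complex.exp (-(s * L)) * (1 / s ^ 2)) := by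
  obtain ⟨h1, h2⟩ := HL_id h
  set F : ℝ → ℂ := Set.indicator (Set.Ioi 0) (fun v : ℝ => (v : ℂ) * Complex.exp (-(s * v))) with hF
  have hFi : MeasureTheory.Integrable F := (MeasureTheory.integrable_indicator_iff measurableSet_Ioi).2 h1
  have hFv : ∫ v, F v = 1 / s ^ 2 := by rw [hF, MeasureTheory.integral_indicator measurableSet_Ioi, h2]
  have he : Set.indicator (Set.Ioi 0) (fun u : ℝ => ((max (u - L) 0 : ℝ) : ℂ) * Complex.exp (-(s * u))) =
      fun u => Complex.exp (-(s * L)) * F (u - L) := by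
    funext u
    simp only [hF, Set.indicator, Set.mem_Ioi]
    by_cases hu : 0 < u - L
    · have : 0 < u := by linarith
      rw [if_pos this, if_pos hu, max_eq_left hu.le]
      have : -(s * u) = -(s * L) + -(s * ((u - L : ℝ) : ℂ)) := by push_cast; ring
      rw [this, Complex.exp_add]; ring
    · rw [if_neg hu, max_eq_right (by linarith)]
      simp
  refine ⟨?_, ?_⟩
  · rw [← MeasureTheory.integrable_indicator_iff measurableSet_Ioi, he]
    exact (hFi.comp_sub_right L).const_mul _
  · rw [← MeasureTheory.integral_indicator measurableSet_Ioi, he, MeasureTheory.integral_const_mul,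
      MeasureTheory.integral_sub_right_eq_self, hFv]

lemma HL_tsum {f : ℕ → ℝ → ℝ} {w : ℕ → ℝ} (hc : ∀ n, ContinuousOn (f n) (Set.Ici 0))
    (hb : ∀ n u, 0 ≤ u → |f n u| ≤ w n * Real.exp (2 * u)) (hw : Summable w) :
    ContinuousOn (fun u => ∑' n, f n u) (Set.Ici 0) ∧ ∀ (s : ℂ) (v : ℕ → ℂ), s.re = 3 →
      (∀ n, HL (fun u => (f n u : ℂ)) s (v n)) → HL (fun u => ((∑' n, f n u : ℝ) : ℂ)) s (∑' n, v n) := by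
  have hcont : ContinuousOn (fun u => ∑' n, f n u) (Set.Ici 0) := by
    have h1 : ContinuousOn (fun u => ∑' n, f n u * Real.exp (-(2 * u))) (Set.Ici 0) := by
      refine continuousOn_tsum (fun n => (hc n).mul (by fun_prop)) hw (fun n u hu => ?_)
      rw [norm_mul, Real.norm_eq_abs, Real.norm_eq_abs, Real.abs_exp, Real.exp_neg, ← div_eq_mul_inv,
        div_le_iff₀ (Real.exp_pos _)]
      exact hb n u hu
    have h2 : ContinuousOn (fun u => (∑' n, f n u * Real.exp (-(2 * u))) * Real.exp (2 * u)) (Set.Ici 0) :=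
      h1.mul (by fun_prop)
    refine h2.congr fun u hu => ?_
    simp only
    rw [← tsum_mul_right]
    congr 1
    funext n
    rw [mul_assoc, ← Real.exp_add]
    simp
  refine ⟨hcont, fun s v hs hv => ?_⟩
  have hnorm : ∀ n (u : ℝ), 0 < u → ‖(f n u : ℂ) * Complex.exp (-(s * u))‖ ≤ w n * Real.exp (-1 * u) := by
    intro n u hu
    rw [norm_mul, Complex.norm_real, Complex.norm_exp, Real.norm_eq_abs]
    have h1 : (-(s * u)).re = -(3 * u) := by simp [hs]
    rw [h1]
    calc _ ≤ (w n * Real.exp (2 * u)) * Real.exp (-(3 * u)) := by gcongr; exact hb n u hu.le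
      _ = _ := by rw [mul_assoc, ← Real.exp_add]; congr 2; ring
  have hexp : MeasureTheory.IntegrableOn (fun u : ℝ => Real.exp (-1 * u)) (Set.Ioi 0) :=
    integrableOn_exp_mul_Ioi (by norm_num) 0
  have hw0 : ∀ n, 0 ≤ w n := fun n => by
    have := (abs_nonneg _).trans (hb n 0 le_rfl)
    simpa using this
  have hsumf : ∀ u, 0 ≤ u → Summable (fun n => f n u) := fun u hu =>
    Summable.of_norm_bounded (hw.mul_right (Real.exp (2 * u))) (fun n => hb n u hu)
  have hS : Summable fun n => ∫ u in Set.Ioi (0 : ℝ), ‖(f n u : ℂ) * Complex.exp (-(s * u))‖ := by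
    refine Summable.of_nonneg_of_le (fun n => MeasureTheory.integral_nonneg fun u => norm_nonneg _) (fun n => ?_)
      (hw.mul_right (∫ u in Set.Ioi (0 : ℝ), Real.exp (-1 * u)))
    rw [← MeasureTheory.integral_const_mul]
    exact MeasureTheory.setIntegral_mono_on (hv n).1.norm (hexp.const_mul _) measurableSet_Ioi
      (fun u hu => hnorm n u hu)
  have h := MeasureTheory.hasSum_integral_of_summable_integral_norm (fun n => (hv n).1) hS
  have e : ∀ u : ℝ, ∑' n, (f n u : ℂ) * Complex.exp (-(s * u)) =
      ((∑' n, f n u : ℝ) : ℂ) * Complex.exp (-(s * u)) := by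
    intro u; rw [tsum_mul_right, Complex.ofReal_tsum]
  simp only [e] at h
  refine ⟨?_, ?_⟩
  · refine MeasureTheory.Integrable.mono' (hexp.const_mul (∑' n, w n)) ?_ ?_
    · refine ContinuousOn.aestronglyMeasurable ?_ measurableSet_Ioi
      refine ContinuousOn.mul ?_ (by fun_prop)
      exact Complex.continuous_ofReal.comp_continuousOn (hcont.mono Set.Ioi_subset_Ici_self)
    · rw [MeasureTheory.ae_restrict_iff' measurableSet_Ioi]
      refine Eventually.of_forall fun u hu => ?_
      rw [← e, ← tsum_mul_right]
      exact tsum_of_norm_bounded (hw.mul_right _).hasSum (fun n => hnorm n u hu)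
  · rw [← h.tsum_eq]
    congr 1
    funext n
    exact (hv n).2

open FourierTransform in
lemma laplace_unique {D : ℝ → ℝ} (hc : ContinuousOn D (Set.Ici 0)) (h0 : D 0 = 0)
    (h : ∀ s : ℂ, s.re = 3 → HL (fun u => (D u : ℂ)) s 0) {u : ℝ} (hu : 0 ≤ u) : D u = 0 := by
  set E : ℝ → ℂ := fun u => (D (max u 0) : ℂ) * Complex.exp (-(3 * u)) with hE
  have hEc : Continuous E := by
    refine Continuous.mul ?_ (by fun_prop)
    refine Complex.continuous_ofReal.comp ?_
    exact hc.comp_continuous (by fun_prop) (fun u => Set.mem_Ici.2 (le_max_right _ _))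
  have hE0 : ∀ u, u ≤ 0 → E u = 0 := fun u hu => by simp [hE, max_eq_right hu, h0]
  have hind : ∀ G : ℝ → ℂ, (fun u => E u * G u) =
      Set.indicator (Set.Ioi 0) (fun u : ℝ => ((D u : ℂ) * Complex.exp (-(3 * u))) * G u) := by
    intro G
    funext u
    by_cases hu : 0 < u
    · rw [Set.indicator_of_mem (show u ∈ Set.Ioi 0 from hu), hE]
      simp only [max_eq_left hu.le]
    · rw [Set.indicator_of_notMem (show u ∉ Set.Ioi 0 from hu), hE0 u (not_lt.1 hu), zero_mul]
  have hEi : MeasureTheory.Integrable E := by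
    have := hind (fun _ => 1)
    simp only [mul_one] at this
    rw [show E = fun u => E u from rfl, this, MeasureTheory.integrable_indicator_iff measurableSet_Ioi]
    exact (h 3 (by simp)).1
  have hF : 𝓕 E = 0 := by
    funext w
    rw [Real.fourier_real_eq_integral_exp_smul]
    have e1 : ∀ v : ℝ, Complex.exp (((-2 * Real.pi * v * w : ℝ) : ℂ) * I) • E v =
        E v * Complex.exp (((-2 * Real.pi * v * w : ℝ) : ℂ) * I) := fun v => by
      rw [smul_eq_mul, mul_comm]
    simp only [e1]
    rw [hind, MeasureTheory.integral_indicator measurableSet_Ioi]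
    have h3 := (h (3 + (2 * Real.pi * w : ℝ) * I) (by simp)).2
    simp only [Pi.zero_apply]
    rw [← h3]
    congr 1
    funext v
    rw [mul_assoc, ← Complex.exp_add]
    congr 2
    push_cast
    ring
  have h4 := hEc.fourierInv_fourier_eq hEi (by rw [hF]; exact MeasureTheory.integrable_zero _ _ _)
  rw [hF] at h4
  have h5 : E u = 0 := by
    rw [← h4]
    simp [Real.fourierInv_eq']
  simp only [hE, max_eq_left hu] at h5
  rcases mul_eq_zero.1 h5 with h6 | h6
  · exact_mod_cast h6
  · exact absurd h6 (Complex.exp_ne_zero _)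


open Complex Filter Topology

lemma boundary_data (hRH : RH) {δ : ℝ} (hδ : 0 < δ) (hδ1 : δ ≤ 1 / 2) : ∃ g : ℝ → ℝ, Continuous g ∧ (∀ t, 0 ≤ g t) ∧
    (∃ C : ℝ, 0 ≤ C ∧ ∀ t, g t ≤ C * Real.sqrt (1 + |t|)) ∧
    ∀ z : ℂ, 0 < z.re → ∫ t : ℝ, (g t : ℂ) * (z / (z ^ 2 + (t : ℂ) ^ 2)) =
      Real.pi * GG (((1 / 2 + δ : ℝ) : ℂ) + z) := by
  obtain ⟨C, hC0, hC⟩ := GG_strip hRH hδ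
  set H : ℂ → ℂ := fun z => GG (((1 / 2 + δ : ℝ) : ℂ) + z) with hH
  have hne : ∀ ζ : ℂ, 0 ≤ ζ.re → xiF (((1 / 2 + δ : ℝ) : ℂ) + ζ) ≠ 0 := fun ζ h =>
    xiF_ne_zero_of_RH hRH (by rw [Complex.add_re, Complex.ofReal_re]; linarith)
  have hd : ∀ ζ : ℂ, 0 ≤ ζ.re → DifferentiableAt ℂ H ζ := fun ζ h =>
    DifferentiableAt.comp ζ (GG_differentiableAt (hne ζ h)) (by fun_prop)
  have hb : ∀ ζ : ℂ, 0 ≤ ζ.re → ‖H ζ‖ ≤ (C * 2) * Real.sqrt (1 + ‖ζ‖) := by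
    intro ζ h
    refine (hC _ (by rw [Complex.add_re, Complex.ofReal_re]; linarith)).trans ?_
    rw [mul_assoc]
    gcongr
    have h1 : ‖((1 / 2 + δ : ℝ) : ℂ) + ζ‖ ≤ 1 + ‖ζ‖ := by
      refine (norm_add_le _ _).trans ?_
      rw [Complex.norm_real, Real.norm_of_nonneg (by linarith)]
      linarith
    have : Real.sqrt (1 + ‖((1 / 2 + δ : ℝ) : ℂ) + ζ‖) ≤ Real.sqrt (2 ^ 2 * (1 + ‖ζ‖)) :=
      Real.sqrt_le_sqrt (by linarith [norm_nonneg ζ])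
    rwa [Real.sqrt_mul (by positivity), Real.sqrt_sq (by norm_num)] at this
  have hconj : ∀ t : ℝ, H (-(t * I)) = (starRingEnd ℂ) (H (t * I)) := by
    intro t
    rw [hH]
    simp only
    rw [← GG_conj (hne _ (by simp))]
    congr 1
    rw [map_add, Complex.conj_ofReal, map_mul, Complex.conj_ofReal, Complex.conj_I]
    ring
  refine ⟨fun t => (H (t * I)).re, ?_, ?_, ⟨C * 2, by positivity, ?_⟩, fun z hz => poisson_re hd (by positivity) hb hconj hz⟩
  · refine Complex.continuous_re.comp ?_
    rw [continuous_iff_continuousAt]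
    intro t
    have h1 : ContinuousAt H ((t : ℂ) * I) := (hd _ (by simp)).continuousAt
    exact ContinuousAt.comp (f := fun t : ℝ => (t : ℂ) * I) h1 (by fun_prop)
  · intro t
    exact GG_re_nonneg hRH (by simp; linarith)
  · intro t
    have h1 := hb (t * I) (by simp)
    have h2 : ‖(t : ℂ) * I‖ = |t| := by simp
    rw [h2] at h1
    exact (Complex.re_le_norm _).trans h1

/-- kernel -/
noncomputable def kap (b t u : ℝ) : ℝ :=
  ((Complex.exp ((b + t * I) * u) - 1 - (b + t * I) * u) / (b + t * I) ^ 2).re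

lemma bt_ne {b : ℝ} (hb : 0 < b) (t : ℝ) : (b + t * I : ℂ) ≠ 0 := fun h => by
  have := congrArg Complex.re h
  simp at this
  exact hb.ne' this

lemma bt_normSq (b t : ℝ) : Complex.normSq (b + t * I) = b ^ 2 + t ^ 2 := by
  rw [Complex.normSq_add_mul_I]

lemma bt_norm_sq (b t : ℝ) : ‖(b + t * I : ℂ)‖ ^ 2 = b ^ 2 + t ^ 2 := by
  rw [← Complex.normSq_eq_norm_sq, bt_normSq]

lemma kap_split {b : ℝ} (hb : 0 < b) (t u : ℝ) :
    kap b t u = (Complex.exp ((b + t * I) * u) / (b + t * I) ^ 2).re - (1 / (b + t * I : ℂ) ^ 2).re -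
      u * (b / (b ^ 2 + t ^ 2)) := by
  have h := bt_ne hb t
  have e : (Complex.exp ((b + t * I) * u) - 1 - (b + t * I) * u) / (b + t * I : ℂ) ^ 2 =
      Complex.exp ((b + t * I) * u) / (b + t * I) ^ 2 - 1 / (b + t * I : ℂ) ^ 2 - u * (b + t * I : ℂ)⁻¹ := by
    field_simp
  rw [kap, e, Complex.sub_re, Complex.sub_re, Complex.re_ofReal_mul, Complex.inv_re, bt_normSq]
  simp

lemma kap_bound {b : ℝ} (hb : 0 < b) (t : ℝ) {u : ℝ} (hu : 0 ≤ u) :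
    |kap b t u| ≤ 2 * Real.exp (b * u) / (b ^ 2 + t ^ 2) := by
  have hp : 0 < b ^ 2 + t ^ 2 := by positivity
  have h1 : |(Complex.exp ((b + t * I) * u) / (b + t * I) ^ 2).re| ≤ Real.exp (b * u) / (b ^ 2 + t ^ 2) := by
    refine (Complex.abs_re_le_norm _).trans ?_
    rw [norm_div, norm_pow, bt_norm_sq, Complex.norm_exp]
    simp
  have h2 : |(1 / (b + t * I : ℂ) ^ 2).re| ≤ 1 / (b ^ 2 + t ^ 2) := by
    refine (Complex.abs_re_le_norm _).trans ?_
    rw [norm_div, norm_pow, bt_norm_sq]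
    simp
  have h3 : |u * (b / (b ^ 2 + t ^ 2))| = b * u / (b ^ 2 + t ^ 2) := by
    rw [abs_of_nonneg (by positivity)]; ring
  rw [kap_split hb]
  refine (abs_sub _ _).trans ?_
  refine (add_le_add (abs_sub _ _) le_rfl).trans ?_
  rw [h3]
  calc _ ≤ Real.exp (b * u) / (b ^ 2 + t ^ 2) + 1 / (b ^ 2 + t ^ 2) + b * u / (b ^ 2 + t ^ 2) := by linarith
    _ = (Real.exp (b * u) + (b * u + 1)) / (b ^ 2 + t ^ 2) := by ring
    _ ≤ _ := by
      gcongr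
      linarith [Real.add_one_le_exp (b * u)]

lemma kap_continuous {b : ℝ} (hb : 0 < b) : Continuous (fun p : ℝ × ℝ => kap b p.1 p.2) := by
  unfold kap
  refine Complex.continuous_re.comp ?_
  refine Continuous.div (by fun_prop) (by fun_prop) fun p => pow_ne_zero 2 (bt_ne hb p.1)

lemma kap_cont_left {b : ℝ} (hb : 0 < b) (u : ℝ) : Continuous (fun t : ℝ => kap b t u) :=
  Continuous.comp (g := fun p : ℝ × ℝ => kap b p.1 p.2) (f := fun t : ℝ => (t, u)) (kap_continuous hb)
    (by fun_prop)

lemma kap_cont_right {b : ℝ} (hb : 0 < b) (t : ℝ) : Continuous (fun u : ℝ => kap b t u) :=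
  Continuous.comp (g := fun p : ℝ × ℝ => kap b p.1 p.2) (f := fun u : ℝ => (t, u)) (kap_continuous hb)
    (by fun_prop)

lemma HL_kapc {a s : ℂ} (ha : a ≠ 0) (h : a.re < s.re) (hs : 0 < s.re) :
    HL (fun u : ℝ => (Complex.exp (a * u) - 1 - a * u) / a ^ 2) s (1 / (s ^ 2 * (s - a))) := by
  have hs0 : s ≠ 0 := fun h0 => by rw [h0] at hs; simp at hs
  have hsa : s - a ≠ 0 := fun h0 => by rw [sub_eq_zero.1 h0] at h; exact lt_irrefl _ h
  have := ((((HL_exp h).sub (HL_one hs)).sub ((HL_id hs).const_mul a)).const_mul (1 / a ^ 2))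
  convert! this using 1
  · funext u; ring
  · field_simp; ring

lemma HL_kap {b : ℝ} (hb : 0 < b) (hb1 : b ≤ 1) (t : ℝ) {s : ℂ} (hs : s.re = 3) :
    HL (fun u : ℝ => (kap b t u : ℂ)) s (1 / s ^ 2 * ((s - b) / ((s - b) ^ 2 + (t : ℂ) ^ 2))) := by
  have h1 := HL_kapc (bt_ne hb t) (s := s) (by simp; linarith) (by linarith)
  have h2 := HL_kapc (bt_ne hb (-t)) (s := s) (by simp; linarith) (by linarith)
  have h3 := (h1.add h2).const_mul (1 / 2)
  have hs0 : s ≠ 0 := fun h0 => by rw [h0] at hs; simp at hs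
  have n1 : s - (b + t * I) ≠ 0 := fun h0 => by
    have := congrArg Complex.re h0; simp at this; linarith
  have n2 : s - (b + (-t : ℝ) * I) ≠ 0 := fun h0 => by
    have := congrArg Complex.re h0; simp at this; linarith
  convert! h3 using 1
  · funext u
    have e := Complex.re_eq_add_conj ((Complex.exp ((b + t * I) * u) - 1 - (b + t * I) * u) / (b + t * I) ^ 2)
    rw [kap, e]
    simp only [map_div₀, map_sub, map_mul, map_add, map_pow, Complex.conj_ofReal, Complex.conj_I, map_one,
      ← Complex.exp_conj]
    push_cast
    ring_nf
  · have e : (s - b) ^ 2 + (t : ℂ) ^ 2 = (s - (b + t * I)) * (s - (b + (-t : ℝ) * I)) := by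
      push_cast; ring_nf; simp
    have e2 : s - b = ((s - (b + t * I)) + (s - (b + (-t : ℝ) * I))) / 2 := by push_cast; ring
    rw [e]
    nth_rewrite 1 [e2]
    generalize s - (b + t * I) = x at n1
    generalize s - (b + (-t : ℝ) * I) = y at n2
    field_simp
    ring

lemma sq_lower {b : ℝ} (hb : 1 / 2 < b) (t : ℝ) : (1 + |t|) ^ 2 ≤ 8 * (b ^ 2 + t ^ 2) := by
  have h1 : t ^ 2 = |t| ^ 2 := (sq_abs t).symm
  rw [h1]
  nlinarith [sq_nonneg (|t| - 1)]

lemma g_int {b : ℝ} (hb : 1 / 2 < b) {g : ℝ → ℝ} (hgc : Continuous g) (hg0 : ∀ t, 0 ≤ g t) {C : ℝ}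
    (hg : ∀ t, g t ≤ C * Real.sqrt (1 + |t|)) :
    MeasureTheory.Integrable (fun t => g t / (b ^ 2 + t ^ 2)) := by
  refine MeasureTheory.Integrable.mono' (int_sqrt.const_mul (C * 8)) ?_ (Eventually.of_forall fun t => ?_)
  · exact (hgc.div (by fun_prop) fun t => by positivity).aestronglyMeasurable
  · have hp : 0 < b ^ 2 + t ^ 2 := by positivity
    rw [Real.norm_of_nonneg (div_nonneg (hg0 t) hp.le)]
    have h1 := sq_lower hb t
    have h2 : (0 : ℝ) < (1 + |t|) ^ 2 := by positivity
    have h3 : g t / (b ^ 2 + t ^ 2) ≤ g t / ((1 + |t|) ^ 2 / 8) :=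
      div_le_div_of_nonneg_left (hg0 t) (by positivity) (by linarith)
    refine h3.trans ?_
    calc _ ≤ (C * Real.sqrt (1 + |t|)) / ((1 + |t|) ^ 2 / 8) := by gcongr; exact hg t
      _ = _ := by field_simp

lemma HL_A {b : ℝ} (hb : 1 / 2 < b) (hb1 : b ≤ 1) {g : ℝ → ℝ} (hgc : Continuous g) (hg0 : ∀ t, 0 ≤ g t) {C : ℝ}
    (hg : ∀ t, g t ≤ C * Real.sqrt (1 + |t|)) :
    ContinuousOn (fun u => ∫ t : ℝ, g t * kap b t u) (Set.Ici 0) ∧ ∀ s : ℂ, s.re = 3 →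
      HL (fun u => ((∫ t : ℝ, g t * kap b t u : ℝ) : ℂ)) s
        (1 / s ^ 2 * ∫ t : ℝ, (g t : ℂ) * ((s - b) / ((s - b) ^ 2 + (t : ℂ) ^ 2))) := by
  have hb0 : 0 < b := by linarith
  have hgi := g_int hb hgc hg0 hg
  have hk := kap_continuous hb0
  have hbd : ∀ t u : ℝ, 0 ≤ u → |g t * kap b t u| ≤ (g t / (b ^ 2 + t ^ 2)) * (2 * Real.exp (b * u)) := by
    intro t u hu
    rw [abs_mul, abs_of_nonneg (hg0 t)]
    calc _ ≤ g t * (2 * Real.exp (b * u) / (b ^ 2 + t ^ 2)) := by gcongr; exacts [hg0 t, kap_bound hb0 t hu]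
      _ = _ := by ring
  refine ⟨?_, fun s hs => ?_⟩
  · intro u hu
    have h1 : ContinuousOn (fun u => ∫ t : ℝ, g t * kap b t u) (Set.Icc 0 (u + 1)) := by
      refine MeasureTheory.continuousOn_of_dominated
        (bound := fun t => (g t / (b ^ 2 + t ^ 2)) * (2 * Real.exp (b * (u + 1)))) ?_ ?_ (hgi.mul_const _) ?_
      · intro v hv
        have : Continuous fun t => g t * kap b t v := hgc.mul (kap_cont_left hb0 v)
        exact this.aestronglyMeasurable
      · intro v hv
        refine Eventually.of_forall fun t => (hbd t v hv.1).trans ?_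
        have : 0 ≤ g t / (b ^ 2 + t ^ 2) := div_nonneg (hg0 t) (by positivity)
        gcongr
        exact hv.2
      · refine Eventually.of_forall fun t => ?_
        have : Continuous fun v => g t * kap b t v :=
          continuous_const.mul (kap_cont_right hb0 t)
        exact this.continuousOn
    have hu0 : (0 : ℝ) ≤ u := hu
    refine (h1 u ⟨hu, by linarith⟩).mono_of_mem_nhdsWithin ?_
    rw [← Set.Ici_inter_Iic]
    exact inter_mem_nhdsWithin _ (Iic_mem_nhds (by linarith))
  · set F : ℝ → ℝ → ℂ := fun t u => ((g t * kap b t u : ℝ) : ℂ) * Complex.exp (-(s * u)) with hF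
    have hprod : (MeasureTheory.volume : MeasureTheory.Measure ℝ).prod (MeasureTheory.volume.restrict (Set.Ioi (0 : ℝ))) =
        (MeasureTheory.volume.prod MeasureTheory.volume).restrict (Set.univ ×ˢ Set.Ioi (0 : ℝ)) := by
      rw [← MeasureTheory.Measure.prod_restrict, MeasureTheory.Measure.restrict_univ]
    have hexp : MeasureTheory.IntegrableOn (fun u : ℝ => 2 * Real.exp (-1 * u)) (Set.Ioi 0) :=
      (integrableOn_exp_mul_Ioi (by norm_num) 0).const_mul 2
    have hFi : MeasureTheory.Integrable (Function.uncurry F)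
        ((MeasureTheory.volume : MeasureTheory.Measure ℝ).prod (MeasureTheory.volume.restrict (Set.Ioi (0 : ℝ)))) := by
      refine MeasureTheory.Integrable.mono' (hgi.mul_prod hexp) ?_ ?_
      · refine Continuous.aestronglyMeasurable ?_
        have hkg : Continuous fun p : ℝ × ℝ => g p.1 * kap b p.1 p.2 := (hgc.comp continuous_fst).mul hk
        have : Continuous fun p : ℝ × ℝ => F p.1 p.2 :=
          (Complex.continuous_ofReal.comp hkg).mul (by fun_prop)
        exact this
      · rw [hprod, MeasureTheory.ae_restrict_iff' (MeasurableSet.univ.prod measurableSet_Ioi)]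
        refine Eventually.of_forall fun p hp => ?_
        have hu : 0 < p.2 := hp.2
        simp only [Function.uncurry, hF]
        rw [norm_mul, Complex.norm_real, Real.norm_eq_abs, Complex.norm_exp]
        have h1 : (-(s * p.2)).re = -(3 * p.2) := by simp [hs]
        rw [h1]
        have h0 : 0 ≤ g p.1 / (b ^ 2 + p.1 ^ 2) := div_nonneg (hg0 p.1) (by positivity)
        calc _ ≤ (g p.1 / (b ^ 2 + p.1 ^ 2)) * (2 * Real.exp (b * p.2)) * Real.exp (-(3 * p.2)) := by
              gcongr; exact hbd p.1 p.2 hu.le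
          _ = (g p.1 / (b ^ 2 + p.1 ^ 2)) * (2 * Real.exp (b * p.2 - 3 * p.2)) := by
              rw [Real.exp_sub, Real.exp_neg]; ring
          _ ≤ _ := by
              gcongr
              nlinarith
    have e : ∀ u : ℝ, ((∫ t : ℝ, g t * kap b t u : ℝ) : ℂ) * Complex.exp (-(s * u)) = ∫ t, F t u := by
      intro u
      rw [hF, ← integral_complex_ofReal, ← MeasureTheory.integral_mul_const]
    refine ⟨?_, ?_⟩
    · simp only [e]
      exact hFi.integral_prod_right
    · simp only [e]
      rw [← MeasureTheory.integral_integral_swap hFi, ← MeasureTheory.integral_const_mul]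
      congr 1
      funext t
      have h2 := ((HL_kap hb0 hb1 t hs).const_mul (g t)).2
      simp only [hF]
      push_cast
      rw [h2]
      ring


open Complex Filter Topology

open ArithmeticFunction in
/-- weighted psi function -/
noncomputable def phiF (u : ℝ) : ℝ := ∑' n : ℕ, vonMangoldt n * max (u - Real.log n) 0

noncomputable def Stil (u : ℝ) : ℝ :=
  ∑' n : ℕ, (1 - Real.exp (-(2 * ((n : ℝ) + 1)) * u)) / (4 * ((n : ℝ) + 1) ^ 2)

lemma vm_term {s : ℂ} (n : ℕ) : LSeries.term (fun n => (ArithmeticFunction.vonMangoldt n : ℂ)) s n =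
    (ArithmeticFunction.vonMangoldt n : ℂ) * Complex.exp (-(s * Real.log n)) := by
  rcases Nat.eq_zero_or_pos n with h | h
  · subst h; simp
  · have hn : (n : ℂ) ≠ 0 := by exact_mod_cast h.ne'
    rw [LSeries.term_of_ne_zero h.ne', Complex.cpow_def_of_ne_zero hn, div_eq_mul_inv, ← Complex.exp_neg,
      Complex.natCast_log, mul_comm s]

lemma vm_w_summable : Summable fun n : ℕ => ArithmeticFunction.vonMangoldt n * Real.exp (-(2 * Real.log n)) := by
  have h := (ArithmeticFunction.LSeriesSummable_vonMangoldt (s := 2) (by simp)).norm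
  refine h.congr fun n => ?_
  have := vm_term (s := 2) n
  rw [this, norm_mul, Complex.norm_real, Real.norm_of_nonneg ArithmeticFunction.vonMangoldt_nonneg,
    Complex.norm_exp]
  have e : (-((2 : ℂ) * (Real.log n : ℂ))).re = -(2 * Real.log n) := by
    rw [Complex.neg_re, Complex.re_mul_ofReal]; simp
  rw [e]

lemma phiF_bound (n : ℕ) (u : ℝ) : |ArithmeticFunction.vonMangoldt n * max (u - Real.log n) 0| ≤
    ArithmeticFunction.vonMangoldt n * Real.exp (-(2 * Real.log n)) * Real.exp (2 * u) := by
  have h0 : 0 ≤ ArithmeticFunction.vonMangoldt n := ArithmeticFunction.vonMangoldt_nonneg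
  rw [abs_of_nonneg (mul_nonneg h0 (le_max_right _ _)), mul_assoc, ← Real.exp_add]
  gcongr
  refine max_le ?_ (Real.exp_pos _).le
  have := Real.add_one_le_exp (-(2 * Real.log n) + 2 * u)
  rcases le_total 0 (u - Real.log n) with h | h
  · linarith
  · exact h.trans (Real.exp_pos _).le

lemma phiF_summable (u : ℝ) :
    Summable fun n : ℕ => ArithmeticFunction.vonMangoldt n * max (u - Real.log n) 0 :=
  Summable.of_norm_bounded (vm_w_summable.mul_right (Real.exp (2 * u))) (fun n => phiF_bound n u)

lemma phiF_HL : ContinuousOn phiF (Set.Ici 0) ∧ ∀ s : ℂ, s.re = 3 →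
    HL (fun u => (phiF u : ℂ)) s (-(deriv riemannZeta s / riemannZeta s) / s ^ 2) := by
  obtain ⟨h1, h2⟩ := HL_tsum (f := fun n u => ArithmeticFunction.vonMangoldt n * max (u - Real.log n) 0)
    (w := fun n => ArithmeticFunction.vonMangoldt n * Real.exp (-(2 * Real.log n)))
    (fun n => by fun_prop) (fun n u _ => phiF_bound n u) vm_w_summable
  refine ⟨h1, fun s hs => ?_⟩
  have h3 := h2 s (fun n => LSeries.term (fun n => (ArithmeticFunction.vonMangoldt n : ℂ)) s n * (1 / s ^ 2)) hs
    (fun n => by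
      have := (HL_shift (s := s) (by linarith) (Real.log_natCast_nonneg n)).const_mul
        (ArithmeticFunction.vonMangoldt n : ℂ)
      rw [vm_term, mul_assoc]
      simpa using this)
  have e : -(deriv riemannZeta s / riemannZeta s) / s ^ 2 =
      ∑' n, LSeries.term (fun n => (ArithmeticFunction.vonMangoldt n : ℂ)) s n * (1 / s ^ 2) := by
    rw [tsum_mul_right]
    have := ArithmeticFunction.LSeries_vonMangoldt_eq_deriv_riemannZeta_div (s := s) (by linarith)
    rw [LSeries] at this
    rw [this]
    ring
  rw [e]
  exact h3

lemma Stil_HL : ContinuousOn Stil (Set.Ici 0) ∧ ∀ s : ℂ, s.re = 3 →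
    HL (fun u => (Stil u : ℂ)) s (Sser s / s ^ 2) := by
  have hbnd : ∀ (n : ℕ) (u : ℝ), 0 ≤ u → |(1 - Real.exp (-(2 * ((n : ℝ) + 1)) * u)) / (4 * ((n : ℝ) + 1) ^ 2)| ≤
      1 / ((n : ℝ) + 1) ^ 2 * Real.exp (2 * u) := by
    intro n u hu
    have hx : Real.exp (-(2 * ((n : ℝ) + 1)) * u) ≤ 1 := by
      rw [Real.exp_le_one_iff]
      have : 0 ≤ 2 * ((n : ℝ) + 1) * u := by positivity
      linarith
    have hx0 := Real.exp_pos (-(2 * ((n : ℝ) + 1)) * u)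
    have hn : (0 : ℝ) < ((n : ℝ) + 1) ^ 2 := by positivity
    rw [abs_of_nonneg (div_nonneg (by linarith) (by positivity))]
    have h1 : (1 - Real.exp (-(2 * ((n : ℝ) + 1)) * u)) / (4 * ((n : ℝ) + 1) ^ 2) ≤ 1 / ((n : ℝ) + 1) ^ 2 :=
      div_le_div₀ (by norm_num) (by linarith) hn (by linarith)
    refine h1.trans ?_
    refine le_mul_of_one_le_right (by positivity) ?_
    rw [Real.one_le_exp_iff]; positivity
  obtain ⟨h1, h2⟩ := HL_tsum
    (f := fun n u => (1 - Real.exp (-(2 * ((n : ℝ) + 1)) * u)) / (4 * ((n : ℝ) + 1) ^ 2))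
    (w := fun n => 1 / ((n : ℝ) + 1) ^ 2)
    (fun n => by fun_prop) hbnd summable_inv_sq
  · refine ⟨h1, fun s hs => ?_⟩
    have hs0 : s ≠ 0 := fun h0 => by rw [h0] at hs; simp at hs
    have h3 := h2 s (fun n => STerm n s * (1 / s ^ 2)) hs (fun n => by
      have a := HL_one (s := s) (by linarith)
      have c := HL_exp (a := ((-(2 * ((n : ℝ) + 1)) : ℝ) : ℂ)) (s := s) (by
        rw [Complex.ofReal_re]
        have : (0 : ℝ) ≤ n := Nat.cast_nonneg n
        linarith)
      have d := (a.sub c).const_mul (1 / (4 * ((n : ℂ) + 1) ^ 2))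
      have n1 : (n : ℂ) + 1 ≠ 0 := by exact_mod_cast Nat.succ_ne_zero n
      have n2 : s + 2 * ((n : ℂ) + 1) ≠ 0 := fun h0 => by
        have := congrArg Complex.re h0
        simp at this
        have : (0 : ℝ) ≤ n := Nat.cast_nonneg n
        linarith
      convert! d using 1
      · funext u; push_cast; ring
      · rw [STerm]
        push_cast
        rw [sub_neg_eq_add]
        field_simp
        ring)
    have e : Sser s / s ^ 2 = ∑' n, STerm n s * (1 / s ^ 2) := by
      rw [tsum_mul_right, Sser]; ring
    rw [e]
    exact h3

lemma phiF_zero : phiF 0 = 0 := by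
  have : ∀ n : ℕ, ArithmeticFunction.vonMangoldt n * max (0 - Real.log n) 0 = 0 := fun n => by
    rw [max_eq_right (by linarith [Real.log_natCast_nonneg n]), mul_zero]
  simp only [phiF, this, tsum_zero]

lemma explicit_formula {b : ℝ} (hb : 1 / 2 < b) (hb1 : b ≤ 1) {g : ℝ → ℝ} (hgc : Continuous g) (hg0 : ∀ t, 0 ≤ g t) {C : ℝ}
    (hg : ∀ t, g t ≤ C * Real.sqrt (1 + |t|))
    (hP : ∀ z : ℂ, 0 < z.re → ∫ t : ℝ, (g t : ℂ) * (z / (z ^ 2 + (t : ℂ) ^ 2)) =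
      Real.pi * GG ((b : ℂ) + z)) {u : ℝ} (hu : 0 ≤ u) :
    phiF u = (Real.exp u - 1 - u) + ccst * u + Stil u - (1 / Real.pi) * ∫ t : ℝ, g t * kap b t u := by
  obtain ⟨a1, a2⟩ := HL_A hb hb1 hgc hg0 hg
  obtain ⟨b1, b2⟩ := phiF_HL
  obtain ⟨c1, c2⟩ := Stil_HL
  set D : ℝ → ℝ := fun u => phiF u - (Real.exp u - 1 - u) - ccst * u - Stil u +
    (1 / Real.pi) * ∫ t : ℝ, g t * kap b t u with hD
  suffices h : D u = 0 by
    rw [hD] at h; simp only at h; linarith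
  refine laplace_unique ?_ ?_ ?_ hu
  · refine ContinuousOn.add (ContinuousOn.sub (ContinuousOn.sub (b1.sub ?_) ?_) c1) (continuousOn_const.mul a1)
    · fun_prop
    · fun_prop
  · rw [hD]
    simp [phiF_zero, Stil, kap]
  · intro s hs
    have hs0 : s ≠ 0 := fun h0 => by rw [h0] at hs; simp at hs
    have hs1 : s - 1 ≠ 0 := fun h0 => by
      have := congrArg Complex.re h0; simp [hs] at this; norm_num at this
    have k1 := HL_kapc (a := 1) (s := s) one_ne_zero (by simp [hs]) (by linarith)
    have k2 := (HL_id (s := s) (by linarith)).const_mul (ccst : ℂ)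
    have k3 := (((b2 s hs).sub k1).sub k2).sub (c2 s hs)
    have k4 := (a2 s hs).const_mul (1 / Real.pi : ℂ)
    have k5 := k3.add k4
    have hpi : (Real.pi : ℂ) ≠ 0 := by exact_mod_cast Real.pi_ne_zero
    rw [hP (s - b) (by simp [hs]; linarith)] at k5
    have e1 : (b : ℂ) + (s - b) = s := by ring
    rw [e1, GG_eq (by linarith)] at k5
    convert! k5 using 1
    · funext u
      rw [hD]
      simp only
      push_cast
      simp
    · field_simp
      ring

open Complex Filter Topology

lemma psi_exp_eq (v : ℝ) : HasSum (fun n : ℕ => if Real.log n ≤ v then ArithmeticFunction.vonMangoldt n else 0)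
    (Chebyshev.psi (Real.exp v)) := by
  have h := hasSum_sum_of_ne_finset_zero (L := SummationFilter.unconditional ℕ)
    (f := fun n : ℕ => if Real.log n ≤ v then ArithmeticFunction.vonMangoldt n else 0)
    (s := Finset.Ioc 0 ⌊Real.exp v⌋₊) (fun n hn => by
      rcases Nat.eq_zero_or_pos n with h | h
      · subst h; simp
      · have h2 : ¬ (n ≤ ⌊Real.exp v⌋₊) := fun h3 => hn (by simp [h, h3])
        rw [Nat.le_floor_iff (Real.exp_pos v).le] at h2
        rw [if_neg]
        intro h4
        apply h2
        have : (0 : ℝ) < n := by exact_mod_cast h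
        rwa [← Real.log_le_iff_le_exp this])
  convert h using 1
  rw [Chebyshev.psi]
  refine Finset.sum_congr rfl fun n hn => ?_
  rw [Finset.mem_Ioc] at hn
  have : (0 : ℝ) < n := by exact_mod_cast hn.1
  rw [if_pos]
  rw [Real.log_le_iff_le_exp this, ← Nat.le_floor_iff (Real.exp_pos v).le]
  exact hn.2

lemma phiF_incr_lower (u : ℝ) {h : ℝ} (hh : 0 ≤ h) :
    h * Chebyshev.psi (Real.exp u) ≤ phiF (u + h) - phiF u := by
  have h1 := ((phiF_summable (u + h)).hasSum).sub (phiF_summable u).hasSum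
  have h2 := (psi_exp_eq u).mul_left h
  refine hasSum_le (fun n => ?_) h2 h1
  have h0 : 0 ≤ ArithmeticFunction.vonMangoldt n := ArithmeticFunction.vonMangoldt_nonneg
  split_ifs with hc
  · rw [max_eq_left (by linarith), max_eq_left (by linarith)]
    apply le_of_eq; ring
  · rw [← mul_sub, mul_zero]
    refine mul_nonneg h0 ?_
    rw [sub_nonneg]
    exact max_le_max (by linarith) le_rfl

lemma phiF_incr_upper (u : ℝ) {h : ℝ} (hh : 0 ≤ h) :
    phiF (u + h) - phiF u ≤ h * Chebyshev.psi (Real.exp (u + h)) := by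
  have h1 := ((phiF_summable (u + h)).hasSum).sub (phiF_summable u).hasSum
  have h2 := (psi_exp_eq (u + h)).mul_left h
  refine hasSum_le (fun n => ?_) h1 h2
  have h0 : 0 ≤ ArithmeticFunction.vonMangoldt n := ArithmeticFunction.vonMangoldt_nonneg
  split_ifs with hc
  · rw [← mul_sub, mul_comm h]
    refine mul_le_mul_of_nonneg_left ?_ h0
    rw [max_eq_left (by linarith)]
    have := le_max_left (u - Real.log n) 0
    linarith
  · rw [max_eq_right (by linarith), max_eq_right (by linarith)]
    simp

lemma Stil_summable {u : ℝ} (hu : 0 ≤ u) :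
    Summable fun n : ℕ => (1 - Real.exp (-(2 * ((n : ℝ) + 1)) * u)) / (4 * ((n : ℝ) + 1) ^ 2) := by
  refine Summable.of_norm_bounded summable_inv_sq fun n => ?_
  have h1 : Real.exp (-(2 * ((n : ℝ) + 1)) * u) ≤ 1 := by
    rw [Real.exp_le_one_iff]
    have : 0 ≤ 2 * ((n : ℝ) + 1) * u := by positivity
    linarith
  have h2 := Real.exp_pos (-(2 * ((n : ℝ) + 1)) * u)
  rw [Real.norm_of_nonneg (div_nonneg (by linarith) (by positivity))]
  refine div_le_div₀ (by norm_num) (by linarith) (by positivity) ?_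
  have : 0 ≤ ((n : ℝ) + 1) ^ 2 := by positivity
  linarith

lemma inv_sq_tsum_le : ∑' n : ℕ, 1 / ((n : ℝ) + 1) ^ 2 ≤ 4 := by
  have h := hasSum_zeta_two
  rw [← hasSum_nat_add_iff' 1] at h
  simp at h
  have h2 : ∑' n : ℕ, 1 / ((n : ℝ) + 1) ^ 2 = Real.pi ^ 2 / 6 := by
    rw [← h.tsum_eq]; congr 1; ext n; simp
  rw [h2]
  have := Real.pi_lt_four
  have := Real.pi_pos
  nlinarith

lemma Stil_incr {u h : ℝ} (hu : 1 ≤ u) (hh : 0 ≤ h) : 0 ≤ Stil (u + h) - Stil u ∧ Stil (u + h) - Stil u ≤ h := by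
  have s1 := Stil_summable (u := u) (by linarith)
  have s2 := Stil_summable (u := u + h) (by linarith)
  have h1 := s2.hasSum.sub s1.hasSum
  refine ⟨h1.nonneg fun n => ?_, ?_⟩
  · rw [← sub_div]
    refine div_nonneg ?_ (by positivity)
    have : Real.exp (-(2 * ((n : ℝ) + 1)) * (u + h)) ≤ Real.exp (-(2 * ((n : ℝ) + 1)) * u) := by
      rw [Real.exp_le_exp]
      have : 0 ≤ 2 * ((n : ℝ) + 1) * h := by positivity
      linarith
    linarith
  · have h2 := (summable_inv_sq.hasSum).mul_left (h / 4)
    have h3 := hasSum_le (fun n => ?_) h1 h2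
    · refine h3.trans ?_
      have := inv_sq_tsum_le
      nlinarith
    · rw [← sub_div]
      have hm : (0 : ℝ) < 2 * ((n : ℝ) + 1) := by positivity
      set m : ℝ := 2 * ((n : ℝ) + 1) with hmdef
      have e1 : Real.exp (-m * (u + h)) = Real.exp (-m * u) * Real.exp (-m * h) := by
        rw [← Real.exp_add]; congr 1; ring
      have e2 : 1 - Real.exp (-m * h) ≤ m * h := by
        have := Real.add_one_le_exp (-m * h); linarith
      have e3 : Real.exp (-m * u) * m ≤ 1 := by
        have a1 : Real.exp (-m * u) ≤ Real.exp (-m) := by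
          rw [Real.exp_le_exp]; nlinarith
        have a2 : m ≤ Real.exp m := by have := Real.add_one_le_exp m; linarith
        calc _ ≤ Real.exp (-m) * Real.exp m := by gcongr
          _ = 1 := by rw [← Real.exp_add]; simp
      have e4 : 1 - Real.exp (-m * (u + h)) - (1 - Real.exp (-m * u)) ≤ h := by
        rw [e1]
        have := Real.exp_pos (-m * u)
        calc _ = Real.exp (-m * u) * (1 - Real.exp (-m * h)) := by ring
          _ ≤ Real.exp (-m * u) * (m * h) := by gcongr
          _ = (Real.exp (-m * u) * m) * h := by ring
          _ ≤ 1 * h := by gcongr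
          _ = h := one_mul h
      calc _ ≤ h / (4 * ((n : ℝ) + 1) ^ 2) := by gcongr
        _ = _ := by field_simp

lemma zeta_logderiv_real_nonpos {x : ℝ} (hx : 1 < x) :
    (deriv riemannZeta (x : ℂ) / riemannZeta x).re ≤ 0 := by
  have hs : 1 < (x : ℂ).re := by simpa using hx
  have h := ArithmeticFunction.LSeries_vonMangoldt_eq_deriv_riemannZeta_div hs
  have h2 : deriv riemannZeta (x : ℂ) / riemannZeta x = - LSeries (fun n => (ArithmeticFunction.vonMangoldt n : ℂ)) x := by
    rw [h]; ring
  rw [h2, Complex.neg_re, neg_nonpos]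
  have h3 := (ArithmeticFunction.LSeriesSummable_vonMangoldt hs).hasSum
  have h4 := Complex.hasSum_re h3
  refine h4.nonneg fun n => ?_
  rw [vm_term, Complex.re_ofReal_mul]
  refine mul_nonneg ArithmeticFunction.vonMangoldt_nonneg ?_
  rw [← Complex.ofReal_mul, ← Complex.ofReal_neg, ← Complex.ofReal_exp, Complex.ofReal_re]
  exact (Real.exp_pos _).le

lemma GG_pow_two (j : ℕ) : (GG (((2 : ℝ) ^ (j + 1) : ℝ) : ℂ)).re ≤ (1 / 2) ^ j + 0.35 * j := by
  have h2 : (1 : ℝ) < 2 ^ (j + 1) := one_lt_pow₀ (by norm_num) (by omega)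
  rw [GG_eq (by rwa [Complex.ofReal_re])]
  have hz := zeta_logderiv_real_nonpos h2
  have hc := ccst_bounds.2
  have hS := Sser_even_le (2 ^ j) (Nat.one_le_two_pow)
  have e1 : (((2 * 2 ^ j : ℕ) : ℝ) : ℂ) = (((2 : ℝ) ^ (j + 1) : ℝ) : ℂ) := by
    push_cast; ring
  rw [e1] at hS
  have e2 : (1 / ((((2 : ℝ) ^ (j + 1) : ℝ) : ℂ) - 1)).re = 1 / ((2 : ℝ) ^ (j + 1) - 1) := by
    rw [← Complex.ofReal_one, ← Complex.ofReal_sub, ← Complex.ofReal_div, Complex.ofReal_re]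
  have e3 : 1 / ((2 : ℝ) ^ (j + 1) - 1) ≤ (1 / 2) ^ j := by
    rw [div_pow, one_pow]
    have : (1 : ℝ) ≤ 2 ^ j := one_le_pow₀ (by norm_num)
    apply one_div_le_one_div_of_le (by positivity)
    rw [pow_succ]; linarith
  have e4 : Real.log ((2 ^ j : ℕ) : ℝ) ≤ 0.7 * j := by
    push_cast
    rw [Real.log_pow]
    have := Real.log_two_lt_d9
    have hj : (0 : ℝ) ≤ j := Nat.cast_nonneg j
    nlinarith
  simp only [Complex.add_re, Complex.ofReal_re, e2]
  linarith

open Complex Filter Topology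

noncomputable def zj (b : ℝ) (j : ℕ) : ℝ := 2 ^ (j + 1) - b

lemma zj_pos {b : ℝ} (hb : b ≤ 0.51) (j : ℕ) : 1.49 ≤ zj b j := by
  have : (1 : ℝ) ≤ 2 ^ j := one_le_pow₀ (by norm_num)
  rw [zj, pow_succ]; linarith

lemma zj_select {b : ℝ} (hb0 : 1 / 2 ≤ b) (hb : b ≤ 0.51) {τ : ℝ} (hτ : 0 ≤ τ) (J : ℕ) (h : τ ≤ zj b J) :
    ∃ j ≤ J, 1.07 / 4 * (1 / Real.sqrt (b ^ 2 + τ ^ 2)) ≤ zj b j / (zj b j ^ 2 + τ ^ 2) := by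
  have hr : 0 < Real.sqrt (b ^ 2 + τ ^ 2) := Real.sqrt_pos.2 (by positivity)
  have key : ∀ j, 1.07 * (zj b j ^ 2 + τ ^ 2) ≤ 4 * zj b j * Real.sqrt (b ^ 2 + τ ^ 2) →
      1.07 / 4 * (1 / Real.sqrt (b ^ 2 + τ ^ 2)) ≤ zj b j / (zj b j ^ 2 + τ ^ 2) := by
    intro j hj
    have hz := zj_pos hb j
    have : 0 < zj b j ^ 2 + τ ^ 2 := by positivity
    rw [div_mul_div_comm, div_le_div_iff₀ (by positivity) this]
    linarith
  induction J with
  | zero =>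
    refine ⟨0, le_rfl, key 0 ?_⟩
    have hz := zj_pos hb 0
    have hz2 : zj b 0 ≤ 1.5 := by rw [zj]; norm_num; linarith
    set z := zj b 0
    have hs := Real.sq_sqrt (show 0 ≤ b ^ 2 + τ ^ 2 by positivity)
    refine (sq_le_sq₀ (by positivity) (by positivity)).1 ?_
    have e : (4 * z * Real.sqrt (b ^ 2 + τ ^ 2)) ^ 2 = 16 * z ^ 2 * (b ^ 2 + τ ^ 2) := by
      rw [mul_pow, hs]; ring
    rw [e]
    have a1 : τ ^ 2 ≤ z ^ 2 := by gcongr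
    have a2 : z ^ 2 ≤ 2.25 := by nlinarith
    have a3 : 1 / 4 ≤ b ^ 2 := by nlinarith
    have a4 : 0 ≤ τ ^ 2 := by positivity
    have a5 : 0 ≤ z ^ 2 := by positivity
    generalize τ ^ 2 = T at *
    generalize b ^ 2 = B at *
    generalize z ^ 2 = Z at *
    nlinarith [mul_le_mul_of_nonneg_left a1 a4, mul_le_mul_of_nonneg_left a2 a5, mul_le_mul_of_nonneg_left a3 a5, mul_nonneg a4 a5]
  | succ J ih =>
    by_cases hc : τ ≤ zj b J
    · obtain ⟨j, hj, h2⟩ := ih hc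
      exact ⟨j, by omega, h2⟩
    · push Not at hc
      refine ⟨J, by omega, key J ?_⟩
      have hz := zj_pos hb J
      have h3 : zj b (J + 1) = 2 * zj b J + b := by rw [zj, zj, pow_succ _ (J + 1)]; ring
      have h4 : τ ≤ 2.5 * zj b J := by linarith
      have h5 : τ ≤ Real.sqrt (b ^ 2 + τ ^ 2) := by
        apply Real.le_sqrt_of_sq_le; nlinarith
      set z := zj b J
      have h6 : 4 * z * τ ≤ 4 * z * Real.sqrt (b ^ 2 + τ ^ 2) := by gcongr
      nlinarith [mul_nonneg (sub_nonneg.2 hc.le) (sub_nonneg.2 h4)]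

lemma norm_exp_sub_one_le_re {b : ℝ} (hb : 0 ≤ b) (t : ℝ) {h : ℝ} (hh : 0 ≤ h) :
    ‖Complex.exp ((b + t * I) * h) - 1‖ ≤ ‖(b + t * I : ℂ)‖ * Real.exp (b * h) * h := by
  have := norm_image_sub_le_of_norm_deriv_le_segment' (f := fun s : ℝ => Complex.exp ((b + t * I) * s))
    (f' := fun s : ℝ => Complex.exp ((b + t * I) * s) * (b + t * I)) (a := 0) (b := h)
    (C := ‖(b + t * I : ℂ)‖ * Real.exp (b * h)) (fun x hx => ?_) (fun x hx => ?_) h ⟨hh, le_rfl⟩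
  · simpa using this
  · have h1 := ((hasDerivAt_id x).ofReal_comp.const_mul (b + t * I : ℂ)).cexp
    simp at h1
    exact h1.hasDerivWithinAt
  · rw [norm_mul, mul_comm, Complex.norm_exp]
    refine mul_le_mul_of_nonneg_left ?_ (norm_nonneg _)
    rw [Real.exp_le_exp]
    simp
    exact mul_le_mul_of_nonneg_left hx.2.le hb

lemma kernel_min {b : ℝ} (hb0 : 1 / 2 ≤ b) (hb : b ≤ 0.51) (t : ℝ) (J : ℕ) (hJ : 3 ≤ J) :
    ‖Complex.exp ((b + t * I) * ((2 / 2 ^ (J + 1) : ℝ) : ℂ)) - 1‖ / (b ^ 2 + t ^ 2) ≤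
      4 * (2 / 2 ^ (J + 1)) * ∑ j ∈ Finset.range (J + 1), zj b j / (zj b j ^ 2 + t ^ 2) := by
  set h : ℝ := 2 / 2 ^ (J + 1) with hh
  have hJ8 : (16 : ℝ) ≤ 2 ^ (J + 1) := by
    calc (16 : ℝ) = 2 ^ (3 + 1) := by norm_num
      _ ≤ _ := by gcongr; norm_num
  have hpos : 0 < h := by positivity
  have hle : h ≤ 1 / 8 := by
    rw [hh, div_le_div_iff₀ (by positivity) (by norm_num)]; linarith
  have hE : Real.exp (b * h) ≤ 1.07 := by
    have a1 : b * h ≤ 0.064 := by nlinarith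
    have a2 := Real.add_one_le_exp (-(b * h))
    have a3 : Real.exp (b * h) * Real.exp (-(b * h)) = 1 := by rw [← Real.exp_add]; simp
    have := Real.exp_pos (b * h)
    nlinarith
  have hterm : ∀ j, 0 ≤ zj b j / (zj b j ^ 2 + t ^ 2) := fun j => by
    have := zj_pos hb j
    positivity
  have hbt : 0 < b ^ 2 + t ^ 2 := by positivity
  have suff : ∀ j ≤ J, ‖Complex.exp ((b + t * I) * (h : ℂ)) - 1‖ / (b ^ 2 + t ^ 2) ≤
      4 * h * (zj b j / (zj b j ^ 2 + t ^ 2)) → ‖Complex.exp ((b + t * I) * (h : ℂ)) - 1‖ / (b ^ 2 + t ^ 2) ≤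
      4 * h * ∑ j ∈ Finset.range (J + 1), zj b j / (zj b j ^ 2 + t ^ 2) := by
    intro j hj h1
    refine h1.trans (mul_le_mul_of_nonneg_left ?_ (by positivity))
    exact Finset.single_le_sum (f := fun j => zj b j / (zj b j ^ 2 + t ^ 2)) (fun i _ => hterm i) (Finset.mem_range.2 (by omega))
  have hsq : |t| ^ 2 = t ^ 2 := sq_abs t
  rcases le_total |t| (zj b J) with hc | hc
  · obtain ⟨j, hj, h2⟩ := zj_select hb0 hb (abs_nonneg t) J hc
    rw [hsq] at h2
    refine suff j hj ?_
    have h3 := norm_exp_sub_one_le_re (b := b) (by linarith) t hpos.le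
    have h4 : ‖(b + t * I : ℂ)‖ = Real.sqrt (b ^ 2 + t ^ 2) := by
      rw [← bt_norm_sq, Real.sqrt_sq (norm_nonneg _)]
    rw [h4] at h3
    set r := Real.sqrt (b ^ 2 + t ^ 2) with hr
    have hrp : 0 < r := Real.sqrt_pos.2 hbt
    have h5 : b ^ 2 + t ^ 2 = r ^ 2 := (Real.sq_sqrt hbt.le).symm
    calc _ ≤ (r * 1.07 * h) / (b ^ 2 + t ^ 2) := by
          gcongr
          refine h3.trans ?_
          gcongr
      _ = 4 * h * (1.07 / 4 * (1 / r)) := by rw [h5]; field_simp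
      _ ≤ _ := by gcongr
  · refine suff J le_rfl ?_
    have h1 : ‖Complex.exp ((b + t * I) * (h : ℂ)) - 1‖ ≤ 2.07 := by
      refine (norm_sub_le _ _).trans ?_
      rw [Complex.norm_exp, norm_one]
      simp
      linarith
    have hz := zj_pos hb J
    have h2 : h * zj b J ≥ 1.9 := by
      have : h * 2 ^ (J + 1) = 2 := by rw [hh]; field_simp
      rw [zj]; nlinarith
    have h3 : zj b J ^ 2 ≤ t ^ 2 := by
      rw [← hsq]; gcongr
    rw [mul_div_assoc', div_le_div_iff₀ hbt (by positivity)]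
    calc _ ≤ 2.07 * (2 * t ^ 2) := by gcongr; linarith
      _ ≤ 4 * 1.9 * t ^ 2 := by nlinarith [sq_nonneg t]
      _ ≤ 4 * (h * zj b J) * (b ^ 2 + t ^ 2) := by
          gcongr
          nlinarith
      _ = _ := by ring

open Complex Filter Topology

lemma kj_int {b : ℝ} (hb : b ≤ 0.51) {g : ℝ → ℝ} (hgc : Continuous g) (hg0 : ∀ t, 0 ≤ g t) {C : ℝ} (hC : 0 ≤ C)
    (hg : ∀ t, g t ≤ C * Real.sqrt (1 + |t|))
    (hP : ∀ z : ℂ, 0 < z.re → ∫ t : ℝ, (g t : ℂ) * (z / (z ^ 2 + (t : ℂ) ^ 2)) =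
      Real.pi * GG ((b : ℂ) + z)) (j : ℕ) :
    MeasureTheory.Integrable (fun t : ℝ => g t * (zj b j / (zj b j ^ 2 + t ^ 2))) ∧
    (1 / Real.pi) * ∫ t : ℝ, g t * (zj b j / (zj b j ^ 2 + t ^ 2)) ≤ (1 / 2) ^ j + 0.35 * j := by
  have hz := zj_pos hb j
  have hzr : 0 < ((zj b j : ℝ) : ℂ).re := by rw [Complex.ofReal_re]; linarith
  have e : (fun t : ℝ => (g t : ℂ) * (((zj b j : ℝ) : ℂ) / (((zj b j : ℝ) : ℂ) ^ 2 + (t : ℂ) ^ 2))) =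
      fun t : ℝ => ((g t * (zj b j / (zj b j ^ 2 + t ^ 2)) : ℝ) : ℂ) := by
    ext t; push_cast; ring
  constructor
  · have h1 := kernel_integrable (H := fun t => (g t : ℂ)) (by fun_prop) hC (fun t => by
      rw [Complex.norm_real, Real.norm_of_nonneg (hg0 t)]; exact hg t) hzr
    rw [e] at h1
    exact h1.re
  · have h2 := hP _ hzr
    rw [e, integral_complex_ofReal, ← Complex.ofReal_add] at h2
    have h3 : b + zj b j = 2 ^ (j + 1) := by rw [zj]; ring
    rw [h3] at h2
    have h4 := congrArg Complex.re h2
    rw [Complex.ofReal_re, Complex.re_ofReal_mul] at h4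
    rw [h4, ← mul_assoc, one_div, inv_mul_cancel₀ Real.pi_ne_zero, one_mul]
    exact GG_pow_two j

lemma kap_diff {b : ℝ} (hb0 : 1 / 2 ≤ b) (hb : b ≤ 0.51) (t u : ℝ) (J : ℕ) (hJ : 3 ≤ J) :
    |kap b t (u + 2 / 2 ^ (J + 1)) - kap b t u| ≤
      (2 / 2 ^ (J + 1)) * (4 * Real.exp (b * u) * ∑ j ∈ Finset.range (J + 1), zj b j / (zj b j ^ 2 + t ^ 2) +
        3 * (zj b 0 / (zj b 0 ^ 2 + t ^ 2))) := by
  have hk := kernel_min hb0 hb t J hJ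
  set h : ℝ := 2 / 2 ^ (J + 1) with hh
  have hpos : 0 < h := by positivity
  have hbt : 0 < b ^ 2 + t ^ 2 := by positivity
  rw [kap_split (by linarith) t u, kap_split (by linarith) t (u + h)]
  have e1 : Complex.exp ((b + t * I) * ((u + h : ℝ) : ℂ)) / (b + t * I) ^ 2 -
      Complex.exp ((b + t * I) * (u : ℂ)) / (b + t * I) ^ 2 =
      Complex.exp ((b + t * I) * (u : ℂ)) * ((Complex.exp ((b + t * I) * (h : ℂ)) - 1) / (b + t * I) ^ 2) := by
    rw [Complex.ofReal_add, mul_add, Complex.exp_add]; ring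
  have e2 : ‖Complex.exp ((b + t * I) * (u : ℂ)) * ((Complex.exp ((b + t * I) * (h : ℂ)) - 1) / (b + t * I) ^ 2)‖
      ≤ Real.exp (b * u) * (4 * h * ∑ j ∈ Finset.range (J + 1), zj b j / (zj b j ^ 2 + t ^ 2)) := by
    rw [norm_mul, norm_div, norm_pow, bt_norm_sq, Complex.norm_exp]
    have : ((b + t * I : ℂ) * (u : ℂ)).re = b * u := by simp
    rw [this]
    gcongr
  rw [← e1] at e2
  have e3 := (Complex.abs_re_le_norm _).trans e2
  rw [Complex.sub_re] at e3
  have hz := zj_pos hb 0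
  have hz0 : zj b 0 = 2 - b := by rw [zj]; norm_num
  have e4 : b / (b ^ 2 + t ^ 2) ≤ 3 * (zj b 0 / (zj b 0 ^ 2 + t ^ 2)) := by
    rw [mul_div_assoc', div_le_div_iff₀ hbt (by positivity)]
    set z := zj b 0
    have a1 : b * z * z ≤ b * z * (3 * b) := by
      refine mul_le_mul_of_nonneg_left ?_ ?_
      · linarith
      · have : 0 ≤ z := by linarith
        positivity
    have a2 : b * t ^ 2 ≤ 3 * z * t ^ 2 := by
      refine mul_le_mul_of_nonneg_right ?_ (sq_nonneg t)
      linarith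
    nlinarith
  have e5 : 0 ≤ b / (b ^ 2 + t ^ 2) := by positivity
  have e6 : h * (b / (b ^ 2 + t ^ 2)) ≤ h * (3 * (zj b 0 / (zj b 0 ^ 2 + t ^ 2))) := by gcongr
  have e7 : 0 ≤ h * (b / (b ^ 2 + t ^ 2)) := by positivity
  rw [abs_le] at e3 ⊢
  constructor <;> nlinarith [e3.1, e3.2]

lemma sum_D (J : ℕ) : ∑ j ∈ Finset.range (J + 1), (((1 : ℝ) / 2) ^ j + 0.35 * j) ≤ 2 + 0.175 * (J * (J + 1)) := by
  have : ∀ J : ℕ, ∑ j ∈ Finset.range (J + 1), (((1 : ℝ) / 2) ^ j + 0.35 * j) = 2 - (1 / 2) ^ J + 0.175 * (J * (J + 1)) := by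
    intro J
    induction J with
    | zero => norm_num
    | succ J ih =>
      rw [Finset.sum_range_succ, ih, pow_succ]; push_cast; ring
  rw [this]
  have : (0 : ℝ) ≤ (1 / 2) ^ J := by positivity
  linarith

lemma E_bound {b : ℝ} (hb0 : 1 / 2 < b) (hb : b ≤ 0.51) {g : ℝ → ℝ} (hgc : Continuous g) (hg0 : ∀ t, 0 ≤ g t) {C : ℝ} (hC : 0 ≤ C)
    (hg : ∀ t, g t ≤ C * Real.sqrt (1 + |t|))
    (hP : ∀ z : ℂ, 0 < z.re → ∫ t : ℝ, (g t : ℂ) * (z / (z ^ 2 + (t : ℂ) ^ 2)) =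
      Real.pi * GG ((b : ℂ) + z)) {u : ℝ} (hu : 0 ≤ u) (J : ℕ) (hJ : 3 ≤ J) :
    |(1 / Real.pi) * (∫ t : ℝ, g t * kap b t (u + 2 / 2 ^ (J + 1))) - (1 / Real.pi) * ∫ t : ℝ, g t * kap b t u| ≤
      (2 / 2 ^ (J + 1)) * (4 * Real.exp (b * u) * (2 + 0.175 * (J * (J + 1))) + 3) := by
  have hgi := g_int hb0 hgc hg0 hg
  have hpi := Real.pi_pos
  have hinteg : ∀ v : ℝ, 0 ≤ v → MeasureTheory.Integrable (fun t => g t * kap b t v) := by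
    intro v hv
    refine MeasureTheory.Integrable.mono' (hgi.mul_const (2 * Real.exp (b * v))) ?_ (Eventually.of_forall fun t => ?_)
    · exact (hgc.mul (kap_cont_left (by linarith) v)).aestronglyMeasurable
    · rw [Real.norm_eq_abs, abs_mul, abs_of_nonneg (hg0 t)]
      calc _ ≤ g t * (2 * Real.exp (b * v) / (b ^ 2 + t ^ 2)) :=
            mul_le_mul_of_nonneg_left (kap_bound (by linarith) t hv) (hg0 t)
        _ = _ := by ring
  have hK := fun j => kj_int hb hgc hg0 hC hg hP j
  set h : ℝ := 2 / 2 ^ (J + 1) with hh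
  have hpos : 0 < h := by positivity
  rw [← mul_sub, ← MeasureTheory.integral_sub (hinteg _ (by linarith)) (hinteg _ hu), abs_mul, abs_of_pos (by positivity : 0 < 1 / Real.pi)]
  have i1 : MeasureTheory.Integrable (fun t : ℝ => ∑ j ∈ Finset.range (J + 1), g t * (zj b j / (zj b j ^ 2 + t ^ 2))) :=
    MeasureTheory.integrable_finsetSum _ fun j _ => (hK j).1
  have hb1 : ∫ t : ℝ, |g t * kap b t (u + h) - g t * kap b t u| ≤
      ∫ t : ℝ, (h * (4 * Real.exp (b * u))) * (∑ j ∈ Finset.range (J + 1), g t * (zj b j / (zj b j ^ 2 + t ^ 2))) +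
        (h * 3) * (g t * (zj b 0 / (zj b 0 ^ 2 + t ^ 2))) := by
    refine MeasureTheory.integral_mono ?_ ?_ fun t => ?_
    · exact ((hinteg _ (by linarith)).sub (hinteg _ hu)).abs
    · exact (i1.const_mul _).add ((hK 0).1.const_mul _)
    · simp only
      rw [← mul_sub, abs_mul, abs_of_nonneg (hg0 t)]
      calc _ ≤ g t * _ := mul_le_mul_of_nonneg_left (kap_diff hb0.le hb t u J hJ) (hg0 t)
        _ = _ := by rw [← Finset.mul_sum, ← hh]; ring
  rw [MeasureTheory.integral_add (i1.const_mul _) ((hK 0).1.const_mul _), MeasureTheory.integral_const_mul,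
    MeasureTheory.integral_const_mul, MeasureTheory.integral_finsetSum _ (fun j _ => (hK j).1)] at hb1
  have hb2 := (MeasureTheory.abs_integral_le_integral_abs (f := fun t : ℝ => g t * kap b t (u + h) - g t * kap b t u)
    (μ := MeasureTheory.volume)).trans hb1
  have hb3 : 1 / Real.pi * ∑ j ∈ Finset.range (J + 1), ∫ t : ℝ, g t * (zj b j / (zj b j ^ 2 + t ^ 2)) ≤
      2 + 0.175 * (J * (J + 1)) := by
    rw [Finset.mul_sum]
    exact (Finset.sum_le_sum fun j _ => (hK j).2).trans (sum_D J)
  have hb4 := (hK 0).2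
  norm_num at hb4
  calc _ ≤ 1 / Real.pi * _ := mul_le_mul_of_nonneg_left hb2 (by positivity)
    _ = (h * (4 * Real.exp (b * u))) * (1 / Real.pi * ∑ j ∈ Finset.range (J + 1), ∫ t : ℝ, g t * (zj b j / (zj b j ^ 2 + t ^ 2)))
      + (h * 3) * (Real.pi⁻¹ * ∫ t : ℝ, g t * (zj b 0 / (zj b 0 ^ 2 + t ^ 2))) := by ring
    _ ≤ (h * (4 * Real.exp (b * u))) * (2 + 0.175 * (J * (J + 1))) + (h * 3) * 1 := by
      gcongr
    _ = _ := by ring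

open Complex Filter Topology

lemma log_ge_six {n : ℕ} (hn : 600 ≤ n) : 6 ≤ Real.log n := by
  have hx : (600 : ℝ) ≤ n := by exact_mod_cast hn
  rw [Real.le_log_iff_exp_le (by linarith)]
  have h1 := Real.exp_one_lt_d9
  have : Real.exp 6 = Real.exp 1 ^ 6 := by rw [← Real.exp_nat_mul]; norm_num
  rw [this]
  calc Real.exp 1 ^ 6 ≤ 2.7182818286 ^ 6 := by gcongr
    _ ≤ 600 := by norm_num
    _ ≤ n := hx

set_option maxHeartbeats 1000000 in
lemma psi_bound_of_RH (hRH : RH) {n : ℕ} (hn : 600 ≤ n) :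
    |Chebyshev.psi n - n| ≤ Real.sqrt n * (0.4 * Real.log n ^ 2 + 13) := by
  have hL := log_ge_six hn
  have hx : (600 : ℝ) ≤ n := by exact_mod_cast hn
  set x : ℝ := (n : ℝ) with hxdef
  set L := Real.log x with hLdef
  have hexpL : Real.exp L = x := Real.exp_log (by linarith)
  -- choice of the scale
  obtain ⟨J, hJ, hJ1, hJ2⟩ : ∃ J : ℕ, 3 ≤ J ∧ (2 : ℝ) ^ (J + 1) ≤ Real.sqrt x ∧ Real.sqrt x ≤ 2 * 2 ^ (J + 1) := by
    have hs : 16 ≤ Nat.sqrt n := by rw [Nat.le_sqrt]; omega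
    have h4 : 4 ≤ Nat.log 2 (Nat.sqrt n) := by
      refine Nat.le_log_of_pow_le (by norm_num) (by simpa using hs)
    refine ⟨Nat.log 2 (Nat.sqrt n) - 1, by omega, ?_, ?_⟩
    · rw [Nat.sub_add_cancel (by omega)]
      have h5 := Nat.pow_log_le_self 2 (x := Nat.sqrt n) (by omega)
      have h6 : ((2 ^ Nat.log 2 (Nat.sqrt n) : ℕ) : ℝ) ≤ (Nat.sqrt n : ℝ) := by exact_mod_cast h5
      push_cast at h6
      exact h6.trans (Real.nat_sqrt_le_real_sqrt)
    · rw [Nat.sub_add_cancel (by omega)]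
      have h5 := Nat.lt_pow_succ_log_self (b := 2) (by norm_num) (Nat.sqrt n)
      have h6 : ((Nat.sqrt n + 1 : ℕ) : ℝ) ≤ ((2 ^ (Nat.log 2 (Nat.sqrt n) + 1) : ℕ) : ℝ) := by exact_mod_cast h5
      push_cast at h6
      refine (Real.real_sqrt_le_nat_sqrt_succ).trans (h6.trans ?_)
      rw [pow_succ]; linarith
  set h : ℝ := 2 / 2 ^ (J + 1) with hh
  have hJ8 : (16 : ℝ) ≤ 2 ^ (J + 1) := by
    calc (16 : ℝ) = 2 ^ (3 + 1) := by norm_num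
      _ ≤ _ := by gcongr; norm_num
  have hpos : 0 < h := by positivity
  have hle : h ≤ 1 / 8 := by
    rw [hh, div_le_div_iff₀ (by positivity) (by norm_num)]; linarith
  have hsq : Real.sqrt x ^ 2 = x := Real.sq_sqrt (by linarith)
  have hsx : 24 ≤ Real.sqrt x := Real.le_sqrt_of_sq_le (by linarith)
  have hxh : x * h ≤ 4 * Real.sqrt x := by
    have : h * Real.sqrt x ≤ 4 := by
      rw [hh, div_mul_eq_mul_div, div_le_iff₀ (by positivity)]; linarith
    calc x * h = (h * Real.sqrt x) * Real.sqrt x := by rw [mul_assoc, ← sq, hsq]; ring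
      _ ≤ 4 * Real.sqrt x := by gcongr
  have hJL : (J : ℝ) * (J + 1) ≤ 0.522 * L ^ 2 := by
    have h1 : ((J + 1 : ℕ) : ℝ) * Real.log 2 ≤ L / 2 := by
      rw [← Real.log_pow, hLdef, ← Real.log_sqrt (by linarith)]
      exact Real.log_le_log (by positivity) hJ1
    have h2 := Real.log_two_gt_d9
    push_cast at h1
    have h3 : (0 : ℝ) ≤ J := Nat.cast_nonneg J
    have h4 : ((J : ℝ) + 1) * 0.6931471803 ≤ L / 2 := by nlinarith
    nlinarith
  -- choice of the abscissa
  set δ : ℝ := 0.005 / L with hδ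
  have hδ0 : 0 < δ := by positivity
  have hδ1 : δ ≤ 0.01 := by
    rw [hδ, div_le_iff₀ (by linarith)]; linarith
  obtain ⟨g, hgc, hg0, ⟨C, hC, hg⟩, hP⟩ := boundary_data hRH hδ0 (by linarith)
  set b : ℝ := 1 / 2 + δ with hb
  have hbL : Real.exp (b * L) ≤ 1.01 * Real.sqrt x := by
    have h1 : b * L = L / 2 + 0.005 := by rw [hb, hδ]; field_simp
    have h2 : Real.exp (L / 2) = Real.sqrt x := by
      rw [← hexpL, Real.exp_half]
    rw [h1, Real.exp_add, h2, mul_comm]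
    refine mul_le_mul_of_nonneg_right ?_ (Real.sqrt_nonneg x)
    have a2 := Real.add_one_le_exp (-(0.005 : ℝ))
    have a3 : Real.exp 0.005 * Real.exp (-0.005) = 1 := by rw [← Real.exp_add]; norm_num
    have := Real.exp_pos (0.005 : ℝ)
    nlinarith
  have hinc : ∀ u : ℝ, 1 ≤ u → u ≤ L → |phiF (u + h) - phiF u - (Real.exp u * (Real.exp h - 1))| ≤
      h * (4 * (1.01 * Real.sqrt x) * (2 + 0.175 * (0.522 * L ^ 2)) + 6) := by
    intro u hu1 hu2
    have f1 := explicit_formula (by linarith) (by linarith) hgc hg0 hg hP (u := u) (by linarith)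
    have f2 := explicit_formula (by linarith) (by linarith) hgc hg0 hg hP (u := u + h) (by linarith)
    have hE := E_bound (by linarith) (by linarith) hgc hg0 hC hg hP (u := u) (by linarith) J hJ
    obtain ⟨s1, s2⟩ := Stil_incr hu1 hpos.le
    obtain ⟨c1, c2⟩ := ccst_bounds
    have hE2 : h * (4 * Real.exp (b * u) * (2 + 0.175 * (J * (J + 1))) + 3) ≤
        h * (4 * (1.01 * Real.sqrt x) * (2 + 0.175 * (0.522 * L ^ 2)) + 3) := by
      have : Real.exp (b * u) ≤ 1.01 * Real.sqrt x := by
        refine le_trans ?_ hbL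
        rw [Real.exp_le_exp]
        gcongr
      gcongr
    have hE3 := hE.trans hE2
    rw [f1, f2, Real.exp_add]
    rw [abs_le] at hE3 ⊢
    have c3 : -2 * h ≤ ccst * h := mul_le_mul_of_nonneg_right c1 hpos.le
    have c4 : ccst * h ≤ -1 / 2 * h := mul_le_mul_of_nonneg_right c2 hpos.le
    constructor
    · linarith [hE3.1, hE3.2]
    · linarith [hE3.1, hE3.2]
  have hB : 4 * (1.01 * Real.sqrt x) * (2 + 0.175 * (0.522 * L ^ 2)) + 6 + x * h ≤
      Real.sqrt x * (0.4 * L ^ 2 + 13) := by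
    have : 0 ≤ Real.sqrt x * L ^ 2 := by positivity
    nlinarith
  have he1 : |Real.exp h - 1 - h| ≤ h ^ 2 := by
    have := Real.abs_exp_sub_one_sub_id_le (x := h) (by rw [abs_of_pos hpos]; linarith)
    exact this
  have he2 : |Real.exp (-h) - 1 - (-h)| ≤ (-h) ^ 2 := by
    exact Real.abs_exp_sub_one_sub_id_le (x := -h) (by rw [abs_neg, abs_of_pos hpos]; linarith)
  rw [abs_le] at he1 he2
  refine le_trans ?_ hB
  rw [abs_le]
  constructor
  · have i1 := hinc (L - h) (by linarith) (by linarith)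
    have i2 := phiF_incr_upper (L - h) hpos.le
    rw [sub_add_cancel] at i1 i2
    rw [hexpL] at i2
    have i3 : Real.exp (L - h) * (Real.exp h - 1) = x * (1 - Real.exp (-h)) := by
      rw [sub_eq_add_neg, Real.exp_add, hexpL]
      have : Real.exp (-h) * Real.exp h = 1 := by rw [← Real.exp_add]; simp
      linear_combination x * this
    rw [i3, abs_le] at i1
    have i4 : x * (1 - Real.exp (-h)) ≥ x * (h - h ^ 2) := by
      refine mul_le_mul_of_nonneg_left ?_ (by linarith)
      nlinarith [he2.2]
    have i5 := i1.1
    refine le_of_mul_le_mul_left ?_ hpos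
    nlinarith
  · have i1 := hinc L (by linarith) le_rfl
    have i2 := phiF_incr_lower L hpos.le
    rw [hexpL] at i1 i2
    rw [abs_le] at i1
    have i4 : x * (Real.exp h - 1) ≤ x * (h + h ^ 2) := by
      refine mul_le_mul_of_nonneg_left ?_ (by linarith)
      linarith [he1.2]
    have i5 := i1.2
    refine le_of_mul_le_mul_left ?_ hpos
    nlinarith

open Complex Filter Topology

noncomputable def psiErr (t : ℝ) : ℝ := Set.indicator (Set.Ioi 1) (fun t => Chebyshev.psi t - t) t

noncomputable def psiM (s : ℂ) : ℂ := mellin (fun t => (psiErr t : ℂ)) (-s)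

lemma psiErr_locInt : MeasureTheory.LocallyIntegrable (fun t => (psiErr t : ℂ)) := by
  have h1 : MeasureTheory.LocallyIntegrable Chebyshev.psi := Chebyshev.psi_mono.locallyIntegrable
  have h2 : MeasureTheory.LocallyIntegrable (fun t : ℝ => t) := continuous_id.locallyIntegrable
  have h3 := (h1.sub h2).indicator (s := Set.Ioi 1) measurableSet_Ioi
  intro x
  obtain ⟨u, hu, hi⟩ := h3 x
  exact ⟨u, hu, hi.ofReal⟩

lemma psiErr_bigO {θ : ℝ} (hθ : 1 / 2 < θ)
    (hψ : ∀ n : ℕ, 600 ≤ n → |Chebyshev.psi n - n| ≤ 1 + 2 * Real.sqrt n * Real.log n ^ 2) :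
    (fun t => (psiErr t : ℂ)) =O[atTop] (fun t : ℝ => t ^ (-(-θ))) := by
  set ε := (θ - 1 / 2) / 2 with hε
  have hε0 : 0 < ε := by rw [hε]; linarith
  refine Asymptotics.IsBigO.of_bound (2 + 2 / ε ^ 2) ?_
  filter_upwards [eventually_ge_atTop (600 : ℝ)] with t ht
  rw [neg_neg, Complex.norm_real, psiErr, Set.indicator_of_mem (by simp; linarith),
    Real.norm_of_nonneg (by positivity : 0 ≤ t ^ θ), Real.norm_eq_abs]
  have hfl : 600 ≤ ⌊t⌋₊ := Nat.le_floor (by exact_mod_cast ht)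
  have h1 := hψ _ hfl
  have h2 : (⌊t⌋₊ : ℝ) ≤ t := Nat.floor_le (by linarith)
  have h3 : t < ⌊t⌋₊ + 1 := Nat.lt_floor_add_one t
  have h600 : (600 : ℝ) ≤ ⌊t⌋₊ := by exact_mod_cast hfl
  rw [← Chebyshev.psi_eq_psi_coe_floor] at h1
  have h4 : |Chebyshev.psi t - t| ≤ 2 + 2 * Real.sqrt t * Real.log t ^ 2 := by
    have a1 : 2 * Real.sqrt ⌊t⌋₊ * Real.log ⌊t⌋₊ ^ 2 ≤ 2 * Real.sqrt t * Real.log t ^ 2 := by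
      have : 0 ≤ Real.log (⌊t⌋₊ : ℝ) := Real.log_nonneg (by linarith)
      gcongr
    rw [abs_le] at h1 ⊢
    constructor <;> linarith [h1.1, h1.2]
  have h5 : Real.log t ≤ t ^ ε / ε := Real.log_le_rpow_div (by linarith) hε0
  have h6 : Real.sqrt t * (t ^ ε) ^ 2 = t ^ θ := by
    rw [Real.sqrt_eq_rpow, ← Real.rpow_natCast, ← Real.rpow_mul (by linarith), ← Real.rpow_add (by linarith)]
    congr 1; rw [hε]; push_cast; ring
  have h7 : 1 ≤ t ^ θ := Real.one_le_rpow (by linarith) (by linarith)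
  have h8 : 0 ≤ Real.log t := Real.log_nonneg (by linarith)
  calc _ ≤ _ := h4
    _ ≤ 2 + 2 * Real.sqrt t * (t ^ ε / ε) ^ 2 := by gcongr
    _ = 2 + 2 / ε ^ 2 * (Real.sqrt t * (t ^ ε) ^ 2) := by rw [div_pow]; ring
    _ = 2 + 2 / ε ^ 2 * t ^ θ := by rw [h6]
    _ ≤ 2 * t ^ θ + 2 / ε ^ 2 * t ^ θ := by linarith
    _ = _ := by ring

lemma psiErr_bot (b : ℝ) : (fun t => (psiErr t : ℂ)) =O[𝓝[>] 0] (fun t : ℝ => t ^ (-b)) := by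
  refine Asymptotics.IsBigO.of_bound 1 ?_
  have : Set.Iio (1 : ℝ) ∈ 𝓝[>] 0 := mem_nhdsWithin_of_mem_nhds (Iio_mem_nhds one_pos)
  filter_upwards [this] with t ht
  rw [psiErr, Set.indicator_of_notMem (by simp at ht ⊢; linarith)]
  simp

lemma psiM_diff {θ : ℝ} (hθ : 1 / 2 < θ)
    (hψ : ∀ n : ℕ, 600 ≤ n → |Chebyshev.psi n - n| ≤ 1 + 2 * Real.sqrt n * Real.log n ^ 2)
    {s : ℂ} (hs : θ < s.re) : DifferentiableAt ℂ psiM s ∧ MellinConvergent (fun t => (psiErr t : ℂ)) (-s) := by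
  have h1 := psiErr_locInt.locallyIntegrableOn (Set.Ioi 0)
  have h2 := psiErr_bigO hθ hψ
  have h3 : (-s).re < -θ := by simpa using hs
  have h4 := psiErr_bot ((-s).re - 1)
  refine ⟨?_, mellinConvergent_of_isBigO_rpow h1 h2 h3 h4 (by linarith)⟩
  have h5 := mellin_differentiableAt_of_isBigO_rpow h1 h2 h3 h4 (by linarith)
  exact DifferentiableAt.comp (f := fun s : ℂ => -s) s h5 (by fun_prop)

lemma psi_bigO_self : (fun n : ℕ => ∑ k ∈ Finset.Icc 1 n, ArithmeticFunction.vonMangoldt k) =O[atTop]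
    fun n : ℕ => (n : ℝ) ^ (1 : ℝ) := by
  refine Asymptotics.IsBigO.of_bound (Real.log 4 + 4) (Eventually.of_forall fun n => ?_)
  have h := Chebyshev.psi_le_const_mul_self (x := (n : ℝ)) (Nat.cast_nonneg n)
  have h2 : Chebyshev.psi (n : ℝ) = ∑ k ∈ Finset.Icc 1 n, ArithmeticFunction.vonMangoldt k := by
    rw [Chebyshev.psi, Nat.floor_natCast]; rfl
  rw [← h2, Real.norm_of_nonneg (Chebyshev.psi_nonneg _), Real.rpow_one, Real.norm_of_nonneg (Nat.cast_nonneg n)]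
  exact h

lemma zeta_psiM (hψ : ∀ n : ℕ, 600 ≤ n → |Chebyshev.psi n - n| ≤ 1 + 2 * Real.sqrt n * Real.log n ^ 2)
    {s : ℂ} (hs : 1 < s.re) : deriv riemannZeta s / riemannZeta s = - (s * psiM s + s / (s - 1)) := by
  have h := ArithmeticFunction.LSeries_vonMangoldt_eq_deriv_riemannZeta_div hs
  have h2 := LSeries_eq_mul_integral_of_nonneg (fun n => ArithmeticFunction.vonMangoldt n) (r := 1) zero_le_one hs
    psi_bigO_self (fun n => ArithmeticFunction.vonMangoldt_nonneg)
  have hM := (psiM_diff (θ := 3 / 4) (by norm_num) hψ (s := s) (by linarith)).2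
  rw [MellinConvergent] at hM
  have hM1 := hM.mono_set (Set.Ioi_subset_Ioi (zero_le_one : (0 : ℝ) ≤ 1))
  have hre : (-s).re < -1 := by simpa using hs
  have hs1 : s - 1 ≠ 0 := by intro h0; rw [sub_eq_zero] at h0; rw [h0] at hs; simp at hs
  have h3 := integrableOn_Ioi_cpow_of_lt hre one_pos
  have h4 := integral_Ioi_cpow_of_lt hre one_pos
  have h5 : psiM s = ∫ t in Set.Ioi (1 : ℝ), (t : ℂ) ^ (-s - 1) • (psiErr t : ℂ) := by
    rw [psiM, mellin]
    refine MeasureTheory.setIntegral_eq_of_subset_of_forall_sdiff_eq_zero measurableSet_Ioi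
      (Set.Ioi_subset_Ioi zero_le_one) fun t ht => ?_
    rw [psiErr, Set.indicator_of_notMem ht.2]; simp
  have h6 : ∫ t in Set.Ioi (1 : ℝ), (∑ k ∈ Finset.Icc 1 ⌊t⌋₊, (ArithmeticFunction.vonMangoldt k : ℂ)) * (t : ℂ) ^ (-(s + 1)) =
      psiM s + 1 / (s - 1) := by
    have e : (1 : ℂ) / (s - 1) = ∫ t in Set.Ioi (1 : ℝ), (t : ℂ) ^ (-s) := by
      rw [h4]
      have : -s + 1 ≠ 0 := by intro h0; apply hs1; linear_combination -h0
      simp; field_simp; ring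
    rw [h5, e, ← MeasureTheory.integral_add hM1 h3]
    refine MeasureTheory.setIntegral_congr_fun measurableSet_Ioi fun t ht => ?_
    have ht0 : (t : ℂ) ≠ 0 := by
      have : (0 : ℝ) < t := lt_trans one_pos ht
      exact_mod_cast this.ne'
    simp only [psiErr, Set.indicator_of_mem ht, smul_eq_mul]
    have h2 : ∑ k ∈ Finset.Icc 1 ⌊t⌋₊, (ArithmeticFunction.vonMangoldt k : ℂ) = ((Chebyshev.psi t : ℝ) : ℂ) := by
      rw [Chebyshev.psi]; push_cast; rfl
    have e2 : (t : ℂ) ^ (-s) = (t : ℂ) ^ (-s - 1) * t := by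
      rw [Complex.cpow_sub _ _ ht0, Complex.cpow_one, div_mul_cancel₀ _ ht0]
    rw [h2, e2, neg_add, ← sub_eq_add_neg]
    push_cast; ring
  rw [h6, h] at h2
  have : deriv riemannZeta s / riemannZeta s = -(-deriv riemannZeta s / riemannZeta s) := by ring
  rw [this, h2]; ring

theorem RH_of_psi_bound (hψ : ∀ n : ℕ, 600 ≤ n → |Chebyshev.psi n - n| ≤ 1 + 2 * Real.sqrt n * Real.log n ^ 2) : RH := by
  have key : ∀ ρ : ℂ, 1 / 2 < ρ.re → xiF ρ ≠ 0 := by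
    intro ρ hρ
    obtain ⟨θ, hθ1, hθ2⟩ := exists_between hρ
    by_cases hbig : 1 < ρ.re
    · exact xiF_ne_zero_of_one_lt hbig
    push Not at hbig
    have hθlt : θ < 1 := by linarith
    set K : ℂ → ℂ := fun s => ccst + Sser s - s * psiM s - 1 with hK
    set U : Set ℂ := {s | θ < s.re} with hU
    have hUo : IsOpen U := isOpen_lt continuous_const Complex.continuous_re
    have hKd : DifferentiableOn ℂ K U := fun s hs => by
      have a1 := (psiM_diff hθ1 hψ hs).1
      have a2 := Sser_differentiableAt (s := s) (by have : θ < s.re := hs; linarith)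
      exact (((a2.const_add _).sub (differentiableAt_id.mul a1)).sub_const 1).differentiableWithinAt
    have hGK : ∀ s : ℂ, 1 < s.re → GG s = K s := fun s hs => by
      have hs1 : s - 1 ≠ 0 := by intro h0; rw [sub_eq_zero] at h0; rw [h0] at hs; simp at hs
      rw [GG_eq hs, zeta_psiM hψ hs, hK]
      field_simp; ring
    have hA : AnalyticOnNhd ℂ (deriv xiF) U :=
      ((xiF_differentiable.differentiableOn).analyticOnNhd isOpen_univ).deriv.mono (Set.subset_univ _)
    have hB : AnalyticOnNhd ℂ (fun s => K s * xiF s) U :=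
      (hKd.mul xiF_differentiable.differentiableOn).analyticOnNhd hUo
    have hpc : IsPreconnected U := (convex_halfSpace_re_gt θ).isPreconnected
    have h2U : (2 : ℂ) ∈ U := by simp [hU]; linarith
    have hEq := hA.eqOn_of_preconnected_of_eventuallyEq hB hpc h2U (by
      have : {s : ℂ | 1 < s.re} ∈ 𝓝 (2 : ℂ) := (isOpen_lt continuous_const Complex.continuous_re).mem_nhds (by simp)
      filter_upwards [this] with s hs
      rw [(xiF_hasDerivAt (xiF_ne_zero_of_one_lt hs)).deriv, hGK s hs])
    obtain ⟨R, hR⟩ := exists_gt (max 2 ((ρ.im ^ 2 + 1) / (2 * (ρ.re - θ)) + 1))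
    have hR2 : 2 < R := (le_max_left _ _).trans_lt hR
    have hR3 : (ρ.im ^ 2 + 1) / (2 * (ρ.re - θ)) + 1 < R := (le_max_right _ _).trans_lt hR
    have hsub : Metric.ball (R : ℂ) (R - θ) ⊆ U := by
      intro s hs
      rw [Metric.mem_ball, dist_eq_norm] at hs
      have := (Complex.abs_re_le_norm (s - R)).trans_lt hs
      rw [abs_lt] at this
      simp at this
      show θ < s.re
      linarith [this.1]
    obtain ⟨L, -, -, hL⟩ := exp_primitive (c := (R : ℂ)) (r := R - θ) (by linarith) (f := xiF) (K := K)
      (fun x hx => by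
        have := hEq (hsub hx)
        simp only at this
        rw [← this]
        exact (xiF_differentiable x).hasDerivAt) (hKd.mono hsub)
    have hmem : ρ ∈ Metric.ball (R : ℂ) (R - θ) := by
      rw [Metric.mem_ball, dist_eq_norm]
      refine (sq_lt_sq₀ (norm_nonneg _) (by linarith)).1 ?_
      rw [Complex.sq_norm, Complex.normSq_apply]
      simp
      have hd : 0 < 2 * (ρ.re - θ) := by linarith
      have h3 : ρ.im ^ 2 + 1 < (R - 1) * (2 * (ρ.re - θ)) := by
        rw [← div_lt_iff₀ hd]; linarith
      nlinarith
    rw [hL ρ hmem]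
    exact mul_ne_zero (xiF_ne_zero_of_one_lt (by simp; linarith)) (Complex.exp_ne_zero _)
  intro s hs h0 h1
  have hs1 : s ≠ 1 := by rintro rfl; simp at h1
  have hx : xiF s = 0 := by rw [xiF_eq_zeta h0 hs1, hs]; simp
  rcases lt_trichotomy s.re (1 / 2) with h | h | h
  · exact absurd ((xiF_one_sub s).trans hx) (key (1 - s) (by simp; linarith))
  · exact h
  · exact absurd hx (key s h)

open Complex Filter Topology

lemma log_one_add_inv {x : ℝ} (hx : 0 < x) : 1 / (x + 1) ≤ Real.log (1 + 1 / x) ∧ Real.log (1 + 1 / x) ≤ 1 / x := by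
  have hp : 0 < 1 + 1 / x := by positivity
  constructor
  · have h := Real.one_sub_inv_le_log_of_pos hp
    have : 1 - (1 + 1 / x)⁻¹ = 1 / (x + 1) := by field_simp; ring
    linarith
  · have h := Real.log_le_sub_one_of_pos hp
    linarith

lemma log_four_bounds : 1.386 < Real.log 4 ∧ Real.log 4 < 1.387 := by
  have h : Real.log 4 = 2 * Real.log 2 := by
    rw [show (4 : ℝ) = 2 ^ 2 by norm_num, Real.log_pow]; norm_num
  have h1 := Real.log_two_lt_d9
  have h2 := Real.log_two_gt_d9
  constructor <;> rw [h] <;> linarith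

lemma explog_bounds {m b : ℕ} (hm : 0 < m) (h : explog (m - 1) b) :
    (b : ℝ) - 1 < Real.log m ∧ Real.log m < b + Real.log 4 := by
  obtain ⟨x, hx, h1, h2⟩ := h
  have e : ((m - 1 : ℕ) : ℝ) + 1 = m := by
    rw [Nat.cast_sub hm]; simp
  rw [e] at h1 h2
  have hx0 : (0 : ℝ) < x := by exact_mod_cast (by omega : 0 < x)
  have hb : (0 : ℝ) ≤ b := Nat.cast_nonneg b
  have hbx : (b : ℝ) + 1 < x := by exact_mod_cast hx
  obtain ⟨l1, l2⟩ := log_one_add_inv hx0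
  have hp : (0 : ℝ) < (1 + 1 / (x : ℝ)) ^ (x * b) := by positivity
  have hlog : Real.log ((1 + 1 / (x : ℝ)) ^ (x * b)) = x * b * Real.log (1 + 1 / x) := by
    rw [Real.log_pow]; push_cast; ring
  constructor
  · have h3 := Real.log_le_log hp h1
    rw [hlog] at h3
    have h4 : (x : ℝ) * b * (1 / (x + 1)) ≤ x * b * Real.log (1 + 1 / x) := by gcongr
    have h5 : (b : ℝ) - 1 < x * b * (1 / (x + 1)) := by
      rw [mul_one_div, lt_div_iff₀ (by positivity)]
      nlinarith
    linarith
  · have h3 := Real.log_lt_log (by exact_mod_cast hm) h2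
    rw [Real.log_mul (by norm_num) hp.ne', hlog] at h3
    have h4 : (x : ℝ) * b * Real.log (1 + 1 / x) ≤ x * b * (1 / x) := by gcongr
    have h5 : (x : ℝ) * b * (1 / x) = b := by field_simp
    linarith

lemma explog_floor {m : ℕ} (hm : 0 < m) : explog (m - 1) ⌊Real.log m⌋₊ := by
  set b := ⌊Real.log m⌋₊ with hbdef
  have e : ((m - 1 : ℕ) : ℝ) + 1 = m := by
    rw [Nat.cast_sub hm]; simp
  have hm0 : (0 : ℝ) < m := by exact_mod_cast hm
  have hlm : 0 ≤ Real.log m := Real.log_nonneg (by exact_mod_cast hm)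
  have f1 : (b : ℝ) ≤ Real.log m := Nat.floor_le hlm
  have f2 : Real.log m < b + 1 := Nat.lt_floor_add_one _
  have hb : (0 : ℝ) ≤ b := Nat.cast_nonneg b
  refine ⟨3 * b + 2, by omega, ?_⟩
  rw [e]
  set x : ℕ := 3 * b + 2 with hx
  have hxr : (x : ℝ) = 3 * b + 2 := by rw [hx]; push_cast; ring
  have hx0 : (0 : ℝ) < x := by rw [hxr]; positivity
  obtain ⟨l1, l2⟩ := log_one_add_inv hx0
  have hp : (0 : ℝ) < (1 + 1 / (x : ℝ)) ^ (x * b) := by positivity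
  have hlog : Real.log ((1 + 1 / (x : ℝ)) ^ (x * b)) = x * b * Real.log (1 + 1 / x) := by
    rw [Real.log_pow]; push_cast; ring
  constructor
  · rw [← Real.log_le_log_iff hp hm0, hlog]
    have h4 : (x : ℝ) * b * Real.log (1 + 1 / x) ≤ x * b * (1 / x) := by gcongr
    have h5 : (x : ℝ) * b * (1 / x) = b := by field_simp
    linarith
  · rw [← Real.log_lt_log_iff hm0 (by positivity), Real.log_mul (by norm_num) hp.ne', hlog]
    have h4 : (x : ℝ) * b * (1 / (x + 1)) ≤ x * b * Real.log (1 + 1 / x) := by gcongr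
    have h5 : (b : ℝ) - 1 / 3 ≤ x * b * (1 / (x + 1)) := by
      rw [mul_one_div, le_div_iff₀ (by positivity), hxr]
      nlinarith
    linarith [log_four_bounds.1]

lemma eq_lcmUpto {m n : ℕ} (h1 : ∀ y < n, (y + 1) ∣ m) (hm : 0 < m)
    (h2 : ∀ y < m, y = 0 ∨ ∃ x < n, ¬(x + 1) ∣ y) : m = Nat.lcmUpto n := by
  have hdvd : Nat.lcmUpto n ∣ m := by
    refine Finset.lcm_dvd fun y hy => ?_
    rw [Finset.mem_Icc] at hy
    have := h1 (y - 1) (by omega)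
    rwa [Nat.sub_add_cancel hy.1] at this
  rcases (Nat.le_of_dvd hm hdvd).lt_or_eq with h | h
  · rcases h2 _ h with h0 | ⟨x, hx, hnd⟩
    · exact absurd h0 (Nat.lcmUpto_ne_zero n)
    · exact absurd (Finset.dvd_lcm (f := id) (Finset.mem_Icc.2 ⟨by omega, by omega⟩)) hnd
  · exact h.symm

theorem not_rh_iff_diophantine_conditions :
    ¬RH ↔ ∃ k l m n : ℕ,
      0 < k ∧ 0 < l ∧ 0 < m ∧ 0 < n ∧
      600 ≤ n ∧
      (∀ y < n, (y + 1) ∣ m) ∧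
      (0 < m ∧ ∀ y < m, y = 0 ∨ ∃ x < n, ¬(x + 1) ∣ y) ∧
      explog (m - 1) l ∧
      explog (n - 1) k ∧
      ((l : ℤ) - (n : ℤ)) ^ 2 > 4 * (n : ℤ) * (k : ℤ) ^ 4 := by
  constructor
  · intro hR
    by_contra hno
    apply hR
    refine RH_of_psi_bound fun n hn => ?_
    have hL := log_ge_six hn
    have hn0 : 0 < n := by omega
    have hm0 := Nat.lcmUpto_pos n
    have hpsi : Chebyshev.psi n = Real.log (Nat.lcmUpto n) := Chebyshev.psi_eq_log_lcmUpto n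
    have hdv : ∀ y < n, (y + 1) ∣ Nat.lcmUpto n := fun y hy =>
      Finset.dvd_lcm (f := id) (Finset.mem_Icc.2 ⟨by omega, by omega⟩)
    have hpsi6 : 6 ≤ Chebyshev.psi n := by
      rw [hpsi]
      refine hL.trans (Real.log_le_log (by exact_mod_cast hn0) ?_)
      have := Nat.le_of_dvd hm0 (hdv (n - 1) (by omega))
      exact_mod_cast (by omega : n ≤ Nat.lcmUpto n)
    set k := ⌊Real.log n⌋₊ with hk
    set l := ⌊Real.log (Nat.lcmUpto n)⌋₊ with hl
    have hk0 : 0 < k := Nat.floor_pos.2 (by linarith)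
    have hl0 : 0 < l := Nat.floor_pos.2 (by linarith)
    have hneg : ¬ ((l : ℤ) - (n : ℤ)) ^ 2 > 4 * (n : ℤ) * (k : ℤ) ^ 4 := by
      intro hgt
      refine hno ⟨k, l, Nat.lcmUpto n, n, hk0, hl0, hm0, hn0, hn, hdv, ⟨hm0, fun y hy => ?_⟩,
        explog_floor hm0, explog_floor hn0, hgt⟩
      by_contra hc
      push Not at hc
      have h1 : Nat.lcmUpto n ∣ y := by
        refine Finset.lcm_dvd fun z hz => ?_
        rw [Finset.mem_Icc] at hz
        have := hc.2 (z - 1) (by omega)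
        rwa [Nat.sub_add_cancel hz.1] at this
      have := Nat.le_of_dvd (Nat.pos_of_ne_zero hc.1) h1
      omega
    push Not at hneg
    have hneg2 : ((l : ℝ) - n) ^ 2 ≤ 4 * n * (k : ℝ) ^ 4 := by exact_mod_cast hneg
    have f1 : (k : ℝ) ≤ Real.log n := Nat.floor_le (by linarith)
    have f2 : (l : ℝ) ≤ Chebyshev.psi n := by rw [hpsi]; exact Nat.floor_le (by linarith)
    have f3 : Chebyshev.psi n < l + 1 := by rw [hpsi]; exact Nat.lt_floor_add_one _
    have hs : Real.sqrt n ^ 2 = n := Real.sq_sqrt (Nat.cast_nonneg n)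
    have h5 : |(l : ℝ) - n| ≤ 2 * Real.sqrt n * (k : ℝ) ^ 2 := by
      refine abs_le_of_sq_le_sq ?_ (by positivity)
      calc _ ≤ _ := hneg2
        _ = 4 * Real.sqrt n ^ 2 * (k : ℝ) ^ 4 := by rw [hs]
        _ = _ := by ring
    have h6 : 2 * Real.sqrt n * (k : ℝ) ^ 2 ≤ 2 * Real.sqrt n * Real.log n ^ 2 := by gcongr
    rw [abs_le] at h5 ⊢
    constructor <;> linarith [h5.1, h5.2]
  · rintro ⟨k, l, m, n, hk, hl, hm, hn0, hn, h1, ⟨-, h2⟩, h3, h4, h5⟩ hR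
    have hmeq := eq_lcmUpto h1 hm h2
    have hpsi : Chebyshev.psi n = Real.log m := by rw [hmeq]; exact Chebyshev.psi_eq_log_lcmUpto n
    obtain ⟨a1, a2⟩ := explog_bounds hm h3
    obtain ⟨b1, b2⟩ := explog_bounds hn0 h4
    have hL := log_ge_six hn
    have hB := psi_bound_of_RH hR hn
    rw [← hpsi] at a1 a2
    have h4b := log_four_bounds.2
    have hs : Real.sqrt n ^ 2 = n := Real.sq_sqrt (Nat.cast_nonneg n)
    have hs24 : 24 ≤ Real.sqrt n := Real.le_sqrt_of_sq_le (by
      have : (600 : ℝ) ≤ n := by exact_mod_cast hn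
      linarith)
    set L := Real.log n with hLdef
    have hk1 : L - 1.387 ≤ k := by linarith
    have hk2 : (L - 1.387) ^ 2 ≤ (k : ℝ) ^ 2 := by
      have : 0 ≤ L - 1.387 := by linarith
      gcongr
    have hc : |(l : ℝ) - n| ≤ 2 * Real.sqrt n * (k : ℝ) ^ 2 := by
      have c1 : Real.sqrt n * (0.4 * L ^ 2 + 13) + 1.387 ≤ 2 * Real.sqrt n * (k : ℝ) ^ 2 := by
        have c2 : 0.4 * L ^ 2 + 13 + 0.1 ≤ 2 * (k : ℝ) ^ 2 := by nlinarith
        have c3 := mul_le_mul_of_nonneg_left c2 (Real.sqrt_nonneg (n : ℝ))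
        nlinarith
      rw [abs_le] at hB ⊢
      constructor <;> linarith [hB.1, hB.2]
    have hfin : ((l : ℝ) - n) ^ 2 ≤ 4 * n * (k : ℝ) ^ 4 := by
      calc _ = |(l : ℝ) - n| ^ 2 := (sq_abs _).symm
        _ ≤ (2 * Real.sqrt n * (k : ℝ) ^ 2) ^ 2 := by gcongr
        _ = 4 * Real.sqrt n ^ 2 * (k : ℝ) ^ 4 := by ring
        _ = _ := by rw [hs]
    have hfin2 : ((l : ℤ) - (n : ℤ)) ^ 2 ≤ 4 * (n : ℤ) * (k : ℤ) ^ 4 := by exact_mod_cast hfin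
    exact absurd h5 (not_lt.2 hfin2)
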